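/- arXiv:1406.2988 — 2 statements merged into one kernel-verified Lean document; each statement's English description precedes it below -/
import Mathlib

section
/- There exists a universal constant A > 0 such that for all natural numbers m ≥ ℓ ≥ 8 and all k with 2 ≤ k ≤ ℓm/2, one has (as real numbers) p_k(ℓ,m) − p_{k−1}(ℓ,m) > A · 2^{√s} / s^{9/4}, where s = min{2k, ℓ²}. -/
/-- `rectPartitions k l m` is the number of integer partitions of `k` fitting in an
`l × m` rectangle: at most `l` parts, each part at most `m`. -/
noncomputable def rectPartitions (k l m : ℕ) : ℕ :=
  Nat.card {π : Nat.Partition k // Multiset.card π.parts ≤ l ∧ ∀ i ∈ π.parts, i ≤ m}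

open Polynomial in
/-- The Gaussian binomial coefficient, as a polynomial. -/
noncomputable def gaussPoly : ℕ → ℕ → ℕ[X]
  | 0, _ => 1
  | _ + 1, 0 => 1
  | a + 1, b + 1 => gaussPoly (a + 1) b + X ^ (b + 1) * gaussPoly a (b + 1)

/-- Multisets of `a` naturals, each at most `b`, of sum `k`. -/
def boxSet (k a b : ℕ) : Set (Multiset ℕ) :=
  {s | Multiset.card s = a ∧ (∀ i ∈ s, i ≤ b) ∧ s.sum = k}

theorem boxSet_encard (a b : ℕ) : ∀ k, (boxSet k a b).encard = ((gaussPoly a b).coeff k : ℕ) := by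
  induction a, b using gaussPoly.induct with
  | case1 b =>
    intro k
    rw [gaussPoly]
    by_cases hk : k = 0
    · have : boxSet k 0 b = {0} := by
        ext s; simp only [boxSet, Set.mem_ofPred_eq, Multiset.card_eq_zero, Set.mem_singleton_iff]
        constructor
        · exact fun h => h.1
        · rintro rfl
          refine ⟨by simp, fun i hi => ?_, by simp [hk]⟩
          have := hi; try simp at hi
          try exact (Multiset.eq_of_mem_replicate this).le
      rw [this]; simp [hk]
    · have : boxSet k 0 b = ∅ := by
        ext s; simp only [boxSet, Set.mem_ofPred_eq, Multiset.card_eq_zero, Set.mem_empty_iff_false,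
          iff_false]
        rintro ⟨rfl, -, h⟩
        simp at h; omega
      rw [this]; simp [hk, Polynomial.coeff_one]
  | case2 a =>
    intro k
    rw [gaussPoly]
    by_cases hk : k = 0
    · have : boxSet k (a+1) 0 = {Multiset.replicate (a+1) 0} := by
        ext s; simp only [boxSet, Set.mem_ofPred_eq, Set.mem_singleton_iff]
        constructor
        · rintro ⟨h1, h2, -⟩
          rw [Multiset.eq_replicate]
          exact ⟨h1, fun i hi => by simpa using h2 i hi⟩
        · rintro rfl
          refine ⟨by simp, fun i hi => ?_, by simp [hk]⟩
          have := hi; try simp at hi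
          try exact (Multiset.eq_of_mem_replicate this).le
      rw [this]; simp [hk]
    · have : boxSet k (a+1) 0 = ∅ := by
        ext s; simp only [boxSet, Set.mem_ofPred_eq, Set.mem_empty_iff_false,
          iff_false]
        rintro ⟨h0, h1, h⟩
        apply hk
        rw [← h, Multiset.sum_eq_zero_iff]
        intro i hi; simpa using h1 i hi
      rw [this]; simp [hk, Polynomial.coeff_one]
  | case3 a b ih1 ih2 =>
    intro k
    rw [gaussPoly, Polynomial.coeff_add, Polynomial.coeff_X_pow_mul']
    have hd : boxSet k (a+1) (b+1) = boxSet k (a+1) b ∪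
        (if b + 1 ≤ k then (fun s => (b+1) ::ₘ s) '' boxSet (k - (b+1)) a (b+1) else ∅) := by
      ext s
      simp only [Set.mem_union]
      constructor
      · rintro ⟨h1, h2, h3⟩
        by_cases hb : b + 1 ∈ s
        · right
          obtain ⟨t, rfl⟩ := Multiset.exists_cons_of_mem hb
          simp only [Multiset.sum_cons] at h3
          simp only [Multiset.card_cons] at h1
          rw [if_pos (by omega)]
          exact ⟨t, ⟨by omega, fun i hi => h2 i (Multiset.mem_cons_of_mem hi), by omega⟩, rfl⟩
        · left
          refine ⟨h1, fun i hi => ?_, h3⟩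
          have := h2 i hi
          have : i ≠ b + 1 := fun h => hb (h ▸ hi)
          omega
      · rintro (⟨h1, h2, h3⟩ | h)
        · exact ⟨h1, fun i hi => (h2 i hi).trans (by omega), h3⟩
        · split_ifs at h with hk
          · obtain ⟨t, ⟨h1, h2, h3⟩, rfl⟩ := h
            refine ⟨by simp [h1], ?_, by simp [h3]; omega⟩
            intro i hi
            rcases Multiset.mem_cons.1 hi with rfl | hi
            · exact le_rfl
            · exact h2 i hi
          · simp at h
    have hdisj : Disjoint (boxSet k (a+1) b)
        (if b + 1 ≤ k then (fun s => (b+1) ::ₘ s) '' boxSet (k - (b+1)) a (b+1) else ∅) := by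
      rw [Set.disjoint_left]
      rintro s ⟨h1, h2, h3⟩ h
      split_ifs at h with hk
      · obtain ⟨t, -, rfl⟩ := h
        have := h2 (b+1) (Multiset.mem_cons_self _ _)
        omega
      · simp at h
    rw [hd, Set.encard_union_eq hdisj, ih1]
    split_ifs with hk
    · rw [Function.Injective.encard_image (fun x y h => (Multiset.cons_inj_right _).1 h), ih2]
      push_cast; rfl
    · simp

theorem rectPartitions_eq (k a b : ℕ) : rectPartitions k a b = (gaussPoly a b).coeff k := by
  have h : Nat.card (boxSet k a b) = (gaussPoly a b).coeff k := by
    rw [Nat.card_coe_set_eq, Set.ncard, boxSet_encard]; simp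
  rw [← h, rectPartitions]
  have hz : ∀ (s : Multiset ℕ), (s.filter (fun i => i ≠ 0)).sum = s.sum := by
    intro s
    induction s using Multiset.induction_on with
    | empty => simp
    | cons x s ih =>
      by_cases hx : x = 0
      · subst hx; simpa using ih
      · rw [Multiset.filter_cons_of_pos (p := fun i => i ≠ 0) _ hx]; simp [ih]
  have hpos : ∀ (π : Nat.Partition k), π.parts.filter (fun i => i ≠ 0) = π.parts := by
    intro π
    rw [Multiset.filter_eq_self]
    intro i hi; exact (π.parts_pos hi).ne'
  apply Nat.card_congr
  refine ⟨fun π => ⟨π.1.parts + Multiset.replicate (a - Multiset.card π.1.parts) 0, ?_⟩,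
    fun s => ⟨⟨s.1.filter (fun i => i ≠ 0), ?_, ?_⟩, ?_, ?_⟩, ?_, ?_⟩
  · refine ⟨by simp [π.2.1], ?_, by simp [π.1.parts_sum]⟩
    intro i hi
    rcases Multiset.mem_add.1 hi with hi | hi
    · exact π.2.2 i hi
    · rw [Multiset.eq_of_mem_replicate hi]; omega
  · intro i hi
    have := (Multiset.mem_filter.1 hi).2
    omega
  · rw [hz]; exact s.2.2.2
  · have := s.2.1
    simp only []
    exact (Multiset.card_le_card (Multiset.filter_le _ _)).trans this.le
  · intro i hi
    exact s.2.2.1 i (Multiset.mem_filter.1 hi).1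
  · intro π
    apply Subtype.ext
    apply Nat.Partition.ext
    simp only [Multiset.filter_add, hpos]
    rw [Multiset.filter_eq_nil.2]
    · simp
    · intro i hi; simp [Multiset.eq_of_mem_replicate hi]
  · intro s
    apply Subtype.ext
    obtain ⟨s, h1, h2, h3⟩ := s
    simp only
    have h4 := Multiset.filter_add_not (fun i => i ≠ 0) s
    have h5 : s.filter (fun i => ¬ (i ≠ 0)) =
        Multiset.replicate (a - Multiset.card (s.filter (fun i => i ≠ 0))) 0 := by
      rw [Multiset.eq_replicate]
      constructor
      · have := congrArg Multiset.card h4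
        rw [Multiset.card_add] at this
        omega
      · intro i hi; simpa using (Multiset.mem_filter.1 hi).2
    rw [← h5]; exact h4

open Polynomial in
theorem gaussPoly_zero_right (a : ℕ) : gaussPoly a 0 = 1 := by
  cases a <;> simp [gaussPoly]

/-- Gaussian polynomial evaluated in a commutative ring. -/
noncomputable def gaussVal {R : Type*} [CommRing R] (q : R) (a b : ℕ) : R :=
  (gaussPoly a b).eval₂ (Nat.castRingHom R) q

section
variable {R : Type*} [CommRing R] (q : R)

theorem gaussVal_zero_left (b : ℕ) : gaussVal q 0 b = 1 := by simp [gaussVal, gaussPoly]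

theorem gaussVal_zero_right (a : ℕ) : gaussVal q a 0 = 1 := by
  simp [gaussVal, gaussPoly_zero_right]

theorem gaussVal_succ (a b : ℕ) : gaussVal q (a+1) (b+1) =
    gaussVal q (a+1) b + q ^ (b+1) * gaussVal q a (b+1) := by
  simp [gaussVal, gaussPoly, Polynomial.eval₂_add, Polynomial.eval₂_mul]

theorem gaussVal_step (a : ℕ) : ∀ b, (1 - q ^ (a+1)) * gaussVal q (a+1) b =
      (1 - q ^ (a+b+1)) * gaussVal q a b ∧
    (1 - q ^ (b+1)) * gaussVal q a (b+1) = (1 - q ^ (a+b+1)) * gaussVal q a b := by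
  have key : ∀ a, (∀ b, (1 - q ^ (b+1)) * gaussVal q a (b+1) =
      (1 - q ^ (a+b+1)) * gaussVal q a b) → ∀ b, (1 - q ^ (a+1)) * gaussVal q (a+1) b =
      (1 - q ^ (a+b+1)) * gaussVal q a b := by
    intro a J b
    induction b with
    | zero => simp [gaussVal_zero_right]
    | succ b ih =>
      rw [gaussVal_succ]
      have := J b
      linear_combination ih - this
  have J : ∀ a, ∀ b, (1 - q ^ (b+1)) * gaussVal q a (b+1) =
      (1 - q ^ (a+b+1)) * gaussVal q a b := by
    intro a
    induction a with
    | zero => intro b; simp [gaussVal_zero_left]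
    | succ a ih =>
      intro b
      have I := key a ih b
      rw [gaussVal_succ]
      linear_combination q ^ (b+1) * ih b - q^(b+1) * I
  intro b
  exact ⟨key a (J a) b, J a b⟩

end

theorem gaussVal_X (a b : ℕ) : gaussVal (Polynomial.X : Polynomial ℤ) a b =
    (gaussPoly a b).map (Nat.castRingHom ℤ) := by
  rw [gaussVal, Polynomial.eval₂_eq_sum, Polynomial.map, Polynomial.eval₂_eq_sum]
  simp

theorem gaussPoly_symm (a b : ℕ) : gaussPoly a b = gaussPoly b a := by
  have h : gaussVal (Polynomial.X : Polynomial ℤ) a b = gaussVal Polynomial.X b a := by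
    induction a with
    | zero => simp [gaussVal_zero_left, gaussVal_zero_right]
    | succ a ih =>
      have h1 := (gaussVal_step (Polynomial.X : Polynomial ℤ) a b).1
      have h2 := (gaussVal_step (Polynomial.X : Polynomial ℤ) b a).2
      rw [ih, add_comm a b, ← h2] at h1
      refine mul_left_cancel₀ ?_ h1
      intro h0
      have := congrArg (fun p => Polynomial.coeff p 0) h0
      simp at this
  rw [gaussVal_X, gaussVal_X] at h
  exact Polynomial.map_injective _ Nat.cast_injective h

theorem gaussVal_symm {R : Type*} [CommRing R] (q : R) (a b : ℕ) :
    gaussVal q a b = gaussVal q b a := by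
  rw [gaussVal, gaussVal, gaussPoly_symm]

theorem gaussPoly_eval_one (a b : ℕ) : (gaussPoly a b).eval 1 = (a+b).choose a := by
  induction a, b using gaussPoly.induct with
  | case1 b => simp [gaussPoly]
  | case2 a => simp [gaussPoly]
  | case3 a b ih1 ih2 =>
    rw [gaussPoly, Polynomial.eval_add, Polynomial.eval_mul, ih1, ih2]
    have : a + 1 + (b + 1) = (a + (b+1)) + 1 := by ring
    rw [this, Nat.choose_succ_succ]
    simp
    rw [add_comm]; congr 2; ring

theorem gaussPoly_natDegree (a b : ℕ) : (gaussPoly a b).natDegree ≤ a * b := by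
  induction a, b using gaussPoly.induct with
  | case1 b => simp [gaussPoly]
  | case2 a => simp [gaussPoly]
  | case3 a b ih1 ih2 =>
    rw [gaussPoly]
    refine (Polynomial.natDegree_add_le _ _).trans (max_le (ih1.trans (by nlinarith)) ?_)
    refine Polynomial.natDegree_mul_le.trans ?_
    rw [Polynomial.natDegree_X_pow]
    nlinarith
section SL2
open MvPolynomial

/-- bidegree of the variables: degree and weight -/
def biw (b : ℕ) : Fin (b+1) → ℤ × ℤ := fun i => (1, (i : ℤ))

/-- variable number `j`, zero outside of the range -/
noncomputable def xv (b : ℕ) (j : ℤ) : MvPolynomial (Fin (b+1)) ℚ :=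
  if h : 0 ≤ j ∧ j < b + 1 then X ⟨j.toNat, by omega⟩ else 0

noncomputable def opD (b : ℕ) : Derivation ℚ (MvPolynomial (Fin (b+1)) ℚ) (MvPolynomial (Fin (b+1)) ℚ) :=
  mkDerivation ℚ (fun i => C (((i : ℕ) : ℚ)) * xv b ((i : ℤ) - 1))

noncomputable def opU (b : ℕ) : Derivation ℚ (MvPolynomial (Fin (b+1)) ℚ) (MvPolynomial (Fin (b+1)) ℚ) :=
  mkDerivation ℚ (fun i => C ((b : ℚ) - ((i : ℕ) : ℚ)) * xv b ((i : ℤ) + 1))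

noncomputable def opH (b : ℕ) : Derivation ℚ (MvPolynomial (Fin (b+1)) ℚ) (MvPolynomial (Fin (b+1)) ℚ) :=
  mkDerivation ℚ (fun i => C ((b : ℚ) - 2 * ((i : ℕ) : ℚ)) * X i)

theorem der_C_mul {b : ℕ} (E : Derivation ℚ (MvPolynomial (Fin (b+1)) ℚ) (MvPolynomial (Fin (b+1)) ℚ))
    (a : ℚ) (f : MvPolynomial (Fin (b+1)) ℚ) : E (C a * f) = C a * E f := by
  rw [← smul_eq_C_mul, Derivation.map_smul, smul_eq_C_mul]

theorem xv_nat (b : ℕ) (i : Fin (b+1)) : xv b (i : ℤ) = X i := by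
  have h : (0:ℤ) ≤ (i : ℤ) ∧ (i : ℤ) < b + 1 := by have := i.2; omega
  rw [xv, dif_pos h]; congr 

theorem xv_cases (b : ℕ) (j : ℤ) : (∃ i : Fin (b+1), (i : ℤ) = j) ∨ xv b j = 0 := by
  by_cases h : 0 ≤ j ∧ j < b + 1
  · left; exact ⟨⟨j.toNat, by omega⟩, by simp [h.1]⟩
  · right; rw [xv, dif_neg h]

theorem xv_homog (b : ℕ) (j : ℤ) : IsWeightedHomogeneous (biw b) (xv b j) (1, j) := by
  rcases xv_cases b j with ⟨i, rfl⟩ | h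
  · rw [xv_nat]; exact isWeightedHomogeneous_X _ _ _
  · rw [h]; exact isWeightedHomogeneous_zero _ _ _

theorem opD_xv (b : ℕ) (j : ℤ) (hj : j < b + 1) : opD b (xv b j) = C (j : ℚ) * xv b (j - 1) := by
  by_cases h : 0 ≤ j
  · lift j to ℕ using h
    have := xv_nat b ⟨j, by omega⟩
    simp only at this
    rw [this, opD, mkDerivation_X]; simp
  · rw [xv, dif_neg (by omega), xv, dif_neg (by omega)]; simp

theorem opU_xv (b : ℕ) (j : ℤ) (hj : 0 ≤ j) : opU b (xv b j) = C ((b : ℚ) - j) * xv b (j + 1) := by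
  by_cases h : j < b + 1
  · lift j to ℕ using hj
    have := xv_nat b ⟨j, by omega⟩
    simp only at this
    rw [this, opU, mkDerivation_X]; simp
  · rw [xv, dif_neg (by omega), xv, dif_neg (by omega)]; simp

theorem opH_xv (b : ℕ) (j : ℤ) : opH b (xv b j) = C ((b : ℚ) - 2 * j) * xv b j := by
  rcases xv_cases b j with ⟨i, rfl⟩ | h
  · rw [xv_nat, opH, mkDerivation_X]; simp
  · rw [h]; simp

theorem bracket_DU (b : ℕ) : ⁅opD b, opU b⁆ = opH b := by
  apply derivation_ext
  intro i
  rw [Derivation.commutator_apply, ← xv_nat, opH_xv]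
  have hi := i.2
  have h1 : opU b (xv b (i:ℤ)) = C ((b : ℚ) - ((i:ℤ):ℚ)) * xv b ((i:ℤ) + 1) := opU_xv b _ (by omega)
  have h2 : opD b (xv b (i:ℤ)) = C (((i:ℤ):ℚ)) * xv b ((i:ℤ) - 1) := opD_xv b _ (by omega)
  have h3 : C ((b : ℚ) - ((i:ℤ):ℚ)) * opD b (xv b ((i:ℤ)+1)) =
      C ((b : ℚ) - ((i:ℤ):ℚ)) * (C ((((i:ℤ)+1 : ℤ)):ℚ) * xv b (i:ℤ)) := by
    by_cases h : (i : ℕ) = b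
    · simp [h]
    · rw [opD_xv b _ (by omega)]; simp
  have h4 : C (((i:ℤ):ℚ)) * opU b (xv b ((i:ℤ)-1)) =
      C (((i:ℤ):ℚ)) * (C ((b:ℚ) - (((i:ℤ)-1 : ℤ):ℚ)) * xv b (i:ℤ)) := by
    by_cases h : (i : ℕ) = 0
    · simp [h]
    · rw [opU_xv b _ (by omega)]; simp
  rw [h1, h2, der_C_mul, der_C_mul, h3, h4]
  simp only [← mul_assoc, ← C_mul, ← sub_mul, ← C_sub]
  congr 2
  push_cast; ring

theorem bracket_HD (b : ℕ) : ⁅opH b, opD b⁆ = (2:ℚ) • opD b := by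
  apply derivation_ext
  intro i
  rw [Derivation.commutator_apply, ← xv_nat, opH_xv]
  have hi := i.2
  have h2 : opD b (xv b (i:ℤ)) = C (((i:ℤ):ℚ)) * xv b ((i:ℤ) - 1) := opD_xv b _ (by omega)
  rw [der_C_mul, Derivation.smul_apply, h2, der_C_mul, opH_xv]
  simp only [smul_eq_C_mul, ← mul_assoc, ← C_mul, ← sub_mul, ← C_sub]
  congr 2
  push_cast; ring

theorem derivation_homog {b : ℕ} (f : Fin (b+1) → MvPolynomial (Fin (b+1)) ℚ) (δ : ℤ × ℤ)
    (hf : ∀ i, IsWeightedHomogeneous (biw b) (f i) (biw b i + δ)) {n : ℤ × ℤ}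
    {p : MvPolynomial (Fin (b+1)) ℚ} (hp : IsWeightedHomogeneous (biw b) p n) :
    IsWeightedHomogeneous (biw b) (mkDerivation ℚ f p) (n + δ) := by
  induction hp using IsWeightedHomogeneous.induction_on with
  | zero => simpa using isWeightedHomogeneous_zero _ _ _
  | add p q hp hq h1 h2 => rw [map_add]; exact h1.add h2
  | monomial d r hr =>
    rw [mkDerivation_monomial, smul_eq_C_mul]
    apply IsWeightedHomogeneous.C_mul
    rw [Finsupp.sum]
    apply IsWeightedHomogeneous.sum
    intro i hi
    have h0 : d i ≠ 0 := Finsupp.mem_support_iff.1 hi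
    have h1 := Finsupp.weight_sub_single_add (w := biw b) h0
    rw [smul_eq_mul]
    have h2 := (isWeightedHomogeneous_monomial (biw b) (d - Finsupp.single i 1) ((d i : ℕ) : ℚ) rfl).mul (hf i)
    convert h2 using 1
    rw [← hr, ← h1, add_assoc]

theorem opH_homog {b : ℕ} {m k : ℤ} {p : MvPolynomial (Fin (b+1)) ℚ}
    (hp : IsWeightedHomogeneous (biw b) p (m, k)) : opH b p = ((b : ℚ) * m - 2 * k) • p := by
  induction hp using IsWeightedHomogeneous.induction_on with
  | zero => simp
  | add p q hp hq h1 h2 => rw [map_add, h1, h2, smul_add]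
  | monomial d r hr =>
    rw [opH, mkDerivation_monomial]
    have : ∀ i ∈ d.support, (monomial (d - Finsupp.single i 1) ((d i : ℕ) : ℚ)) •
        (C ((b : ℚ) - 2 * ((i : ℕ) : ℚ)) * X i : MvPolynomial (Fin (b+1)) ℚ) =
        monomial d (((d i : ℕ) : ℚ) * ((b : ℚ) - 2 * ((i : ℕ) : ℚ))) := by
      intro i hi
      have h0 : d i ≠ 0 := Finsupp.mem_support_iff.1 hi
      rw [smul_eq_mul, X, C_mul_monomial, monomial_mul, mul_one]
      congr 2
      exact tsub_add_cancel_of_le (by simpa [Finsupp.single_le_iff] using Nat.one_le_iff_ne_zero.2 h0)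
    rw [Finsupp.sum, Finset.sum_congr rfl this, ← map_sum, smul_monomial, smul_monomial]
    congr 1
    rw [Finsupp.weight_apply, Finsupp.sum] at hr
    have h1 := congrArg Prod.fst hr
    have h2 := congrArg Prod.snd hr
    simp only [Prod.fst_sum, Prod.snd_sum, biw, Prod.smul_mk] at h1 h2
    rw [← h1, ← h2]
    push_cast
    simp only [smul_eq_mul, Finset.mul_sum, Finset.sum_mul, ← Finset.sum_sub_distrib]
    apply Finset.sum_congr rfl
    intro i hi
    simp
    ring

theorem opD_homog {b : ℕ} {m k : ℤ} {p : MvPolynomial (Fin (b+1)) ℚ}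
    (hp : IsWeightedHomogeneous (biw b) p (m, k)) :
    IsWeightedHomogeneous (biw b) (opD b p) (m, k - 1) := by
  have := derivation_homog (fun i => C (((i : ℕ) : ℚ)) * xv b ((i : ℤ) - 1)) (0, -1) (by
    intro i
    apply IsWeightedHomogeneous.C_mul
    convert xv_homog b _ using 1
    ext <;> simp [biw] <;> ring) hp
  have h2 : (m, k - 1) = (m, k) + ((0 : ℤ), (-1 : ℤ)) := by ext <;> simp <;> ring
  rw [h2]; exact this

theorem opU_homog {b : ℕ} {m k : ℤ} {p : MvPolynomial (Fin (b+1)) ℚ}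
    (hp : IsWeightedHomogeneous (biw b) p (m, k)) :
    IsWeightedHomogeneous (biw b) (opU b p) (m, k + 1) := by
  have := derivation_homog (fun i => C ((b : ℚ) - ((i : ℕ) : ℚ)) * xv b ((i : ℤ) + 1)) (0, 1) (by
    intro i
    apply IsWeightedHomogeneous.C_mul
    convert xv_homog b _ using 1
    ext <;> simp [biw]) hp
  have h2 : (m, k + 1) = (m, k) + ((0 : ℤ), (1 : ℤ)) := by ext <;> simp
  rw [h2]; exact this

theorem homog_neg {b : ℕ} {m k : ℤ} (hk : k < 0) {p : MvPolynomial (Fin (b+1)) ℚ}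
    (hp : IsWeightedHomogeneous (biw b) p (m, k)) : p = 0 := by
  ext d
  by_contra h
  have hr := hp h
  rw [Finsupp.weight_apply, Finsupp.sum] at hr
  have h2 := congrArg Prod.snd hr
  simp only [Prod.snd_sum, biw, Prod.smul_mk] at h2
  have : 0 ≤ ∑ x ∈ d.support, d x • ((x : ℕ) : ℤ) :=
    Finset.sum_nonneg (fun i _ => by positivity)
  omega

theorem opD_iter_homog {b : ℕ} {m k : ℤ} (s : ℕ) {p : MvPolynomial (Fin (b+1)) ℚ}
    (hp : IsWeightedHomogeneous (biw b) p (m, k)) :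
    IsWeightedHomogeneous (biw b) ((opD b)^[s] p) (m, k - s) := by
  induction s with
  | zero => simpa using hp
  | succ s ih =>
    rw [Function.iterate_succ_apply']
    convert opD_homog ih using 2
    push_cast; ring

theorem DU_comm (b : ℕ) (p : MvPolynomial (Fin (b+1)) ℚ) :
    opD b (opU b p) = opU b (opD b p) + opH b p := by
  rw [← bracket_DU, Derivation.commutator_apply]; ring

theorem opD_iter_U {b : ℕ} {m k : ℤ} (s : ℕ) {p : MvPolynomial (Fin (b+1)) ℚ}
    (hp : IsWeightedHomogeneous (biw b) p (m, k)) :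
    (opD b)^[s+1] (opU b p) = opU b ((opD b)^[s+1] p) +
      (((s : ℚ) + 1) * ((b : ℚ) * m - 2 * k + s)) • (opD b)^[s] p := by
  induction s with
  | zero => simp [DU_comm, opH_homog hp]
  | succ s ih =>
    rw [Function.iterate_succ_apply', ih, map_add, DU_comm, Derivation.map_smul,
      opH_homog (opD_iter_homog (s+1) hp), ← Function.iterate_succ_apply' (opD b) (s+1),
      ← Function.iterate_succ_apply' (opD b) s, add_assoc, ← add_smul]
    congr 2
    push_cast; ring

theorem opD_surj {b : ℕ} {m k : ℤ} (hk : 2 * k < b * m) {p : MvPolynomial (Fin (b+1)) ℚ}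
    (hp : IsWeightedHomogeneous (biw b) p (m, k)) :
    ∃ u, IsWeightedHomogeneous (biw b) u (m, k + 1) ∧ opD b u = p := by
  have key : ∀ s : ℕ, ∀ p : MvPolynomial (Fin (b+1)) ℚ, IsWeightedHomogeneous (biw b) p (m, k) →
      (opD b)^[s] p = 0 → ∃ u, IsWeightedHomogeneous (biw b) u (m, k + 1) ∧ opD b u = p := by
    intro s
    induction s with
    | zero =>
      intro p hp h
      exact ⟨0, isWeightedHomogeneous_zero _ _ _, by simpa using h.symm⟩
    | succ s ih =>
      intro p hp h
      set c : ℚ := ((s : ℚ) + 1) * ((b : ℚ) * m - 2 * k + s) with hc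
      have hc0 : c ≠ 0 := by
        have : (2 * k : ℚ) < b * m := by exact_mod_cast hk
        have hs : (0:ℚ) ≤ s := by positivity
        apply ne_of_gt
        rw [hc]
        apply mul_pos <;> linarith
      have hDU : IsWeightedHomogeneous (biw b) (opD b (opU b p)) (m, k) := by
        have := opD_homog (opU_homog hp)
        simpa using this
      have hcp : IsWeightedHomogeneous (biw b) (c • p) (m, k) := by
        rw [smul_eq_C_mul]; exact hp.C_mul c
      obtain ⟨u, hu, hu2⟩ := ih (opD b (opU b p) - c • p) (hDU.sub hcp) (by
        have h1 := opD_iter_U s hp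
        rw [h, map_zero, zero_add, ← hc, Function.iterate_succ_apply] at h1
        have : ∀ (s : ℕ) (x y : MvPolynomial (Fin (b+1)) ℚ), (opD b)^[s] (x - c • y) =
            (opD b)^[s] x - c • (opD b)^[s] y := by
          intro s
          induction s with
          | zero => simp
          | succ s ih2 =>
            intro x y
            rw [Function.iterate_succ_apply', ih2, map_sub, Derivation.map_smul,
              Function.iterate_succ_apply', Function.iterate_succ_apply']
        rw [this, h1, sub_self])
      refine ⟨c⁻¹ • (opU b p - u), ?_, ?_⟩
      · rw [smul_eq_C_mul]; exact ((opU_homog hp).sub hu).C_mul _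
      · rw [Derivation.map_smul, map_sub, hu2, sub_sub_cancel, smul_smul, inv_mul_cancel₀ hc0,
          one_smul]
  refine key (k.toNat + 1) p hp (homog_neg ?_ (opD_iter_homog _ hp))
  push_cast; omega

end SL2
section Dim
open MvPolynomial

theorem biw_weight_iff (b m k : ℕ) (d : Fin (b+1) →₀ ℕ) :
    Finsupp.weight (biw b) d = ((m : ℤ), (k : ℤ)) ↔
      Multiset.card (Finsupp.toMultiset d) = m ∧
      ((Finsupp.toMultiset d).map (fun i : Fin (b+1) => (i : ℕ))).sum = k := by
  rw [Finsupp.weight_apply, Finsupp.card_toMultiset, Finsupp.toMultiset_map, Finsupp.sum_toMultiset,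
    Finsupp.sum_mapDomain_index (by simp) (by intros; simp [add_mul]), Prod.ext_iff]
  simp only [Finsupp.sum, Prod.fst_sum, Prod.snd_sum, biw, Prod.smul_mk]
  constructor
  · rintro ⟨h1, h2⟩
    constructor
    · zify; rw [← h1]; simp
    · zify; rw [← h2]; simp
  · rintro ⟨h1, h2⟩
    zify at h1 h2
    exact ⟨by rw [← h1]; simp, by rw [← h2]; simp⟩

theorem weightSet_encard (b m k : ℕ) :
    {d : Fin (b+1) →₀ ℕ | Finsupp.weight (biw b) d = ((m : ℤ), (k : ℤ))}.encard =
      ((gaussPoly m b).coeff k : ℕ) := by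
  rw [← boxSet_encard]
  have hinj : Function.Injective (fun d : Fin (b+1) →₀ ℕ =>
      (Finsupp.toMultiset d).map (fun i : Fin (b+1) => (i : ℕ))) :=
    (Multiset.map_injective Fin.val_injective).comp (Function.LeftInverse.injective (g := Multiset.toFinsupp) Finsupp.toMultiset_toFinsupp)
  rw [← hinj.encard_image]
  congr 1
  ext s
  constructor
  · rintro ⟨d, hd, rfl⟩
    have hd' := (biw_weight_iff b m k d).1 hd
    refine ⟨by simpa using hd'.1, ?_, hd'.2⟩
    intro i hi
    obtain ⟨j, -, rfl⟩ := Multiset.mem_map.1 hi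
    exact Nat.lt_succ_iff.1 j.2
  · rintro ⟨h1, h2, h3⟩
    have hb : ∀ i ∈ s, i < b + 1 := fun i hi => Nat.lt_succ_of_le (h2 i hi)
    have hmap : (s.pmap (fun i (h : i < b + 1) => (⟨i, h⟩ : Fin (b+1))) hb).map
        (fun i : Fin (b+1) => (i : ℕ)) = s := by
      rw [Multiset.map_pmap, Multiset.pmap_eq_map (p := fun i => i < b + 1) (f := fun i => i)]; simp
    refine ⟨Multiset.toFinsupp (s.pmap (fun i (h : i < b + 1) => (⟨i, h⟩ : Fin (b+1))) hb), ?_, ?_⟩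
    · apply (biw_weight_iff b m k _).2
      rw [Multiset.toFinsupp_toMultiset, hmap]
      exact ⟨by simpa using h1, h3⟩
    · simp only [Multiset.toFinsupp_toMultiset]
      exact hmap

/-- bigraded component -/
noncomputable abbrev VV (b m k : ℕ) : Submodule ℚ (MvPolynomial (Fin (b+1)) ℚ) :=
  weightedHomogeneousSubmodule ℚ (biw b) ((m : ℤ), (k : ℤ))

theorem weightSet_finite (b m k : ℕ) :
    {d : Fin (b+1) →₀ ℕ | Finsupp.weight (biw b) d = ((m : ℤ), (k : ℤ))}.Finite := by
  apply Set.finite_of_encard_eq_coe (weightSet_encard b m k)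

noncomputable def VVequiv (b m k : ℕ) : VV b m k ≃ₗ[ℚ]
    ({d : Fin (b+1) →₀ ℕ | Finsupp.weight (biw b) d = ((m : ℤ), (k : ℤ))} →₀ ℚ) :=
  (LinearEquiv.ofEq _ _ (weightedHomogeneousSubmodule_eq_finsupp_supported ℚ (biw b) _)).trans
    (AddMonoidAlgebra.supportedEquivFinsupp _)

instance VV_finite (b m k : ℕ) : Module.Finite ℚ (VV b m k) := by
  have := (weightSet_finite b m k).to_subtype
  exact Module.Finite.equiv (VVequiv b m k).symm

theorem VV_finrank (b m k : ℕ) : Module.finrank ℚ (VV b m k) = (gaussPoly m b).coeff k := by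
  have := (weightSet_finite b m k).fintype
  rw [LinearEquiv.finrank_eq (VVequiv b m k), Module.finrank_finsupp_self, ← Nat.card_eq_fintype_card,
    Nat.card_coe_set_eq, Set.ncard, weightSet_encard]
  simp

/-- highest weight vectors -/
noncomputable def SS (b m k : ℕ) : Submodule ℚ (MvPolynomial (Fin (b+1)) ℚ) :=
  VV b m k ⊓ LinearMap.ker (opD b).toLinearMap

instance SS_finite (b m k : ℕ) : Module.Finite ℚ (SS b m k) :=
  Submodule.finiteDimensional_of_le (S₂ := VV b m k) inf_le_left

/-- The difference of consecutive coefficients. -/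
noncomputable def dif (a b k : ℕ) : ℤ :=
  ((gaussPoly a b).coeff k : ℤ) - (if k = 0 then 0 else ((gaussPoly a b).coeff (k-1) : ℤ))

theorem dif_symm (a b k : ℕ) : dif a b k = dif b a k := by
  rw [dif, dif, gaussPoly_symm]

theorem SS_finrank (b m k : ℕ) (hk : 2 * k ≤ b * m) :
    (Module.finrank ℚ (SS b m k) : ℤ) = dif m b k := by
  rw [dif, ← VV_finrank]
  cases k with
  | zero =>
    have : SS b m 0 = VV b m 0 := by
      apply inf_eq_left.2
      intro p hp
      rw [LinearMap.mem_ker]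
      exact homog_neg (by norm_num) (opD_homog (k := 0) (by simpa using hp))
    rw [this]; simp
  | succ k =>
    simp only [Nat.add_eq_zero_iff, one_ne_zero, and_false, if_false, Nat.add_sub_cancel]
    rw [← VV_finrank]
    let f : VV b m (k+1) →ₗ[ℚ] VV b m k :=
      ((opD b).toLinearMap.comp (VV b m (k+1)).subtype).codRestrict _ (by
        intro p
        have := opD_homog (p := p.1) (m := m) (k := ((k+1 : ℕ) : ℤ)) p.2
        show IsWeightedHomogeneous _ _ _
        simpa using this)
    have hsurj : LinearMap.range f = ⊤ := by
      rw [LinearMap.range_eq_top]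
      rintro ⟨p, hp⟩
      obtain ⟨u, hu, hu2⟩ := opD_surj (b := b) (m := m) (k := k) (by zify at hk; linarith) hp
      refine ⟨⟨u, hu⟩, Subtype.ext hu2⟩
    have hker : Module.finrank ℚ (LinearMap.ker f) = Module.finrank ℚ (SS b m (k+1)) := by
      have : SS b m (k+1) = (LinearMap.ker f).map (VV b m (k+1)).subtype := by
        ext p
        simp only [SS, Submodule.mem_inf, Submodule.mem_map, LinearMap.mem_ker]
        constructor
        · rintro ⟨h1, h2⟩
          exact ⟨⟨p, h1⟩, Subtype.ext h2, rfl⟩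
        · rintro ⟨⟨y, hy⟩, h2, rfl⟩
          exact ⟨hy, congrArg Subtype.val h2⟩
      rw [this]
      exact (LinearEquiv.finrank_eq (Submodule.equivMapOfInjective _
        (Submodule.injective_subtype _) _))
    have h := LinearMap.finrank_range_add_finrank_ker f
    rw [hsurj, finrank_top, hker] at h
    rw [← h]; push_cast; ring

theorem dif_nonneg (m b k : ℕ) (hk : 2 * k ≤ b * m) : 0 ≤ dif m b k := by
  rw [← SS_finrank b m k hk]; positivity

theorem dif_mul (b m₁ m₂ k₁ k₂ : ℕ) (h1 : 2 * k₁ ≤ b * m₁) (h2 : 2 * k₂ ≤ b * m₂)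
    (hpos : 0 < dif m₂ b k₂) : dif m₁ b k₁ ≤ dif (m₁ + m₂) b (k₁ + k₂) := by
  rw [← SS_finrank b m₂ k₂ h2] at hpos
  rw [← SS_finrank b m₁ k₁ h1, ← SS_finrank b _ _ (by rw [mul_add, mul_add]; omega)]
  have hne : SS b m₂ k₂ ≠ ⊥ := by
    intro h; rw [h] at hpos; simp at hpos
  obtain ⟨g, hg, hg0⟩ := Submodule.exists_mem_ne_zero_of_ne_bot hne
  have hinj : Function.Injective (LinearMap.mulRight ℚ g) := mul_left_injective₀ hg0
  have hle : (SS b m₁ k₁).map (LinearMap.mulRight ℚ g) ≤ SS b (m₁ + m₂) (k₁ + k₂) := by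
    rintro _ ⟨f, hf, rfl⟩
    refine ⟨?_, ?_⟩
    · have := IsWeightedHomogeneous.mul (w := biw b) hf.1 hg.1
      show IsWeightedHomogeneous _ _ _
      simpa using this
    · have h1 : opD b f = 0 := hf.2
      have h2 : opD b g = 0 := hg.2
      show opD b (f * g) = 0
      rw [Derivation.leibniz, h1, h2]; simp
  have := Submodule.finrank_mono hle
  rw [← LinearEquiv.finrank_eq (Submodule.equivMapOfInjective _ hinj _)] at this
  exact_mod_cast this

end Dim
theorem digit_extract (B : ℕ) (k : ℕ) : ∀ (p : Polynomial ℕ), (∀ j, p.coeff j < B) →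
    (p.eval B / B ^ k) % B = p.coeff k := by
  induction k with
  | zero =>
    intro p hp
    conv_lhs => rw [← Polynomial.divX_mul_X_add p]
    simp [Nat.mod_eq_of_lt (hp 0)]
  | succ k ih =>
    intro p hp
    have hB : 0 < B := lt_of_le_of_lt (Nat.zero_le _) (hp 0)
    have h := ih p.divX (fun j => by rw [Polynomial.coeff_divX]; exact hp _)
    rw [Polynomial.coeff_divX] at h
    rw [← h, pow_succ', ← Nat.div_div_eq_div_mul]
    congr 2
    conv_lhs => rw [← Polynomial.divX_mul_X_add p]
    simp only [Polynomial.eval_add, Polynomial.eval_mul, Polynomial.eval_X, Polynomial.eval_C]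
    rw [mul_comm, Nat.mul_add_div hB, Nat.div_eq_of_lt (hp 0), add_zero]

/-- Computation of the value of the Gaussian polynomial at `B`. -/
def gcomp (B : ℕ) : ℕ → ℕ → ℕ
  | 0, _ => 1
  | a + 1, b => (B ^ (a + b + 1) - 1) * gcomp B a b / (B ^ (a + 1) - 1)

theorem gaussPoly_eval_gcomp (B : ℕ) (hB : 2 ≤ B) (a b : ℕ) :
    (gaussPoly a b).eval B = gcomp B a b := by
  induction a with
  | zero => simp [gaussPoly, gcomp]
  | succ a ih =>
    have h := (gaussVal_step (B : ℤ) a b).1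
    have hv : ∀ a b, gaussVal (B : ℤ) a b = ((gaussPoly a b).eval B : ℕ) := by
      intro a b
      rw [gaussVal, Polynomial.eval, Polynomial.eval₂_eq_sum, Polynomial.eval₂_eq_sum,
        Polynomial.sum, Polynomial.sum]
      simp
    rw [hv, hv] at h
    rw [gcomp, ← ih]
    have h1 : 1 < B ^ (a+1) := Nat.one_lt_pow (by omega) (by omega)
    have h2 : 1 < B ^ (a+b+1) := Nat.one_lt_pow (by omega) (by omega)
    symm
    apply Nat.div_eq_of_eq_mul_right (by omega)
    zify [h1.le, h2.le]
    linarith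

theorem gaussPoly_coeff_le (a b k : ℕ) : (gaussPoly a b).coeff k ≤ (a+b).choose a := by
  rw [← gaussPoly_eval_one, Polynomial.eval_eq_sum, Polynomial.sum]
  by_cases hk : k ∈ (gaussPoly a b).support
  · have := Finset.single_le_sum (f := fun n => (gaussPoly a b).coeff n * 1 ^ n) (fun i _ => Nat.zero_le _) hk
    simpa using this
  · rw [Polynomial.notMem_support_iff.1 hk]; exact Nat.zero_le _

/-- Boolean test of strict unimodality for the small boxes. -/
def baseTest : Bool :=
  (List.range 8).all fun i => (List.range 8).all fun j => (List.range 113).all fun k =>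
    Nat.ble k 1 || Nat.ble ((i+8) * (j+8) + 1) (2 * k) ||
    Nat.ble ((gcomp (2^32) (i+8) (j+8) / (2^32) ^ (k-1)) % 2^32 + 1)
      ((gcomp (2^32) (i+8) (j+8) / (2^32) ^ k) % 2^32)

theorem baseTest_eq : baseTest = true := by
  decide +kernel

theorem base_check (a : ℕ) (ha : a < 16) (ha8 : 8 ≤ a) (b : ℕ) (hb : b < 16) (hb8 : 8 ≤ b) (k : ℕ)
    (hk : k < 113) (hk2 : 2 ≤ k) (hab : 2 * k ≤ a * b) :
    (gcomp (2^32) a b / (2^32) ^ (k-1)) % 2^32 < (gcomp (2^32) a b / (2^32) ^ k) % 2^32 := by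
  have h := baseTest_eq
  rw [baseTest, List.all_eq_true] at h
  have h1 := h (a - 8) (List.mem_range.2 (by omega))
  rw [List.all_eq_true] at h1
  have h2 := h1 (b - 8) (List.mem_range.2 (by omega))
  rw [List.all_eq_true] at h2
  have h3 := h2 k (List.mem_range.2 hk)
  rw [Nat.sub_add_cancel ha8, Nat.sub_add_cancel hb8, Bool.or_eq_true, Bool.or_eq_true,
    Nat.ble_eq, Nat.ble_eq, Nat.ble_eq] at h3
  omega

theorem dif_base (a b k : ℕ) (ha : 8 ≤ a) (hb : 8 ≤ b) (ha' : a < 16) (hb' : b < 16) (hk : k ≠ 1)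
    (h : 2 * k ≤ a * b) : 0 < dif a b k := by
  by_cases h0 : k = 0
  · subst h0
    rw [dif]
    simp
    have : (boxSet 0 a b).encard ≠ 0 := by
      rw [Set.encard_ne_zero]
      refine ⟨Multiset.replicate a 0, by simp, ?_, by simp⟩
      intro i hi; rw [Multiset.eq_of_mem_replicate hi]; omega
    rw [boxSet_encard] at this
    have : (gaussPoly a b).coeff 0 ≠ 0 := by exact_mod_cast this
    omega
  · have hlt : ∀ j, (gaussPoly a b).coeff j < 2 ^ 32 := by
      intro j
      calc _ ≤ (a+b).choose a := gaussPoly_coeff_le a b j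
        _ ≤ 2 ^ (a+b) := Nat.choose_le_two_pow _ _
        _ < 2 ^ 32 := Nat.pow_lt_pow_right (by omega) (by omega)
    have hk' : k < 113 := by nlinarith
    have := base_check a ha' ha b hb' hb k hk' (by omega) h
    rw [← gaussPoly_eval_gcomp _ (by norm_num), digit_extract _ _ _ hlt, digit_extract _ _ _ hlt] at this
    rw [dif, if_neg h0]
    omega

/-- Splitting lemma. -/
theorem split_ne_one (K c₁ c₂ : ℕ) (h1 : 3 ≤ c₁) (h2 : 2 ≤ c₂) (hK : K ≤ c₁ + c₂) (hK1 : K ≠ 1) :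
    ∃ k₁ k₂, k₁ + k₂ = K ∧ k₁ ≤ c₁ ∧ k₂ ≤ c₂ ∧ k₁ ≠ 1 ∧ k₂ ≠ 1 := by
  by_cases h : K ≤ c₁
  · exact ⟨K, 0, by omega, h, by omega, hK1, by omega⟩
  · by_cases h' : K = c₁ + 1
    · exact ⟨c₁ - 1, 2, by omega, by omega, by omega, by omega, by omega⟩
    · exact ⟨c₁, K - c₁, by omega, by omega, by omega, by omega, by omega⟩

theorem dif_step (n a b : ℕ) (hb : 8 ≤ b) (ha : a < n) (ha8 : 8 ≤ a)
    (H : ∀ a, 8 ≤ a → a < 16 → ∀ k, k ≠ 1 → 2 * k ≤ a * b → 0 < dif a b k) :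
    ∀ k, k ≠ 1 → 2 * k ≤ a * b → 0 < dif a b k := by
  induction n generalizing a with
  | zero => omega
  | succ n ih =>
    by_cases h : a < 16
    · exact H a ha8 h
    · intro k hk1 hk
      obtain ⟨a', rfl⟩ := Nat.exists_eq_add_of_le ha8
      have hm : 8 * b ≤ a' * b := Nat.mul_le_mul_right _ (by omega)
      have e : (8 + a') * b = 8 * b + a' * b := by ring
      obtain ⟨k₁, k₂, hs, h1, h2, h1', h2'⟩ := split_ne_one k (4 * b) (a' * b / 2) (by omega)
        (by omega) (by omega) hk1
      have p1 := ih 8 (by omega) (by omega) k₁ h1' (by omega)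
      have p2 := ih a' (by omega) (by omega) k₂ h2' (by omega)
      rw [← hs]
      exact p1.trans_le (dif_mul b 8 a' k₁ k₂ (by linarith) (by rw [mul_comm b]; omega) p2)

/-- Strict unimodality. -/
theorem dif_pos' (a b k : ℕ) (ha : 8 ≤ a) (hb : 8 ≤ b) (hk : k ≠ 1) (h : 2 * k ≤ a * b) :
    0 < dif a b k := by
  refine dif_step (a+1) a b hb (by omega) ha ?_ k hk h
  intro a ha ha' k hk h
  rw [dif_symm]
  refine dif_step (b+1) b a ha (by omega) hb ?_ k hk (by linarith)
  intro b hb hb' k hk h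
  exact dif_base b a k hb ha hb' ha' hk h

/-- Reduction to the centre of a square. -/
theorem dif_ge_center (a b k r : ℕ) (hr8 : 8 ≤ r) (hre : Even r) (ha : r + 8 ≤ a) (hb : r + 8 ≤ b)
    (hk1 : r * r / 2 + 2 ≤ k) (hk : 2 * k ≤ a * b) : dif r r (r * r / 2) ≤ dif a b k := by
  obtain ⟨a', rfl⟩ : ∃ a', a = r + a' := Nat.exists_eq_add_of_le (by omega)
  obtain ⟨b', rfl⟩ : ∃ b', b = r + b' := Nat.exists_eq_add_of_le (by omega)
  obtain ⟨h, rfl⟩ := hre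
  have e0 : (h + h) * (h + h) = 2 * (2 * h * h) := by ring
  have e0' : (h + h) * (h + h) / 2 = 2 * h * h := by omega
  rw [e0'] at hk1 ⊢
  have e1 : (h + h + a') * (h + h + b') = 2 * (2 * h * h) + 2 * (h * b') + a' * (h + h + b') := by ring
  have m1 : 4 * 8 ≤ h * b' := Nat.mul_le_mul (by omega) (by omega)
  have m2 : 8 * 16 ≤ a' * (h + h + b') := Nat.mul_le_mul (by omega) (by omega)
  obtain ⟨k₁, k₂, hs, h1, h2, h1', h2'⟩ := split_ne_one (k - 2 * h * h) (h * b') (a' * (h+h+b') / 2)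
    (by omega) (by omega) (by omega) (by omega)
  have s1 : dif (h+h) (h+h) (2*h*h) ≤ dif (h + h) (h+h+b') (2*h*h + k₁) := by
    rw [dif_symm (h+h) (h+h+b')]
    refine dif_mul (h+h) (h+h) b' _ _ (by omega) (by nlinarith) ?_
    exact dif_pos' _ _ _ (by omega) (by omega) h1' (by nlinarith)
  have s2 : dif (h + h) (h+h+b') (2*h*h + k₁) ≤ dif (h + h + a') (h+h+b') (2*h*h + k₁ + k₂) := by
    refine dif_mul _ (h+h) a' _ _ (by nlinarith) (by rw [mul_comm (h+h+b')]; omega) ?_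
    exact dif_pos' _ _ _ (by omega) (by omega) h2' (by omega)
  have : k = 2*h*h + k₁ + k₂ := by omega
  rw [this]
  exact s1.trans s2
section Minor
open Polynomial

theorem coeff_norm_le_of_circle (f : ℂ[X]) (K : ℝ) (h : ∀ z : ℂ, ‖z‖ = 1 → ‖f.eval z‖ ≤ K) (n : ℕ) :
    ‖f.coeff n‖ ≤ K := by
  have h1 := Complex.norm_iteratedDeriv_le_of_forall_mem_sphere_norm_le (c := 0) (R := 1) (C := K)
    (f := fun z => f.eval z) n one_pos (f.differentiable.diffContOnCl) (by
      intro z hz; exact h z (by simpa using hz))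
  have h2 : ∀ n, ∀ f : ℂ[X], iteratedDeriv n (fun z => f.eval z) = fun z => (derivative^[n] f).eval z := by
    intro n
    induction n with
    | zero => intro f; simp
    | succ n ih =>
      intro f
      rw [iteratedDeriv_succ', Function.iterate_succ_apply, ← ih]
      congr 1
      ext z; simp
  rw [h2] at h1
  simp only [← coeff_zero_eq_eval_zero, coeff_iterate_derivative] at h1
  simp [Nat.descFactorial_self] at h1
  have hn : (0:ℝ) < n.factorial := by positivity
  exact le_of_mul_le_mul_left h1 hn

theorem qbinom_thm (q : ℂ) (a b : ℕ) :
    (∏ i ∈ Finset.range (a+b), (1 + C (q ^ i) * X : ℂ[X])).coeff a =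
      q ^ (a * (a-1) / 2) * gaussVal q a b := by
  have hstep : ∀ n j, (∏ i ∈ Finset.range (n+1), (1 + C (q ^ i) * X : ℂ[X])).coeff (j+1) =
      (∏ i ∈ Finset.range n, (1 + C (q ^ i) * X : ℂ[X])).coeff (j+1) +
      q ^ n * (∏ i ∈ Finset.range n, (1 + C (q ^ i) * X : ℂ[X])).coeff j := by
    intro n j
    rw [Finset.prod_range_succ, mul_add, mul_one, coeff_add]
    congr 1
    rw [mul_left_comm, coeff_C_mul, coeff_mul_X]
  have hdeg : ∀ n j, n < j → (∏ i ∈ Finset.range n, (1 + C (q ^ i) * X : ℂ[X])).coeff j = 0 := by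
    intro n
    induction n with
    | zero => intro j hj; simp [coeff_one]; omega
    | succ n ih =>
      intro j hj
      obtain ⟨j, rfl⟩ : ∃ i, j = i + 1 := ⟨j - 1, by omega⟩
      rw [hstep, ih _ (by omega), ih _ (by omega)]; simp
  have hz : ∀ n, (∏ i ∈ Finset.range n, (1 + C (q ^ i) * X : ℂ[X])).coeff 0 = 1 := by
    intro n
    rw [coeff_zero_eq_eval_zero, eval_prod]; simp
  have hexp : ∀ a : ℕ, (a + 1) * (a + 1 - 1) / 2 = a * (a - 1) / 2 + a := by
    intro a
    cases a with
    | zero => rfl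
    | succ a =>
      simp only [Nat.add_sub_cancel]
      have : (a + 1 + 1) * (a + 1) = (a+1) * a + (a+1) * 2 := by ring
      rw [this, Nat.add_mul_div_right _ _ (by norm_num)]
  induction a, b using gaussPoly.induct with
  | case1 b => rw [hz, gaussVal_zero_left]; simp
  | case2 a =>
    rw [gaussVal_zero_right, mul_one, add_zero]
    have : ∀ a, (∏ i ∈ Finset.range a, (1 + C (q ^ i) * X : ℂ[X])).coeff a = q ^ (a * (a-1) / 2) := by
      intro a
      induction a with
      | zero => simp
      | succ a ih => rw [hstep, hdeg _ _ (by omega), ih, hexp, pow_add]; ring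
    exact this _
  | case3 a b ih1 ih2 =>
    simp only [Nat.succ_eq_add_one]
    rw [← add_assoc, hstep, gaussVal_succ]
    have e : a + 1 + b = a + (b + 1) := by ring
    rw [ih1, e, ih2, hexp]
    ring

theorem prod_le_three_pow (n : ℕ) (x : ℕ → ℝ) (hx : ∀ i, 0 ≤ x i)
    (hs : ∑ i ∈ Finset.range n, x i ≤ 3 * n) : ∏ i ∈ Finset.range n, x i ≤ 3 ^ n := by
  have h1 : ∏ i ∈ Finset.range n, x i ≤ ∏ i ∈ Finset.range n, (3 * Real.exp (x i / 3 - 1)) := by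
    apply Finset.prod_le_prod (fun i _ => hx i)
    intro i _
    have := Real.add_one_le_exp (x i / 3 - 1)
    linarith
  refine h1.trans ?_
  rw [Finset.prod_mul_distrib, ← Real.exp_sum]
  simp only [Finset.prod_const, Finset.card_range]
  have : Real.exp (∑ i ∈ Finset.range n, (x i / 3 - 1)) ≤ 1 := by
    rw [Real.exp_le_one_iff, Finset.sum_sub_distrib, ← Finset.sum_div]
    simp; linarith
  nlinarith [pow_pos (show (0:ℝ) < 3 by norm_num) n]

theorem minor_bound (r : ℕ) (q : ℂ) (hq : ‖q‖ = 1) (hd : 2 ≤ r * ‖1 - q‖) :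
    ‖gaussVal q r r‖ ≤ 3 ^ r := by
  have hr : 0 < r := by
    rcases Nat.eq_zero_or_pos r with h | h
    · subst h; simp at hd; linarith
    · exact h
  have hr' : (0:ℝ) < r := by exact_mod_cast hr
  have hc := coeff_norm_le_of_circle (∏ i ∈ Finset.range (r+r), (1 + C (q ^ i) * X : ℂ[X])) (3 ^ r) ?_ r
  · rw [qbinom_thm, norm_mul, norm_pow, hq, one_pow, one_mul] at hc
    exact hc
  · intro z hz
    rw [eval_prod, norm_prod]
    simp only [eval_add, eval_mul, eval_C, eval_X, eval_one]
    have hsq : (∏ i ∈ Finset.range (r+r), ‖1 + q ^ i * z‖) ^ 2 ≤ (3 ^ r) ^ 2 := by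
      rw [← Finset.prod_pow, ← pow_mul, mul_two]
      apply prod_le_three_pow _ _ (fun i => by positivity)
      have hterm : ∀ i, ‖1 + q ^ i * z‖ ^ 2 = 2 + 2 * (q ^ i * z).re := by
        intro i
        have h1 : ‖q ^ i * z‖ ^ 2 = 1 := by rw [norm_mul, norm_pow, hq, hz]; simp
        rw [Complex.sq_norm, Complex.normSq_apply] at *
        simp only [Complex.add_re, Complex.add_im, Complex.one_re, Complex.one_im]
        nlinarith
      simp only [hterm]
      rw [Finset.sum_add_distrib, ← Finset.mul_sum, ← Complex.re_sum, ← Finset.sum_mul]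
      simp only [Finset.sum_const, Finset.card_range]
      have hq1 : q ≠ 1 := by
        intro h; rw [h] at hd; simp at hd; linarith
      have hpos : 0 < ‖1 - q‖ := norm_pos_iff.2 (sub_ne_zero.2 (Ne.symm hq1))
      have hgs : ‖∑ i ∈ Finset.range (r+r), q ^ i‖ ≤ r := by
        have := geom_sum_mul_neg q (r+r)
        have h2 := congrArg norm this
        rw [norm_mul] at h2
        have h3 : ‖1 - q ^ (r+r)‖ ≤ 2 := by
          refine (norm_sub_le _ _).trans ?_
          rw [norm_pow, hq]; norm_num
        rw [← h2] at h3
        exact le_of_mul_le_mul_right (h3.trans hd) hpos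
      have hre := Complex.re_le_norm ((∑ i ∈ Finset.range (r+r), q ^ i) * z)
      rw [norm_mul, hz, mul_one] at hre
      push_cast
      rw [nsmul_eq_mul]; push_cast
      linarith
    exact le_of_sq_le_sq hsq (by positivity)

end Minor
section Arc
open Polynomial

theorem gaussVal_recip (q : ℂ) (hq : q ≠ 0) (a b : ℕ) :
    q ^ (a*b) * gaussVal q⁻¹ a b = gaussVal q a b := by
  induction a, b using gaussPoly.induct with
  | case1 b => simp [gaussVal_zero_left]
  | case2 a => simp [gaussVal_zero_right]
  | case3 a b ih1 ih2 =>
    simp only [Nat.succ_eq_add_one] at *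
    rw [gaussVal_succ q⁻¹, gaussVal_symm q, gaussVal_succ q, gaussVal_symm q b, gaussVal_symm q (b+1), ← ih1, ← ih2]
    have h1 : q ^ ((a+1)*(b+1)) = q ^ (a*(b+1)) * q ^ (b+1) := by rw [← pow_add]; congr 1; ring
    have h2 : q ^ ((a+1)*(b+1)) = q ^ ((a+1)*b) * q ^ (a+1) := by rw [← pow_add]; congr 1
    have h3 : q ^ (b+1) * q⁻¹ ^ (b+1) = 1 := by rw [← mul_pow, mul_inv_cancel₀ hq, one_pow]
    linear_combination h2 * gaussVal q⁻¹ (a+1) b + (h1 * q⁻¹ ^ (b+1) + q ^ (a*(b+1)) * h3) * gaussVal q⁻¹ a (b+1)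

theorem gaussVal_eq_sum (q : ℂ) (a b : ℕ) :
    gaussVal q a b = ∑ k ∈ Finset.range (a*b+1), ((gaussPoly a b).coeff k : ℂ) * q ^ k := by
  rw [gaussVal, eval₂_eq_sum_range' _ (Nat.lt_succ_of_le (gaussPoly_natDegree a b))]
  simp

noncomputable def cP (r : ℕ) (x : ℝ) : ℝ :=
  ∑ k ∈ Finset.range (r*r+1), ((gaussPoly r r).coeff k : ℝ) * Real.cos (((k:ℝ) - (r*r/2 : ℕ)) * x)

theorem gaussVal_cP (r : ℕ) (hr : Even r) (x : ℝ) :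
    gaussVal (Complex.exp (x * Complex.I)) r r =
      Complex.exp (((r*r/2 : ℕ) * x : ℝ) * Complex.I) * (cP r x : ℂ) ∧
    ∑ k ∈ Finset.range (r*r+1), ((gaussPoly r r).coeff k : ℝ) * Real.sin (((k:ℝ) - (r*r/2 : ℕ)) * x) = 0 := by
  set c := r*r/2 with hc
  have hcc : r * r = c + c := by
    obtain ⟨t, rfl⟩ := hr
    have : (t+t)*(t+t) = (2*t*t)*2 := by ring
    rw [this] at hc ⊢; omega
  set Q := ∑ k ∈ Finset.range (r*r+1), ((gaussPoly r r).coeff k : ℝ) * Real.sin (((k:ℝ) - (c : ℕ)) * x) with hQ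
  have key : ∀ y : ℝ, gaussVal (Complex.exp (y * Complex.I)) r r =
      Complex.exp ((c * y : ℝ) * Complex.I) * (∑ k ∈ Finset.range (r*r+1), ((gaussPoly r r).coeff k : ℂ) * Complex.exp ((((k:ℝ) - c) * y : ℝ) * Complex.I)) := by
    intro y
    rw [gaussVal_eq_sum, Finset.mul_sum]
    apply Finset.sum_congr rfl
    intro k _
    rw [mul_left_comm, ← Complex.exp_add, ← Complex.exp_nat_mul]
    congr 2
    push_cast; ring
  have hsum : ∑ k ∈ Finset.range (r*r+1), ((gaussPoly r r).coeff k : ℂ) * Complex.exp ((((k:ℝ) - c) * x : ℝ) * Complex.I) = cP r x + Q * Complex.I := by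
    simp only [Complex.exp_mul_I, ← Complex.ofReal_cos, ← Complex.ofReal_sin]
    rw [cP, hQ]; push_cast
    rw [Finset.sum_mul, ← Finset.sum_add_distrib]
    apply Finset.sum_congr rfl
    intro k _; ring
  have hsum' : ∑ k ∈ Finset.range (r*r+1), ((gaussPoly r r).coeff k : ℂ) * Complex.exp ((((k:ℝ) - c) * (-x) : ℝ) * Complex.I) = cP r x - Q * Complex.I := by
    simp only [Complex.exp_mul_I, ← Complex.ofReal_cos, ← Complex.ofReal_sin, mul_neg, Real.cos_neg, Real.sin_neg]
    rw [cP, hQ]; push_cast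
    rw [Finset.sum_mul, ← Finset.sum_sub_distrib]
    apply Finset.sum_congr rfl
    intro k _; ring
  have hQ0 : Q = 0 := by
    have h := gaussVal_recip (Complex.exp (x * Complex.I)) (Complex.exp_ne_zero _) r r
    have e1 : (Complex.exp (x * Complex.I))⁻¹ = Complex.exp ((-x : ℝ) * Complex.I) := by
      rw [← Complex.exp_neg]; push_cast; congr 1; ring
    rw [e1, key, key, hsum, hsum', ← mul_assoc, ← Complex.exp_nat_mul, ← Complex.exp_add, hcc] at h
    have e2 : ((c + c : ℕ) : ℂ) * (x * Complex.I) + (c * -x : ℝ) * Complex.I = (c * x : ℝ) * Complex.I := by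
      push_cast; ring
    rw [e2] at h
    have h3 := mul_left_cancel₀ (Complex.exp_ne_zero _) h
    have h4 := congrArg Complex.im h3
    simp at h4
    linarith
  refine ⟨?_, hQ0⟩
  rw [key, hsum, hQ0]; simp

theorem cP_mul_cos (r : ℕ) (hr : Even r) (x : ℝ) : cP r x * Real.cos x =
    ∑ k ∈ Finset.range (r*r+1), ((gaussPoly r r).coeff k : ℝ) * Real.cos (((k:ℝ) - (r*r/2 : ℕ) + 1) * x) := by
  have h := (gaussVal_cP r hr x).2
  have : ∀ k : ℕ, ((gaussPoly r r).coeff k : ℝ) * Real.cos (((k:ℝ) - (r*r/2 : ℕ) + 1) * x) =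
      (((gaussPoly r r).coeff k : ℝ) * Real.cos (((k:ℝ) - (r*r/2 : ℕ)) * x)) * Real.cos x -
      (((gaussPoly r r).coeff k : ℝ) * Real.sin (((k:ℝ) - (r*r/2 : ℕ)) * x)) * Real.sin x := by
    intro k
    rw [add_mul, one_mul, Real.cos_add]; ring
  simp only [this]
  rw [Finset.sum_sub_distrib, ← Finset.sum_mul, ← Finset.sum_mul, h, cP]; ring

theorem sum_cos_nodes (M : ℕ) (n : ℤ) (hM : 0 < M) (h1 : |n| < 2 * M) :
    ∑ j ∈ Finset.range M, Real.cos (n * (Real.pi * (2*j+1) / (2*M))) = if n = 0 then (M:ℝ) else 0 := by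
  have hM' : (0:ℝ) < M := by exact_mod_cast hM
  split_ifs with h
  · subst h; simp
  · set y : ℝ := n * Real.pi / (2*M) with hy
    have hs : Real.sin y ≠ 0 := by
      have hab := abs_lt.1 h1
      have h2 : (n:ℝ) < 2 * M := by exact_mod_cast hab.2
      have h3 : -(2 * M : ℝ) < n := by exact_mod_cast hab.1
      have hp := Real.pi_pos
      have hylt : y < Real.pi := by
        rw [hy, div_lt_iff₀ (by positivity)]; nlinarith
      have hygt : -Real.pi < y := by
        rw [hy, lt_div_iff₀ (by positivity)]; nlinarith
      rw [Ne, Real.sin_eq_zero_iff_of_lt_of_lt hygt hylt, hy]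
      have : (n:ℝ) ≠ 0 := by exact_mod_cast h
      positivity
    have hterm : ∀ j : ℕ, 2 * Real.sin y * Real.cos (n * (Real.pi * (2*j+1) / (2*M))) =
        Real.sin (2 * ((j+1 : ℕ):ℝ) * y) - Real.sin (2 * (j:ℝ) * y) := by
      intro j
      have e1 : n * (Real.pi * (2*j+1) / (2*M)) = (2 * j + 1) * y := by rw [hy]; field_simp
      rw [e1]
      have e2 : 2 * ((j+1 : ℕ):ℝ) * y = (2 * j + 1) * y + y := by push_cast; ring
      have e3 : 2 * (j:ℝ) * y = (2 * j + 1) * y - y := by ring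
      rw [e2, e3, Real.sin_add, Real.sin_sub]; ring
    have hsum : 2 * Real.sin y * ∑ j ∈ Finset.range M, Real.cos (n * (Real.pi * (2*j+1) / (2*M))) = 0 := by
      rw [Finset.mul_sum, Finset.sum_congr rfl (fun j _ => hterm j),
        Finset.sum_range_sub (fun j : ℕ => Real.sin (2 * (j:ℝ) * y))]
      have : 2 * (M:ℝ) * y = n * Real.pi := by rw [hy]; field_simp
      rw [this, Real.sin_int_mul_pi]; simp
    rcases mul_eq_zero.1 hsum with h4 | h4
    · exact absurd h4 (by simpa using hs)
    · exact h4

theorem cP_nodes (r : ℕ) (hr : Even r) (hr2 : 2 ≤ r) :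
    ∑ j ∈ Finset.range (r*r), cP r (Real.pi * (2*j+1) / (2*(r*r : ℕ))) *
      (1 - Real.cos (Real.pi * (2*j+1) / (2*(r*r : ℕ)))) = (r*r : ℕ) * (dif r r (r*r/2) : ℝ) := by
  have hM : 0 < r * r := by positivity
  have hM4 : 4 ≤ r * r := by nlinarith
  set M := r * r with hMdef
  set c := M / 2 with hc
  have hgen : ∀ d : ℕ, d ≤ c → d ≤ 1 → ∑ j ∈ Finset.range M, ∑ k ∈ Finset.range (M+1), ((gaussPoly r r).coeff k : ℝ) * Real.cos (((k:ℝ) - c + d) * (Real.pi * (2*j+1) / (2*M))) = M * (gaussPoly r r).coeff (c - d) := by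
    intro d hd hd1
    rw [Finset.sum_comm]
    have : ∀ k ∈ Finset.range (M+1), ∑ j ∈ Finset.range M, ((gaussPoly r r).coeff k : ℝ) * Real.cos (((k:ℝ) - c + d) * (Real.pi * (2*j+1) / (2*M))) = if k = c - d then ((gaussPoly r r).coeff k : ℝ) * M else 0 := by
      intro k hk
      rw [Finset.mem_range] at hk
      rw [← Finset.mul_sum]
      have h := sum_cos_nodes M ((k:ℤ) - c + d) hM (by rw [abs_lt]; constructor <;> omega)
      push_cast at h
      rw [h]
      by_cases hkc : k = c - d
      · rw [if_pos (by omega), if_pos hkc]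
      · rw [if_neg (by omega), if_neg hkc, mul_zero]
    rw [Finset.sum_congr rfl this, Finset.sum_ite_eq' , if_pos (by rw [Finset.mem_range]; omega), mul_comm]
  have h0 := hgen 0 (by omega) (by omega)
  have h1 := hgen 1 (by omega) (by omega)
  have : ∀ j : ℕ, cP r (Real.pi * (2*j+1) / (2*M)) * (1 - Real.cos (Real.pi * (2*j+1) / (2*M))) =
      ∑ k ∈ Finset.range (M+1), ((gaussPoly r r).coeff k : ℝ) * Real.cos (((k:ℝ) - c + (0:ℕ)) * (Real.pi * (2*j+1) / (2*M))) - ∑ k ∈ Finset.range (M+1), ((gaussPoly r r).coeff k : ℝ) * Real.cos (((k:ℝ) - c + (1:ℕ)) * (Real.pi * (2*j+1) / (2*M))) := by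
    intro j
    rw [mul_sub, mul_one, cP_mul_cos r hr, cP]
    simp [hc, hMdef]
  simp only [this]
  rw [Finset.sum_sub_distrib, h0, h1, dif, if_neg (by omega)]
  push_cast
  simp; ring

theorem cP_nonneg (r : ℕ) (hr : Even r) (x : ℝ) (hx : 0 < x) (hx1 : x * r < Real.pi) : 0 ≤ cP r x := by
  set q := Complex.exp (x * Complex.I) with hq
  have hone : ∀ n : ℕ, 1 - q ^ n = Complex.exp ((n * x / 2 : ℝ) * Complex.I) * (-2 * Complex.I * Real.sin (n * x / 2)) := by
    intro n
    rw [hq, ← Complex.exp_nat_mul]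
    have : (n:ℂ) * (x * Complex.I) = (n * x / 2 : ℝ) * Complex.I + (n * x / 2 : ℝ) * Complex.I := by
      push_cast; ring
    rw [this, Complex.exp_add, Complex.exp_mul_I, ← Complex.ofReal_cos, ← Complex.ofReal_sin]
    have hcs : (Real.cos (n * x / 2) : ℂ) ^ 2 + (Real.sin (n * x / 2) : ℂ) ^ 2 = 1 := by
      rw [← Complex.ofReal_pow, ← Complex.ofReal_pow, ← Complex.ofReal_add, Real.cos_sq_add_sin_sq]; simp
    have hI := Complex.I_sq
    linear_combination (-1 : ℂ) * hcs + (Real.sin (n * x / 2) : ℂ) ^ 2 * hI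
  have hpos : ∀ n : ℕ, 1 ≤ n → n ≤ r + r → 0 ≤ Real.sin (n * x / 2) := by
    intro n _ hn
    have : (n:ℝ) ≤ r + r := by exact_mod_cast hn
    apply Real.sin_nonneg_of_nonneg_of_le_pi (by positivity)
    nlinarith
  have hpos' : ∀ n : ℕ, 1 ≤ n → n ≤ r → 0 < Real.sin (n * x / 2) := by
    intro n h1 hn
    have : (n:ℝ) ≤ r := by exact_mod_cast hn
    have : (0:ℝ) < n := by exact_mod_cast h1
    apply Real.sin_pos_of_pos_of_lt_pi (by positivity)
    nlinarith [Real.pi_pos]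
  have main : ∀ a, a ≤ r → ∃ t : ℝ, 0 ≤ t ∧ gaussVal q a r = Complex.exp ((a * r * x / 2 : ℝ) * Complex.I) * t := by
    intro a
    induction a with
    | zero => intro _; exact ⟨1, by norm_num, by simp [gaussVal_zero_left]⟩
    | succ a ih =>
      intro ha
      obtain ⟨t, ht, e⟩ := ih (by omega)
      have hst := (gaussVal_step q a r).1
      have hs1 := hpos' (a+1) (by omega) ha
      have hs2 := hpos (a+r+1) (by omega) (by omega)
      refine ⟨t * Real.sin ((a+r+1 : ℕ) * x / 2) / Real.sin ((a+1 : ℕ) * x / 2), by positivity, ?_⟩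
      rw [e, hone, hone] at hst
      have hne : (Real.sin ((a+1 : ℕ) * x / 2) : ℂ) ≠ 0 := by exact_mod_cast hs1.ne'
      have hexp : Complex.exp ((((a+r+1 : ℕ):ℝ) * x / 2 : ℝ) * Complex.I) * Complex.exp ((a * r * x / 2 : ℝ) * Complex.I) =
        Complex.exp ((((a+1 : ℕ):ℝ) * x / 2 : ℝ) * Complex.I) * Complex.exp ((((a+1 : ℕ):ℝ) * r * x / 2 : ℝ) * Complex.I) := by
        rw [← Complex.exp_add, ← Complex.exp_add]; congr 1; push_cast; ring
      have hne2 : Complex.exp ((((a+1 : ℕ):ℝ) * x / 2 : ℝ) * Complex.I) * (-2 * Complex.I) ≠ 0 := by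
        simp [Complex.exp_ne_zero]
      apply mul_left_cancel₀ hne2
      apply mul_right_cancel₀ hne
      have ht' : ((t * Real.sin ((a+r+1 : ℕ) * x / 2) / Real.sin ((a+1 : ℕ) * x / 2) : ℝ) : ℂ) *
          (Real.sin ((a+1 : ℕ) * x / 2) : ℂ) = t * Real.sin ((a+r+1 : ℕ) * x / 2) := by
        rw [← Complex.ofReal_mul, div_mul_cancel₀ _ hs1.ne', Complex.ofReal_mul]
      generalize ((t * Real.sin ((a+r+1 : ℕ) * x / 2) / Real.sin ((a+1 : ℕ) * x / 2) : ℝ) : ℂ) = t' at ht' ⊢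
      generalize Complex.exp ((((a+r+1 : ℕ):ℝ) * x / 2 : ℝ) * Complex.I) = E1 at *
      generalize Complex.exp ((a * r * x / 2 : ℝ) * Complex.I) = E2 at *
      generalize Complex.exp ((((a+1 : ℕ):ℝ) * x / 2 : ℝ) * Complex.I) = E3 at *
      generalize Complex.exp ((((a+1 : ℕ):ℝ) * r * x / 2 : ℝ) * Complex.I) = E4 at *
      linear_combination hst - 2 * Complex.I * t * Real.sin ((a+r+1 : ℕ) * x / 2) * hexp +
        2 * Complex.I * E3 * E4 * ht'
  obtain ⟨t, ht, e⟩ := main r le_rfl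
  have h2 := (gaussVal_cP r hr x).1
  have hcc : (((r*r/2 : ℕ) * x : ℝ)) = r * r * x / 2 := by
    obtain ⟨u, rfl⟩ := hr
    have : (u+u)*(u+u)/2 = 2*u*u := by
      have : (u+u)*(u+u) = (2*u*u)*2 := by ring
      omega
    rw [this]; push_cast; ring
  rw [← hq, e, hcc] at h2
  have h3 := mul_left_cancel₀ (Complex.exp_ne_zero _) h2
  have h4 : t = cP r x := by exact_mod_cast h3
  rw [← h4]; exact ht

theorem cP_minor (r : ℕ) (hr : Even r) (hr2 : 2 ≤ r) (x : ℝ) (hx : Real.pi ≤ x * r) (hx1 : x ≤ Real.pi) :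
    |cP r x| ≤ 3 ^ r := by
  have hr' : (0:ℝ) < r := by exact_mod_cast (by omega : 0 < r)
  have hp := Real.pi_pos
  have hx0 : 0 < x := by
    by_contra h
    nlinarith
  have h := minor_bound r (Complex.exp (x * Complex.I)) (Complex.norm_exp_ofReal_mul_I x) ?_
  · rw [(gaussVal_cP r hr x).1, norm_mul, Complex.norm_exp_ofReal_mul_I, one_mul] at h
    simpa using h
  · rw [norm_sub_rev]
    have h1 : ‖Complex.exp (x * Complex.I) - 1‖ = 2 * |Real.sin (x/2)| := by
      have := Complex.norm_exp_I_mul_ofReal_sub_one x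
      rw [mul_comm] at this
      rw [this]; simp
    rw [h1]
    have h2 : 2 / Real.pi * (x/2) ≤ Real.sin (x/2) := Real.mul_le_sin (by positivity) (by linarith)
    have h3 : x / Real.pi ≤ |Real.sin (x/2)| := by
      refine le_trans (le_of_eq ?_) (h2.trans (le_abs_self _))
      ring
    have h4 : 1 ≤ r * (x / Real.pi) := by
      rw [← mul_div_assoc, le_div_iff₀ hp]; linarith
    nlinarith

theorem cP_zero_node (r : ℕ) (hr : Even r) (hr2 : 2 ≤ r) :
    (Nat.centralBinom r : ℝ) / 2 ≤ cP r (Real.pi / (2*(r*r : ℕ))) := by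
  have hM : 0 < r * r := by positivity
  have hM' : (0:ℝ) < (r * r : ℕ) := by exact_mod_cast hM
  have hsum : (Nat.centralBinom r : ℝ) = ∑ k ∈ Finset.range (r*r+1), ((gaussPoly r r).coeff k : ℝ) := by
    have h := gaussPoly_eval_one r r
    rw [eval_eq_sum_range' (Nat.lt_succ_of_le (gaussPoly_natDegree r r))] at h
    rw [Nat.centralBinom, two_mul, ← h]; simp
  rw [hsum, cP, Finset.sum_div]
  apply Finset.sum_le_sum
  intro k hk
  rw [Finset.mem_range] at hk
  rw [div_eq_mul_inv]
  apply mul_le_mul_of_nonneg_left _ (by positivity)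
  set c := r*r/2 with hc
  have hkc : |(k:ℝ) - c| ≤ (r*r : ℕ) / 2 := by
    have hcc : r * r = c + c := by
      obtain ⟨t, rfl⟩ := hr
      have : (t+t)*(t+t) = (2*t*t)*2 := by ring
      rw [this] at hc ⊢; omega
    rw [hcc, abs_le]; push_cast
    have : (k:ℝ) ≤ c + c := by exact_mod_cast (by omega : k ≤ c + c)
    have : (0:ℝ) ≤ k := by positivity
    constructor <;> linarith
  have hp := Real.pi_pos
  have hb : |((k:ℝ) - c) * (Real.pi / (2*(r*r : ℕ)))| ≤ Real.pi / 4 := by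
    rw [abs_mul, abs_of_pos (show 0 < Real.pi / (2*(r*r : ℕ)) by positivity)]
    calc _ ≤ ((r*r : ℕ) : ℝ) / 2 * (Real.pi / (2*(r*r : ℕ))) := by gcongr
      _ = Real.pi / 4 := by field_simp; norm_num
  rw [← Real.cos_abs]
  have : Real.cos (Real.pi / 3) ≤ Real.cos |((k:ℝ) - c) * (Real.pi / (2*(r*r : ℕ)))| :=
    Real.cos_le_cos_of_nonneg_of_le_pi (abs_nonneg _) (by linarith) (by linarith)
  rw [Real.cos_pi_div_three] at this
  linarith

end Arc
section Final

theorem dif_center_lower (r : ℕ) (hr : Even r) (hr4 : 4 ≤ r) :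
    (4:ℝ) ^ r / (4 * r ^ 7) - 2 * 3 ^ r ≤ (dif r r (r*r/2) : ℝ) := by
  have hn := cP_nodes r hr (by omega)
  have hr' : (0:ℝ) < r := by exact_mod_cast (by omega : 0 < r)
  have hM : 0 < r * r := by positivity
  obtain ⟨K, hK⟩ : ∃ K, r * r = K + 1 := ⟨r * r - 1, by omega⟩
  have hM' : (0:ℝ) < (r * r : ℕ) := by exact_mod_cast hM
  set x : ℕ → ℝ := fun j => Real.pi * (2*j+1) / (2*(r*r : ℕ)) with hx
  have hp := Real.pi_pos
  change ∑ j ∈ Finset.range (r*r), cP r (x j) * (1 - Real.cos (x j)) = _ at hn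
  have hterm : ∀ j, j < r * r → -(2 * 3 ^ r) ≤ cP r (x j) * (1 - Real.cos (x j)) := by
    intro j hj
    have hj' : (j:ℝ) + 1 ≤ (r*r : ℕ) := by exact_mod_cast hj
    have hx0 : 0 < x j := by simp only [hx]; positivity
    have hx1 : x j ≤ Real.pi := by
      simp only [hx]; rw [div_le_iff₀ (by positivity)]; nlinarith
    have hc1 := Real.cos_le_one (x j)
    have hc2 := Real.neg_one_le_cos (x j)
    have h3 : (0:ℝ) < 3 ^ r := by positivity
    by_cases h : x j * r < Real.pi
    · have := cP_nonneg r hr (x j) hx0 h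
      have := mul_nonneg this (sub_nonneg.2 hc1)
      linarith
    · have := cP_minor r hr (by omega) (x j) (not_lt.1 h) hx1
      have := abs_le.1 this
      nlinarith
  have h0 : (Nat.centralBinom r : ℝ) / (4 * ((r*r : ℕ):ℝ)^2) ≤ cP r (x 0) * (1 - Real.cos (x 0)) := by
    have hx0 : x 0 = Real.pi / (2*(r*r : ℕ)) := by simp [hx]
    rw [hx0]
    have h1 := cP_zero_node r hr (by omega)
    have hM1 : (1:ℝ) ≤ (r*r : ℕ) := by exact_mod_cast hM
    have h2 := Real.cos_le_one_sub_mul_cos_sq (x := Real.pi / (2*(r*r : ℕ))) (by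
      rw [abs_of_pos (by positivity)]
      exact div_le_self hp.le (by linarith))
    have h2' : 1 / (2 * ((r*r : ℕ):ℝ)^2) ≤ 1 - Real.cos (Real.pi / (2*(r*r : ℕ))) := by
      have : 2 / Real.pi ^ 2 * (Real.pi / (2*(r*r : ℕ)))^2 = 1 / (2 * ((r*r : ℕ):ℝ)^2) := by
        field_simp
      linarith
    calc _ = (Nat.centralBinom r : ℝ) / 2 * (1 / (2 * ((r*r : ℕ):ℝ)^2)) := by ring
      _ ≤ _ := by
        apply mul_le_mul h1 h2' (by positivity)
        exact le_trans (by positivity) h1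
  have hsum : (Nat.centralBinom r : ℝ) / (4 * ((r*r : ℕ):ℝ)^2) - K * (2 * 3 ^ r) ≤ (r*r : ℕ) * (dif r r (r*r/2) : ℝ) := by
    rw [← hn]
    have e : ∑ j ∈ Finset.range (r*r), cP r (x j) * (1 - Real.cos (x j)) =
      ∑ j ∈ Finset.range K, cP r (x (j+1)) * (1 - Real.cos (x (j+1))) + cP r (x 0) * (1 - Real.cos (x 0)) := by
      rw [hK, Finset.sum_range_succ']
    rw [e]
    have : ∑ j ∈ Finset.range K, (-(2 * 3 ^ r) : ℝ) ≤ ∑ j ∈ Finset.range K, cP r (x (j+1)) * (1 - Real.cos (x (j+1))) := by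
      apply Finset.sum_le_sum
      intro j hj
      rw [Finset.mem_range] at hj
      exact hterm _ (by omega)
    simp only [Finset.sum_const, Finset.card_range, nsmul_eq_mul] at this
    linarith
  have hcb : (4:ℝ) ^ r ≤ r * Nat.centralBinom r := by
    exact_mod_cast (Nat.four_pow_lt_mul_centralBinom r hr4).le
  have hKle : (K:ℝ) ≤ (r*r : ℕ) := by exact_mod_cast (by omega : K ≤ r * r)
  have h5 : (4:ℝ)^r / (4 * r^7) * (r*r : ℕ) ≤ (Nat.centralBinom r : ℝ) / (4 * ((r*r : ℕ):ℝ)^2) := by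
    push_cast
    rw [div_mul_eq_mul_div, div_le_div_iff₀ (by positivity) (by positivity)]
    have : (0:ℝ) ≤ 4 * r^6 := by positivity
    nlinarith [mul_le_mul_of_nonneg_left hcb this]
  have h6 : (0:ℝ) < 3 ^ r := by positivity
  have h7 : (r*r : ℕ) * ((4:ℝ) ^ r / (4 * r ^ 7) - 2 * 3 ^ r) ≤ (r*r : ℕ) * (dif r r (r*r/2) : ℝ) := by
    nlinarith
  exact le_of_mul_le_mul_left h7 hM'

theorem dif_center_eventually : ∃ R : ℕ, ∀ r : ℕ, R ≤ r → Even r → (2:ℝ) ^ r ≤ (dif r r (r*r/2) : ℝ) := by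
  have ht := tendsto_pow_const_div_const_pow_of_one_lt 7 (show (1:ℝ) < 4/3 by norm_num)
  have he := ht.eventually (gt_mem_nhds (show (0:ℝ) < 1/12 by norm_num))
  obtain ⟨R, hR⟩ := Filter.eventually_atTop.1 he
  refine ⟨max R 4, fun r hr hre => ?_⟩
  have h1 := hR r (le_trans (le_max_left _ _) hr)
  have h4 : 4 ≤ r := le_trans (le_max_right _ _) hr
  refine le_trans ?_ (dif_center_lower r hre h4)
  have hr' : (0:ℝ) < r := by exact_mod_cast (by omega : 0 < r)
  have h3 : (0:ℝ) < 3 ^ r := by positivity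
  have h23 : (2:ℝ) ^ r ≤ 3 ^ r := pow_le_pow_left₀ (by norm_num) (by norm_num) r
  rw [div_pow, div_lt_iff₀ (by positivity)] at h1
  have h5 : 3 * (3:ℝ) ^ r ≤ 4 ^ r / (4 * r ^ 7) := by
    rw [le_div_iff₀ (by positivity)]
    rw [← mul_div_assoc, lt_div_iff₀ h3] at h1
    nlinarith
  linarith

end Final

/-- There exists a universal constant `A > 0` such that for all `m ≥ ℓ ≥ 8` and all
`2 ≤ k ≤ ℓm/2`, one has `p_k(ℓ,m) − p_{k−1}(ℓ,m) > A · 2^{√s} / s^{9/4}` where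
`s = min {2k, ℓ²}`. -/
theorem kronecker_qbinomial_lower_bound :
    ∃ A : ℝ, A > 0 ∧
      ∀ ℓ m k : ℕ, 8 ≤ ℓ → ℓ ≤ m → 2 ≤ k → 2 * k ≤ ℓ * m →
        ((rectPartitions k ℓ m : ℝ) - (rectPartitions (k - 1) ℓ m : ℝ)) >
          A * (2 : ℝ) ^ Real.sqrt ((min (2 * k) (ℓ ^ 2) : ℕ) : ℝ) /
            ((min (2 * k) (ℓ ^ 2) : ℕ) : ℝ) ^ ((9 : ℝ) / 4) := by
  obtain ⟨R, hR⟩ := dif_center_eventually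
  set T := max R 8 + 12 with hT
  refine ⟨(2:ℝ)⁻¹ ^ (T + 12), by positivity, ?_⟩
  intro l m k hl hlm hk hkl
  set s := min (2 * k) (l ^ 2) with hs
  have hconv : ((rectPartitions k l m : ℝ) - (rectPartitions (k - 1) l m : ℝ)) = (dif l m k : ℝ) := by
    rw [rectPartitions_eq, rectPartitions_eq, dif, if_neg (by omega)]; push_cast; rfl
  rw [hconv]
  have hl2 : 64 ≤ l ^ 2 := by nlinarith
  have hs1 : 4 ≤ s := by rw [hs]; exact le_min (by omega) (by omega)
  have hs1' : (1:ℝ) ≤ s := by exact_mod_cast (by omega : 1 ≤ s)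
  have hden : (1:ℝ) ≤ (s:ℝ) ^ ((9:ℝ)/4) := Real.one_le_rpow hs1' (by norm_num)
  set t := Nat.sqrt s with ht
  have ht1 : t * t ≤ s := Nat.sqrt_le s
  have hsq : Real.sqrt s ≤ (t + 1 : ℕ) := by
    rw [Real.sqrt_le_left (by positivity)]
    have := Nat.sqrt_le_add s
    have : s ≤ (t+1)^2 := by nlinarith
    exact_mod_cast this
  have hpow : (2:ℝ) ^ Real.sqrt (s:ℝ) ≤ 2 ^ (t+1) := by
    rw [← Real.rpow_natCast]
    exact Real.rpow_le_rpow_of_exponent_le (by norm_num) hsq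
  have hle : (2:ℝ)⁻¹ ^ (T + 12) * (2 : ℝ) ^ Real.sqrt (s : ℝ) / (s:ℝ) ^ ((9:ℝ)/4) ≤ (2:ℝ)⁻¹ ^ (T + 12) * 2 ^ (t+1) := by
    apply (div_le_self (by positivity) hden).trans
    gcongr
  refine lt_of_le_of_lt hle ?_
  rw [inv_pow, inv_mul_lt_iff₀ (by positivity)]
  by_cases hcase : t < T
  · have hpos := dif_pos' l m k hl (by omega) (by omega) hkl
    have h1 : (1:ℝ) ≤ dif l m k := by exact_mod_cast hpos
    have h2 : (2:ℝ) ^ (t+1) < 2 ^ (T + 12) := pow_lt_pow_right₀ (by norm_num) (by omega)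
    have h3 : (0:ℝ) < 2 ^ (T+12) := by positivity
    nlinarith
  · have htl : t ≤ l := by
      have : s ≤ l ^ 2 := min_le_right _ _
      by_contra h
      nlinarith
    have htk : t * t ≤ 2 * k := ht1.trans (min_le_left _ _)
    have hT8 : R ≤ max R 8 := le_max_left _ _
    have hT9 : 8 ≤ max R 8 := le_max_right _ _
    set r := 2 * ((t - 8) / 2) with hr
    have hre : Even r := ⟨(t-8)/2, by omega⟩
    have hrt : r + 8 ≤ t := by omega
    have hrt' : t ≤ r + 9 := by omega
    have hc := dif_ge_center l m k r (by omega) hre (by omega) (by omega)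
      (by
        have : (r + 8) * (r + 8) ≤ t * t := Nat.mul_le_mul hrt hrt
        have : r * r + 4 ≤ 2 * k := by nlinarith
        omega) hkl
    have h1 : (2:ℝ) ^ r ≤ dif l m k := (hR r (by omega) hre).trans (by exact_mod_cast hc)
    calc (2:ℝ) ^ (t+1) < 2 ^ (T + 12 + r) := pow_lt_pow_right₀ (by norm_num) (by omega)
      _ = 2 ^ (T+12) * 2 ^ r := pow_add _ _ _
      _ ≤ _ := by gcongr
end

section
/- Let A = 2^{−9/√2} · 3√3/(√2·π²) (so A ≈ 0.00449). Then for all natural numbers m ≥ ℓ ≥ 8 and all k with 2 ≤ k ≤ ℓm/2, one has (as real numbers) p_k(ℓ,m) − p_{k−1}(ℓ,m) > A · 2^{√s} / s^{9/4}, where s = min{2k, ℓ²}. -/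
namespace KQ
open Polynomial

/-- Gaussian binomial polynomial `binom(l+m, m)_q`. -/
noncomputable def G : ℕ → ℕ → ℕ[X]
  | 0, _ => 1
  | _ + 1, 0 => 1
  | l + 1, m + 1 => G (l + 1) m + X ^ (m + 1) * G l (m + 1)
termination_by l m => l + m

lemma G_zero_left (m : ℕ) : G 0 m = 1 := by rw [G]
lemma G_zero_right (l : ℕ) : G l 0 = 1 := by cases l <;> rw [G]
lemma G_succ (l m : ℕ) : G (l + 1) (m + 1) = G (l + 1) m + X ^ (m + 1) * G l (m + 1) := by rw [G]

/-- The other `q`-Pascal rule. -/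
lemma G_succ' : ∀ n l m : ℕ, l + m = n →
    G (l + 1) (m + 1) = G l (m + 1) + X ^ (l + 1) * G (l + 1) m := by
  intro n
  induction n with
  | zero =>
    intro l m h
    obtain rfl : l = 0 := by omega
    obtain rfl : m = 0 := by omega
    rw [G_succ, G_zero_left, G_zero_right]
  | succ n ih =>
    intro l m h
    rcases l with _ | l
    · rcases m with _ | m
      · omega
      · have h1 := ih 0 m (by omega)
        have h2 := G_succ 0 m
        rw [G_succ 0 (m + 1)]
        simp only [G_zero_left] at h1 h2 ⊢
        calc _ = (1 + X ^ (0 + 1) * G (0 + 1) m) + X ^ (m + 1 + 1) * 1 := by rw [← h1]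
          _ = 1 + X ^ (0 + 1) * (G (0 + 1) m + X ^ (m + 1) * 1) := by ring
          _ = _ := by rw [← h2]
    · rcases m with _ | m
      · have h1 := ih l 0 (by omega)
        have h2 := G_succ l 0
        rw [G_succ (l + 1) 0]
        simp only [G_zero_right] at h1 h2 ⊢
        calc _ = 1 + X ^ (0 + 1) * (G l (0 + 1) + X ^ (l + 1) * 1) := by rw [← h1]
          _ = (1 + X ^ (0 + 1) * G l (0 + 1)) + X ^ (l + 1 + 1) * 1 := by ring
          _ = _ := by rw [← h2]
      · have h1 := ih (l + 1) m (by omega)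
        have h2 := ih l (m + 1) (by omega)
        have h3 := G_succ l (m + 1)
        have h4 := G_succ (l + 1) m
        rw [G_succ (l + 1) (m + 1)]
        calc _ = (G (l + 1) (m + 1) + X ^ (l + 1 + 1) * G (l + 1 + 1) m) +
              X ^ (m + 1 + 1) * (G l (m + 1 + 1) + X ^ (l + 1) * G (l + 1) (m + 1)) := by
              rw [← h1, ← h2]
          _ = (G (l + 1) (m + 1) + X ^ (m + 1 + 1) * G l (m + 1 + 1)) +
              X ^ (l + 1 + 1) * (G (l + 1 + 1) m + X ^ (m + 1) * G (l + 1) (m + 1)) := by ring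
          _ = _ := by rw [← h3, ← h4]

lemma G_symm : ∀ l m : ℕ, G l m = G m l := by
  intro l
  induction l with
  | zero => intro m; rw [G_zero_left, G_zero_right]
  | succ l ihl =>
    intro m
    induction m with
    | zero => rw [G_zero_left, G_zero_right]
    | succ m ihm => rw [G_succ, G_succ' _ m l rfl, ihm, ihl]

def MS : ℕ → ℕ → Finset (Multiset ℕ)
  | 0, _ => {0}
  | l + 1, 0 => {Multiset.replicate (l + 1) 0}
  | l + 1, m + 1 => MS (l + 1) m ∪ (MS l (m + 1)).image (fun s => (m + 1) ::ₘ s)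
termination_by l m => l + m

lemma mem_MS : ∀ (l m : ℕ) (s : Multiset ℕ), s ∈ MS l m ↔ s.card = l ∧ ∀ i ∈ s, i ≤ m := by
  intro l m
  induction l, m using MS.induct with
  | case1 m => intro s; rw [MS]; constructor
               · intro h; simp at h; simp [h]
               · rintro ⟨h, -⟩; simpa using h
  | case2 l => 
    intro s; rw [MS, Finset.mem_singleton, Multiset.eq_replicate]
    simp
  | case3 l m ih1 ih2 =>
    intro s
    rw [MS, Finset.mem_union, ih1, Finset.mem_image]
    constructor
    · rintro (⟨h1, h2⟩ | ⟨t, ht, rfl⟩)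
      · exact ⟨h1, fun i hi => (h2 i hi).trans (by omega)⟩
      · rw [ih2] at ht
        refine ⟨by simp [ht.1], ?_⟩
        intro i hi
        rcases Multiset.mem_cons.1 hi with rfl | hi
        · exact le_rfl
        · exact ht.2 i hi
    · rintro ⟨h1, h2⟩
      by_cases h : m + 1 ∈ s
      · right
        refine ⟨s.erase (m + 1), ?_, Multiset.cons_erase h⟩
        rw [ih2]
        refine ⟨by rw [Multiset.card_erase_of_mem h, h1]; rfl, fun i hi => h2 i (Multiset.mem_of_mem_erase hi)⟩
      · left
        refine ⟨h1, fun i hi => ?_⟩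
        have := h2 i hi
        have h3 : i ≠ m + 1 := fun e => h (e ▸ hi)
        omega

lemma sum_MS (l m : ℕ) : ∑ s ∈ MS l m, (X : ℕ[X]) ^ s.sum = G l m := by
  induction l, m using MS.induct with
  | case1 m => rw [MS, G]; simp
  | case2 l => rw [MS, G]; simp
  | case3 l m ih1 ih2 =>
    rw [MS, Finset.sum_union, ih1, Finset.sum_image, G_succ, ← ih2, Finset.mul_sum]
    · congr 1
      apply Finset.sum_congr rfl
      intro s _
      rw [Multiset.sum_cons, pow_add]
    · intro a _ b _ h; simpa using h
    · rw [Finset.disjoint_left]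
      intro s h1 h2
      obtain ⟨t, -, rfl⟩ := Finset.mem_image.1 h2
      have := ((mem_MS _ _ _).1 h1).2 (m + 1) (by simp)
      omega

lemma card_MS (l m k : ℕ) : ((MS l m).filter (fun s => s.sum = k)).card = (G l m).coeff k := by
  rw [← sum_MS, finsetSum_coeff, Finset.card_filter]
  apply Finset.sum_congr rfl
  intro s _
  rw [coeff_X_pow]; simp [eq_comm]

lemma rect_eq (k l m : ℕ) : rectPartitions k l m = (G l m).coeff k := by
  rw [← card_MS, rectPartitions, Nat.card_eq_fintype_card, Fintype.card_subtype]
  refine Finset.card_bij' (fun π _ => π.parts + Multiset.replicate (l - π.parts.card) 0)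
    (fun s _ => if h : s.sum = k then Nat.Partition.ofSums k s h else Nat.Partition.indiscrete k) ?_ ?_ ?_ ?_
  · intro π hπ
    simp only [Finset.mem_filter, Finset.mem_univ, true_and] at hπ ⊢
    rw [mem_MS]
    refine ⟨⟨by simp; omega, ?_⟩, by simp [π.parts_sum]⟩
    intro i hi
    rcases Multiset.mem_add.1 hi with hi | hi
    · exact hπ.2 i hi
    · have := Multiset.eq_of_mem_replicate hi; omega
  · intro s hs
    simp only [Finset.mem_filter, Finset.mem_univ, true_and] at hs ⊢
    rw [mem_MS] at hs
    obtain ⟨⟨h1, h2⟩, h3⟩ := hs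
    rw [dif_pos h3]
    simp only [Nat.Partition.ofSums_parts]
    refine ⟨(Multiset.card_le_card (Multiset.filter_le _ _)).trans h1.le, fun i hi => h2 i (Multiset.mem_of_mem_filter hi)⟩
  · intro π hπ
    have h : (π.parts + Multiset.replicate (l - π.parts.card) 0).sum = k := by simp [π.parts_sum]
    rw [dif_pos h]
    ext1
    rw [Nat.Partition.ofSums_parts, Multiset.filter_add]
    have : Multiset.filter (fun x => x ≠ 0) π.parts = π.parts := by
      rw [Multiset.filter_eq_self]; intro a ha; exact (π.parts_pos ha).ne'
    rw [this]
    have : Multiset.filter (fun x => x ≠ 0) (Multiset.replicate (l - π.parts.card) 0) = 0 := by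
      rw [Multiset.filter_eq_nil]; intro a ha; simp [Multiset.eq_of_mem_replicate ha]
    rw [this, add_zero]
  · intro s hs
    simp only [Finset.mem_filter] at hs
    rw [mem_MS] at hs
    obtain ⟨⟨h1, h2⟩, h3⟩ := hs
    rw [dif_pos h3]
    simp only [Nat.Partition.ofSums_parts]
    have h4 := Multiset.filter_add_not (fun x => x ≠ 0) s
    have h5 : Multiset.filter (fun x => ¬ x ≠ 0) s = Multiset.replicate (Multiset.filter (fun x => ¬ x ≠ 0) s).card 0 := by
      rw [Multiset.eq_replicate]; refine ⟨rfl, fun b hb => ?_⟩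
      simpa using (Multiset.mem_filter.1 hb).2
    have h6 : l - (Multiset.filter (fun x => x ≠ 0) s).card = (Multiset.filter (fun x => ¬ x ≠ 0) s).card := by
      have := congrArg Multiset.card h4
      rw [Multiset.card_add, h1] at this
      omega
    rw [h6, ← h5, h4]

/-- subsets -/
lemma sum_SS (l m : ℕ) : ∑ S ∈ Finset.powersetCard l (Finset.range (l + m)), (X : ℕ[X]) ^ (∑ i ∈ S, i) =
    X ^ (∑ i ∈ Finset.range l, i) * G l m := by
  induction l, m using MS.induct with
  | case1 m => rw [G]; simp
  | case2 l =>
    rw [G, add_zero]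
    have : Finset.powersetCard (l+1) (Finset.range (l+1)) = {Finset.range (l+1)} := by
      conv_lhs => rw [show l + 1 = (Finset.range (l+1)).card by simp]
      rw [Finset.card_range, ← Finset.powersetCard_self, Finset.card_range]
    rw [this]; simp
  | case3 l m ih1 ih2 =>
    have e : l + 1 + (m + 1) = (l + 1 + m) + 1 := by ring
    rw [e, Finset.range_add_one, Finset.powersetCard_succ_insert (by simp), Finset.sum_union, ih1, Finset.sum_image, G_succ, mul_add]
    · congr 1
      have e2 : l + 1 + m = l + (m + 1) := by ring
      have : ∀ S ∈ Finset.powersetCard l (Finset.range (l + 1 + m)), (X : ℕ[X]) ^ (∑ i ∈ insert (l + 1 + m) S, i) = X ^ (l + 1 + m) * X ^ (∑ i ∈ S, i) := by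
        intro S hS
        rw [Finset.sum_insert, pow_add]
        intro h
        have := (Finset.mem_powersetCard.1 hS).1 h
        simp at this
      rw [Finset.sum_congr rfl this, ← Finset.mul_sum, e2, ih2, Finset.sum_range_succ]
      ring
    · intro a ha b hb h
      have ha' : l + 1 + m ∉ a := fun h => by
        have := (Finset.mem_powersetCard.1 ha).1 h
        simp at this
      have hb' : l + 1 + m ∉ b := fun h => by
        have := (Finset.mem_powersetCard.1 hb).1 h
        simp at this
      rw [← Finset.erase_insert ha', ← Finset.erase_insert hb']
      exact congrArg (fun s => Finset.erase s (l+1+m)) h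
    · rw [Finset.disjoint_left]
      intro s h1 h2
      obtain ⟨t, -, rfl⟩ := Finset.mem_image.1 h2
      have := (Finset.mem_powersetCard.1 h1).1 (Finset.mem_insert_self _ _)
      simp at this

lemma card_SS (l m k : ℕ) : ((Finset.powersetCard l (Finset.range (l + m))).filter
    (fun S => ∑ i ∈ S, i = k + ∑ i ∈ Finset.range l, i)).card = (G l m).coeff k := by
  have h := congrArg (fun p => coeff p (k + ∑ i ∈ Finset.range l, i)) (sum_SS l m)
  simp only [coeff_X_pow_mul] at h
  rw [← h, finsetSum_coeff, Finset.card_filter]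
  apply Finset.sum_congr rfl
  intro s _
  rw [coeff_X_pow]; simp [eq_comm]

end KQ

namespace KQ

lemma sl2_iter {V : Type*} [AddCommGroup V] [Module ℚ V] (X Y : V →ₗ[ℚ] V)
    (P : ℕ → Submodule ℚ V) (N : ℕ)
    (hY : ∀ j, ∀ v ∈ P j, Y v ∈ P (j + 1))
    (hc : ∀ j, ∀ v ∈ P j, X (Y v) = Y (X v) + ((N : ℚ) - 2 * j) • v)
    (j : ℕ) (u : V) (hu : u ∈ P j) (i : ℕ) :
    (Y^[i] u ∈ P (j + i)) ∧
    X (Y^[i + 1] u) = Y^[i + 1] (X u) + (((i : ℚ) + 1) * ((N : ℚ) - 2 * j - i)) • Y^[i] u := by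
  induction i with
  | zero => simp [hu, hc j u hu]
  | succ i ih =>
    obtain ⟨h1, h2⟩ := ih
    have h3 : Y^[i + 1] u ∈ P (j + (i + 1)) := by
      rw [Function.iterate_succ_apply']; exact hY _ _ h1
    refine ⟨h3, ?_⟩
    rw [Function.iterate_succ_apply' Y (i + 1) u, hc _ _ h3, h2, map_add, map_smul,
      ← Function.iterate_succ_apply' Y i u, ← Function.iterate_succ_apply' Y (i + 1) (X u), add_assoc, ← add_smul]
    congr 2
    push_cast; ring

lemma sl2_surj {V : Type*} [AddCommGroup V] [Module ℚ V] (X Y : V →ₗ[ℚ] V)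
    (P : ℕ → Submodule ℚ V) (N : ℕ)
    (hX0 : ∀ v ∈ P 0, X v = 0)
    (hX : ∀ j, ∀ v ∈ P (j + 1), X v ∈ P j)
    (hY : ∀ j, ∀ v ∈ P j, Y v ∈ P (j + 1))
    (hc : ∀ j, ∀ v ∈ P j, X (Y v) = Y (X v) + ((N : ℚ) - 2 * j) • v)
    (j : ℕ) (hj : 2 * j < N) (v : V) (hv : v ∈ P j) :
    ∃ u ∈ P (j + 1), X u = v := by
  have hXi : ∀ i, i ≤ j → X^[i] v ∈ P (j - i) := by
    intro i
    induction i with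
    | zero => intro _; simpa using hv
    | succ i ih =>
      intro h
      rw [Function.iterate_succ_apply']
      apply hX
      have := ih (by omega)
      rwa [show j - i = j - (i + 1) + 1 by omega] at this
  have key : ∀ d i, i + d = j + 1 → Y^[i] (X^[i] v) ∈ (P (j + 1)).map X := by
    intro d
    induction d with
    | zero =>
      intro i hi
      obtain rfl : i = j + 1 := by omega
      have h0 : X^[j] v ∈ P 0 := by simpa using hXi j le_rfl
      rw [Function.iterate_succ_apply' X, hX0 _ h0, Function.iterate_fixed (map_zero Y)]
      exact zero_mem _
    | succ d ih =>
      intro i hi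
      have h1 := ih (i + 1) (by omega)
      obtain ⟨-, h2⟩ := sl2_iter X Y P N hY hc (j - i) (X^[i] v) (hXi i (by omega)) i
      obtain ⟨h4, -⟩ := sl2_iter X Y P N hY hc (j - i) (X^[i] v) (hXi i (by omega)) (i + 1)
      rw [show j - i + (i + 1) = j + 1 by omega] at h4
      rw [← Function.iterate_succ_apply' X] at h2
      set c : ℚ := ((i : ℚ) + 1) * ((N : ℚ) - 2 * ((j - i : ℕ) : ℚ) - i) with hcdef
      have hcpos : 0 < c := by
        have e : ((j - i : ℕ) : ℚ) = (j : ℚ) - i := by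
          rw [Nat.cast_sub (by omega)]
        have : (2 * j : ℚ) < N := by exact_mod_cast hj
        have hi0 : (0 : ℚ) ≤ i := Nat.cast_nonneg i
        rw [hcdef, e]
        apply mul_pos <;> linarith
      have h5 : Y^[i] (X^[i] v) = c⁻¹ • (X (Y^[i + 1] (X^[i] v)) - Y^[i + 1] (X^[i + 1] v)) := by
        rw [h2, add_sub_cancel_left, smul_smul, inv_mul_cancel₀ hcpos.ne', one_smul]
      rw [h5]
      exact Submodule.smul_mem _ _ (Submodule.sub_mem _ (Submodule.mem_map_of_mem h4) h1)
  have := key (j + 1) 0 (by omega)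
  simpa using this

end KQ

namespace KQ
open MvPolynomial
open scoped Pointwise

/-- exponent vectors of degree `l`, weight `k`, in the variables `x_0, …, x_m`. -/
def Aset (l m k : ℕ) : Set (ℕ →₀ ℕ) :=
  {a | (Finsupp.toMultiset a).card = l ∧ (∀ i ∈ Finsupp.toMultiset a, i ≤ m) ∧
    (Finsupp.toMultiset a).sum = k}

noncomputable def PA (l m k : ℕ) : Submodule ℚ (MvPolynomial ℕ ℚ) :=
  restrictSupport ℚ (Aset l m k)

lemma Aset_ncard (l m k : ℕ) : Nat.card (Aset l m k) = (G l m).coeff k := by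
  rw [← card_MS, ← Nat.card_eq_finsetCard]
  apply Nat.card_congr
  refine (Multiset.toFinsupp (α := ℕ)).symm.toEquiv.subtypeEquiv ?_
  intro a
  simp only [Finset.mem_filter, mem_MS, Aset, Set.mem_ofPred_eq, and_assoc]
  rfl

instance (l m k : ℕ) : Finite (Aset l m k) := by
  have : Finite {x // x ∈ (MS l m).filter (fun s => s.sum = k)} := inferInstance
  refine Finite.of_injective (β := {x // x ∈ (MS l m).filter (fun s => s.sum = k)})
    (fun a => ⟨Finsupp.toMultiset a.1, ?_⟩) ?_
  · obtain ⟨h1, h2, h3⟩ := a.2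
    simp only [Finset.mem_filter, mem_MS]
    exact ⟨⟨h1, h2⟩, h3⟩
  · intro a b h
    simp only [Subtype.mk.injEq] at h
    exact Subtype.ext ((Multiset.toFinsupp (α := ℕ)).symm.injective h)

instance (l m k : ℕ) : Module.Finite ℚ (PA l m k) :=
  Module.Finite.of_basis (basisRestrictSupport ℚ (Aset l m k))

lemma PA_finrank (l m k : ℕ) : Module.finrank ℚ (PA l m k) = (G l m).coeff k := by
  rw [← Aset_ncard]
  exact Module.finrank_eq_nat_card_basis (basisRestrictSupport ℚ (Aset l m k))

lemma PA_le (l m k : ℕ) (Q : Submodule ℚ (MvPolynomial ℕ ℚ)) (L : MvPolynomial ℕ ℚ →ₗ[ℚ] MvPolynomial ℕ ℚ)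
    (h : ∀ a ∈ Aset l m k, L (monomial a 1) ∈ Q) : ∀ v ∈ PA l m k, L v ∈ Q := by
  intro v hv
  have : PA l m k ≤ Q.comap L := by
    rw [PA, restrictSupport_eq_span, Submodule.span_le]
    rintro _ ⟨a, ha, rfl⟩
    exact h a ha
  exact this hv

noncomputable def XA : Derivation ℚ (MvPolynomial ℕ ℚ) (MvPolynomial ℕ ℚ) :=
  mkDerivation ℚ (fun i => if i = 0 then 0 else X (i - 1))

noncomputable def YA (m : ℕ) : Derivation ℚ (MvPolynomial ℕ ℚ) (MvPolynomial ℕ ℚ) :=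
  mkDerivation ℚ (fun i => C (((i : ℚ) + 1) * ((m : ℚ) - i)) * X (i + 1))

lemma comm_eq (m : ℕ) : ⁅XA, YA m⁆ = mkDerivation ℚ (fun i : ℕ => C ((m : ℚ) - 2 * (i : ℚ)) * X i) := by
  apply MvPolynomial.derivation_ext
  intro i
  rw [Derivation.commutator_apply, mkDerivation_X]
  have h1 : YA m (X i) = C (((i : ℚ) + 1) * ((m : ℚ) - i)) * X (i + 1) := mkDerivation_X _ _ _
  have h2 : XA (X i) = if i = 0 then 0 else X (i - 1) := mkDerivation_X _ _ _
  have h3 : XA (X (i + 1)) = X i := by simp [XA, mkDerivation_X]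
  rw [h1, h2, Derivation.leibniz, h3]
  have h4 : XA (C (((i : ℚ) + 1) * ((m : ℚ) - i))) = 0 := by
    rw [← MvPolynomial.algebraMap_eq]; exact Derivation.map_algebraMap _ _
  rw [h4]
  rcases i with _ | i
  · simp
  · have h5 : YA m (X i) = C (((i : ℚ) + 1) * ((m : ℚ) - i)) * X (i + 1) := mkDerivation_X _ _ _
    simp only [Nat.add_eq_zero_iff, one_ne_zero, and_false, if_false, Nat.add_sub_cancel, h5]
    simp only [smul_eq_mul, mul_zero, add_zero, ← sub_mul, ← C_sub]
    congr 2
    push_cast; ring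

lemma split_single (a : ℕ →₀ ℕ) (i : ℕ) (hi : i ∈ a.support) :
    Finsupp.toMultiset a = Finsupp.toMultiset (a - Finsupp.single i 1) + {i} := by
  have : a = (a - Finsupp.single i 1) + Finsupp.single i 1 := by
    rw [tsub_add_cancel_of_le]
    rw [Finsupp.single_le_iff]
    exact Nat.one_le_iff_ne_zero.2 (Finsupp.mem_support_iff.1 hi)
  conv_lhs => rw [this]
  rw [map_add, Finsupp.toMultiset_single, one_smul]

lemma YA_mem (l m k : ℕ) : ∀ v ∈ PA l m k, YA m v ∈ PA l m (k + 1) := by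
  apply PA_le l m k _ (YA m).toLinearMap
  intro a ha
  change YA m (monomial a 1) ∈ _
  rw [YA, mkDerivation_monomial, one_smul]
  apply Submodule.sum_mem
  intro i hi
  obtain ⟨h1, h2, h3⟩ := ha
  have hs := split_single a i hi
  rw [hs] at h1 h2 h3
  by_cases him : i = m
  · simp only [him, sub_self, mul_zero, C_0, zero_mul, smul_zero]
    exact zero_mem _
  simp only [smul_eq_mul]
  rw [X, C_mul_monomial, monomial_mul]
  apply (monomial_mem_restrictSupport ℚ).2
  left
  simp only [Aset, Set.mem_ofPred_eq, map_add, Finsupp.toMultiset_single, one_smul, Multiset.card_add, Multiset.card_singleton,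
    Multiset.sum_add, Multiset.sum_singleton] at h1 h3 ⊢
  refine ⟨h1, ?_, by omega⟩
  intro j hj
  rcases Multiset.mem_add.1 hj with hj | hj
  · exact h2 j (Multiset.mem_add.2 (Or.inl hj))
  · have := h2 i (by simp)
    have := Multiset.mem_singleton.1 hj
    omega

lemma XA_mem (l m k : ℕ) : ∀ v ∈ PA l m (k + 1), XA v ∈ PA l m k := by
  apply PA_le l m (k + 1) _ XA.toLinearMap
  intro a ha
  change XA (monomial a 1) ∈ _
  rw [XA, mkDerivation_monomial, one_smul]
  apply Submodule.sum_mem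
  intro i hi
  obtain ⟨h1, h2, h3⟩ := ha
  have hs := split_single a i hi
  rw [hs] at h1 h2 h3
  by_cases him : i = 0
  · simp only [him, if_true, smul_zero]
    exact zero_mem _
  simp only [smul_eq_mul, him, if_false]
  rw [X, monomial_mul]
  apply (monomial_mem_restrictSupport ℚ).2
  left
  simp only [Aset, Set.mem_ofPred_eq, map_add, Finsupp.toMultiset_single, one_smul, Multiset.card_add, Multiset.card_singleton,
    Multiset.sum_add, Multiset.sum_singleton] at h1 h3 ⊢
  refine ⟨h1, ?_, by omega⟩
  intro j hj
  rcases Multiset.mem_add.1 hj with hj | hj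
  · exact h2 j (Multiset.mem_add.2 (Or.inl hj))
  · have := h2 i (by simp)
    have := Multiset.mem_singleton.1 hj
    omega

lemma XA_zero (l m : ℕ) : ∀ v ∈ PA l m 0, XA v = 0 := by
  have := PA_le l m 0 ⊥ XA.toLinearMap ?_
  · intro v hv; simpa using this v hv
  intro a ha
  change XA (monomial a 1) ∈ _
  rw [XA, mkDerivation_monomial, one_smul]
  apply Submodule.sum_mem
  intro i hi
  obtain ⟨h1, h2, h3⟩ := ha
  have hs := split_single a i hi
  rw [hs] at h3
  simp only [Multiset.sum_add, Multiset.sum_singleton] at h3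
  have : i = 0 := by omega
  simp [this]

lemma comm_mem (l m k : ℕ) (v : MvPolynomial ℕ ℚ) (hv : v ∈ PA l m k) :
    XA (YA m v) = YA m (XA v) + (((l * m : ℕ) : ℚ) - 2 * k) • v := by
  have key : ∀ v ∈ PA l m k, ((⁅XA, YA m⁆.toLinearMap : MvPolynomial ℕ ℚ →ₗ[ℚ] MvPolynomial ℕ ℚ) - (((l * m : ℕ) : ℚ) - 2 * k) • (LinearMap.id : MvPolynomial ℕ ℚ →ₗ[ℚ] MvPolynomial ℕ ℚ)) v ∈
      (⊥ : Submodule ℚ (MvPolynomial ℕ ℚ)) := by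
    apply PA_le
    intro a ha
    have h0 : ⁅XA, YA m⁆ (monomial a 1) = (((l * m : ℕ) : ℚ) - 2 * k) • monomial a 1 := by
      rw [comm_eq, mkDerivation_monomial, one_smul]
      have : ∀ i ∈ a.support, (monomial (a - Finsupp.single i 1)) ((a i : ℕ) : ℚ) • (C ((m : ℚ) - 2 * i) * X i) =
          monomial a (((a i : ℕ) : ℚ) * ((m : ℚ) - 2 * i)) := by
        intro i hi
        rw [smul_eq_mul, X, C_mul_monomial, monomial_mul, mul_one, tsub_add_cancel_of_le]
        rw [Finsupp.single_le_iff]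
        exact Nat.one_le_iff_ne_zero.2 (Finsupp.mem_support_iff.1 hi)
      rw [Finsupp.sum, Finset.sum_congr rfl this, ← map_sum, MvPolynomial.smul_monomial, smul_eq_mul, mul_one]
      congr 1
      obtain ⟨h1, h2, h3⟩ := ha
      rw [Finsupp.card_toMultiset] at h1
      rw [Finsupp.toMultiset_apply, Finsupp.sum, Multiset.sum_sum] at h3
      rw [← h1, ← h3, Finsupp.sum]
      simp only [Multiset.sum_nsmul, Multiset.sum_singleton, smul_eq_mul, id]
      push_cast
      rw [Finset.sum_mul, Finset.mul_sum, ← Finset.sum_sub_distrib]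
      apply Finset.sum_congr rfl
      intro i _
      ring
    simp only [LinearMap.sub_apply, LinearMap.smul_apply, LinearMap.id_apply, Submodule.mem_bot]
    change ⁅XA, YA m⁆ (monomial a 1) - _ = 0
    rw [h0, sub_self]
  have := key v hv
  simp only [LinearMap.sub_apply, LinearMap.smul_apply, LinearMap.id_apply, Submodule.mem_bot] at this
  change ⁅XA, YA m⁆ v - _ = 0 at this
  rw [Derivation.commutator_apply] at this
  rw [← sub_eq_zero, ← this]
  abel

lemma XA_surj (l m j : ℕ) (hj : 2 * j < l * m) (v : MvPolynomial ℕ ℚ) (hv : v ∈ PA l m j) :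
    ∃ u ∈ PA l m (j + 1), XA u = v :=
  sl2_surj XA.toLinearMap (YA m).toLinearMap (PA l m) (l * m) (XA_zero l m) (XA_mem l m) (YA_mem l m)
    (comm_mem l m) j hj v hv

noncomputable def KA (l m k : ℕ) : Submodule ℚ (MvPolynomial ℕ ℚ) :=
  PA l m k ⊓ LinearMap.ker XA.toLinearMap

instance (l m k : ℕ) : Module.Finite ℚ (KA l m k) :=
  Submodule.finiteDimensional_inf_left _ _

noncomputable def D (l m k : ℕ) : ℕ := Module.finrank ℚ (KA l m k)

lemma D_zero (l m : ℕ) : D l m 0 = (G l m).coeff 0 := by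
  rw [D, ← PA_finrank]
  have : KA l m 0 = PA l m 0 := by
    apply inf_eq_left.2
    intro v hv
    exact XA_zero l m v hv
  rw [this]

lemma D_succ (l m k : ℕ) (h : 2 * (k + 1) ≤ l * m) :
    D l m (k + 1) + (G l m).coeff k = (G l m).coeff (k + 1) := by
  rw [← PA_finrank, ← PA_finrank]
  let f : PA l m (k + 1) →ₗ[ℚ] PA l m k := XA.toLinearMap.restrict (XA_mem l m k)
  have hf : Function.Surjective f := by
    rintro ⟨v, hv⟩
    obtain ⟨u, hu, huv⟩ := XA_surj l m k (by omega) v hv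
    exact ⟨⟨u, hu⟩, Subtype.ext huv⟩
  have h1 := LinearMap.finrank_range_add_finrank_ker f
  rw [LinearMap.range_eq_top.2 hf, finrank_top] at h1
  have h2 : Module.finrank ℚ (LinearMap.ker f) = D l m (k + 1) := by
    have e : LinearMap.ker f = (KA l m (k+1)).comap (PA l m (k + 1)).subtype := by
      ext ⟨x, hx⟩
      simp only [LinearMap.mem_ker, Submodule.mem_comap, KA, Submodule.mem_inf, f]
      constructor
      · intro h; exact ⟨hx, congrArg Subtype.val h⟩
      · rintro ⟨-, h⟩; exact Subtype.ext h
    rw [e, D]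
    exact LinearEquiv.finrank_eq (Submodule.comapSubtypeEquivOfLe inf_le_left)
  omega

lemma D_mul (l₁ l₂ m k₁ k₂ : ℕ) (h : 1 ≤ D l₂ m k₂) : D l₁ m k₁ ≤ D (l₁ + l₂) m (k₁ + k₂) := by
  obtain ⟨⟨g, hg⟩, hg0⟩ : ∃ g : KA l₂ m k₂, g ≠ 0 := by
    have : Nontrivial (KA l₂ m k₂) := Module.finrank_pos_iff.1 h
    exact exists_ne 0
  have hg0' : g ≠ 0 := fun h => hg0 (Subtype.ext h)
  have hmem : ∀ f ∈ KA l₁ m k₁, f * g ∈ KA (l₁ + l₂) m (k₁ + k₂) := by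
    rintro f ⟨hf1, hf2⟩
    obtain ⟨hg1, hg2⟩ := hg
    refine ⟨?_, ?_⟩
    · have h1 : f * g ∈ restrictSupport ℚ (Aset l₁ m k₁ + Aset l₂ m k₂) := by
        rw [restrictSupport_add]; exact Submodule.mul_mem_mul hf1 hg1
      refine restrictSupport_mono ℚ ?_ h1
      rintro _ ⟨a, ⟨a1, a2, a3⟩, b, ⟨b1, b2, b3⟩, rfl⟩
      simp only [Aset, Set.mem_ofPred_eq, map_add, Multiset.card_add, Multiset.sum_add, Multiset.mem_add]
      refine ⟨by omega, ?_, by omega⟩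
      rintro i (hi | hi)
      · exact a2 i hi
      · exact b2 i hi
    · have e1 : XA f = 0 := hf2
      have e2 : XA g = 0 := hg2
      change XA (f * g) = 0
      rw [Derivation.leibniz, e1, e2]; simp
  let φ : KA l₁ m k₁ →ₗ[ℚ] KA (l₁ + l₂) m (k₁ + k₂) :=
    (LinearMap.mulRight ℚ g).restrict hmem
  apply LinearMap.finrank_le_finrank_of_injective (f := φ)
  intro a b hab
  have := congrArg Subtype.val hab
  exact Subtype.ext (mul_right_cancel₀ hg0' this)

lemma D_symm (l m k : ℕ) (h : 2 * k ≤ l * m) : D l m k = D m l k := by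
  rcases k with _ | k
  · rw [D_zero, D_zero, G_symm]
  · have h1 := D_succ l m k h
    have h2 := D_succ m l k (by rwa [mul_comm m l])
    rw [G_symm m l] at h2
    omega

end KQ

namespace KQ

/-! ### Second model: subsets of a chain -/

def sg (s : ℕ) (S : Finset ℕ) : Finset ℕ := S.map (Equiv.swap s (s + 1)).toEmbedding

lemma mem_sg (s j : ℕ) (S : Finset ℕ) : j ∈ sg s S ↔ Equiv.swap s (s + 1) j ∈ S := by
  simp [sg, Finset.mem_map_equiv]

lemma sg_left (s : ℕ) (S : Finset ℕ) : s ∈ sg s S ↔ s + 1 ∈ S := by simp [mem_sg]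
lemma sg_right (s : ℕ) (S : Finset ℕ) : s + 1 ∈ sg s S ↔ s ∈ S := by simp [mem_sg]
lemma sg_other (s j : ℕ) (S : Finset ℕ) (h1 : j ≠ s) (h2 : j ≠ s + 1) : j ∈ sg s S ↔ j ∈ S := by
  rw [mem_sg, Equiv.swap_apply_of_ne_of_ne h1 h2]

lemma sg_sg (s : ℕ) (S : Finset ℕ) : sg s (sg s S) = S := by
  ext j; simp [mem_sg]

lemma sg_comm (s t : ℕ) (S : Finset ℕ) (h1 : s ≠ t) (h2 : s ≠ t + 1) (h3 : t ≠ s + 1) :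
    sg s (sg t S) = sg t (sg s S) := by
  ext j
  by_cases a1 : j = s
  · subst a1
    rw [sg_left, sg_other _ _ _ (by omega) (by omega), sg_other _ _ _ (by omega) (by omega), sg_left]
  by_cases a2 : j = s + 1
  · subst a2
    rw [sg_right, sg_other _ _ _ (by omega) (by omega), sg_other _ _ _ (by omega) (by omega), sg_right]
  rw [sg_other s j _ a1 a2]
  by_cases a3 : j = t
  · subst a3
    rw [sg_left, sg_left, sg_other _ _ _ (by omega) (by omega)]
  by_cases a4 : j = t + 1
  · subst a4
    rw [sg_right, sg_right, sg_other _ _ _ (by omega) (by omega)]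
  rw [sg_other _ _ _ a3 a4, sg_other _ _ _ a3 a4, sg_other _ _ _ a1 a2]

lemma sum_sg (s : ℕ) (S : Finset ℕ) (h1 : s ∈ S) (h2 : s + 1 ∉ S) :
    ∑ i ∈ sg s S, i = ∑ i ∈ S, i + 1 := by
  have e : sg s S = insert (s + 1) (S.erase s) := by
    ext j
    by_cases a1 : j = s
    · subst a1; rw [sg_left]; simp [h2]
    by_cases a2 : j = s + 1
    · subst a2; rw [sg_right]; simp [h1]
    rw [sg_other _ _ _ a1 a2]; simp [a1, a2]
  rw [e, Finset.sum_insert (by simp [h2]), ← Finset.sum_erase_add _ _ h1]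
  omega

lemma card_sg (s : ℕ) (S : Finset ℕ) : (sg s S).card = S.card := by simp [sg]

def Om (r k : ℕ) : Finset (Finset ℕ) :=
  ((Finset.range (r + r)).powersetCard r).filter (fun S => ∑ i ∈ S, i = k + ∑ i ∈ Finset.range r, i)

lemma mem_Om (r k : ℕ) (S : Finset ℕ) : S ∈ Om r k ↔
    ((∀ j ∈ S, j < r + r) ∧ S.card = r) ∧ ∑ i ∈ S, i = k + ∑ i ∈ Finset.range r, i := by
  simp only [Om, Finset.mem_filter, Finset.mem_powersetCard, Finset.subset_iff, Finset.mem_range]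

lemma sg_mem_Om (r k s : ℕ) (S : Finset ℕ) (hs : s < r + r - 1) (h1 : s ∈ S) (h2 : s + 1 ∉ S) :
    sg s S ∈ Om r (k + 1) ↔ S ∈ Om r k := by
  rw [mem_Om, mem_Om, card_sg, sum_sg s S h1 h2]
  have : (∀ j ∈ sg s S, j < r + r) ↔ (∀ j ∈ S, j < r + r) := by
    constructor
    · intro h j hj
      by_cases a1 : j = s
      · omega
      by_cases a2 : j = s + 1
      · omega
      exact h j ((sg_other _ _ _ a1 a2).2 hj)
    · intro h j hj
      by_cases a1 : j = s
      · omega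
      by_cases a2 : j = s + 1
      · omega
      exact h j ((sg_other _ _ _ a1 a2).1 hj)
  rw [this]
  constructor
  · rintro ⟨h, h'⟩; exact ⟨h, by omega⟩
  · rintro ⟨h, h'⟩; exact ⟨h, by omega⟩

lemma sg_mem_Om' (r k s : ℕ) (S : Finset ℕ) (hs : s < r + r - 1) (h1 : s ∉ S) (h2 : s + 1 ∈ S) :
    sg s S ∈ Om r k ↔ S ∈ Om r (k + 1) := by
  have := sg_mem_Om r k s (sg s S) hs ((sg_left _ _).2 h2) (fun h => h1 ((sg_right _ _).1 h))
  rw [sg_sg] at this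
  exact this.symm

noncomputable def XB (r : ℕ) : (Finset ℕ → ℚ) →ₗ[ℚ] (Finset ℕ → ℚ) where
  toFun f S := ∑ s ∈ Finset.range (r + r - 1), if s ∈ S ∧ s + 1 ∉ S then f (sg s S) else 0
  map_add' f g := by
    ext S
    simp only [Pi.add_apply, ← Finset.sum_add_distrib]
    apply Finset.sum_congr rfl
    intro s _
    split_ifs <;> simp
  map_smul' c f := by
    ext S
    simp only [Pi.smul_apply, smul_eq_mul, Finset.mul_sum, RingHom.id_apply]
    apply Finset.sum_congr rfl
    intro s _
    split_ifs <;> simp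

def ww (r : ℕ) (s : ℕ) : ℚ := (s : ℚ) * ((r + r : ℕ) - s)

noncomputable def YB (r : ℕ) : (Finset ℕ → ℚ) →ₗ[ℚ] (Finset ℕ → ℚ) where
  toFun f S := ∑ s ∈ Finset.range (r + r - 1), if s ∉ S ∧ s + 1 ∈ S then ww r (s + 1) * f (sg s S) else 0
  map_add' f g := by
    ext S
    simp only [Pi.add_apply, ← Finset.sum_add_distrib]
    apply Finset.sum_congr rfl
    intro s _
    split_ifs <;> simp [mul_add]
  map_smul' c f := by
    ext S
    simp only [Pi.smul_apply, smul_eq_mul, Finset.mul_sum, RingHom.id_apply]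
    apply Finset.sum_congr rfl
    intro s _
    split_ifs
    · ring
    · simp

lemma XB_apply (r : ℕ) (f : Finset ℕ → ℚ) (S : Finset ℕ) :
    XB r f S = ∑ s ∈ Finset.range (r + r - 1), if s ∈ S ∧ s + 1 ∉ S then f (sg s S) else 0 := by
  rfl

lemma YB_apply (r : ℕ) (f : Finset ℕ → ℚ) (S : Finset ℕ) :
    YB r f S = ∑ s ∈ Finset.range (r + r - 1), if s ∉ S ∧ s + 1 ∈ S then ww r (s + 1) * f (sg s S) else 0 := by
  rfl

lemma diag_sum (r k : ℕ) (S : Finset ℕ) (hS : S ∈ Om r k) :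
    (∑ s ∈ Finset.range (r + r - 1), ((if s ∈ S ∧ s + 1 ∉ S then ww r (s + 1) else 0) -
      (if s ∉ S ∧ s + 1 ∈ S then ww r (s + 1) else 0))) = ((r * r : ℕ) : ℚ) - 2 * k := by
  obtain ⟨⟨h1, h2⟩, h3⟩ := (mem_Om _ _ _).1 hS
  rcases Nat.eq_zero_or_pos r with hr | hr
  · subst hr
    have : S = ∅ := Finset.card_eq_zero.1 h2
    subst this
    simp at h3
    simp [← h3]
  obtain ⟨n, hn⟩ : ∃ n, r + r = n + 1 := ⟨r + r - 1, by omega⟩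
  have a1 : ∀ s ∈ Finset.range (r + r - 1), ((if s ∈ S ∧ s + 1 ∉ S then ww r (s + 1) else 0) -
      (if s ∉ S ∧ s + 1 ∈ S then ww r (s + 1) else 0)) =
      (if s ∈ S then ww r (s + 1) else 0) - (if s + 1 ∈ S then ww r (s + 1) else 0) := by
    intro s _
    by_cases b1 : s ∈ S <;> by_cases b2 : s + 1 ∈ S <;> simp [b1, b2]
  rw [Finset.sum_congr rfl a1, Finset.sum_sub_distrib]
  have a2 : ∑ s ∈ Finset.range (r + r - 1), (if s ∈ S then ww r (s + 1) else 0) =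
      ∑ s ∈ Finset.range (r + r), (if s ∈ S then ww r (s + 1) else 0) := by
    rw [hn, Finset.sum_range_succ, Nat.add_sub_cancel]
    have : ww r (n + 1) = 0 := by simp [ww, hn]
    simp [this]
  have a3 : ∑ s ∈ Finset.range (r + r - 1), (if s + 1 ∈ S then ww r (s + 1) else 0) =
      ∑ s ∈ Finset.range (r + r), (if s ∈ S then ww r s else 0) := by
    rw [hn, Finset.sum_range_succ', Nat.add_sub_cancel]
    have : ww r 0 = 0 := by simp [ww]
    simp [this]
  rw [a2, a3, ← Finset.sum_filter, ← Finset.sum_filter]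
  have a4 : (Finset.range (r + r)).filter (fun s => s ∈ S) = S := by
    ext j; simp only [Finset.mem_filter, Finset.mem_range]
    exact ⟨fun h => h.2, fun h => ⟨h1 j h, h⟩⟩
  rw [a4, ← Finset.sum_sub_distrib]
  have a5 : ∀ s ∈ S, ww r (s + 1) - ww r s = ((r + r : ℕ) : ℚ) - 1 - 2 * (s : ℚ) := by
    intro s _
    simp only [ww]; push_cast; ring
  rw [Finset.sum_congr rfl a5, Finset.sum_sub_distrib, Finset.sum_const, h2, ← Finset.mul_sum, ← Nat.cast_sum, h3]
  have a6 := Finset.sum_range_id_mul_two r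
  have a7 : ((∑ i ∈ Finset.range r, i : ℕ) : ℚ) * 2 = r * (r - 1) := by
    rw [← Nat.cast_pred hr]; exact_mod_cast a6
  simp only [nsmul_eq_mul]
  push_cast at a7 ⊢
  linarith

lemma comm_B (r k : ℕ) (f : Finset ℕ → ℚ) (hf : ∀ S, S ∉ Om r k → f S = 0) :
    XB r (YB r f) = YB r (XB r f) + (((r * r : ℕ) : ℚ) - 2 * k) • f := by
  ext S
  have e1 : XB r (YB r f) S = ∑ s ∈ Finset.range (r + r - 1), ∑ t ∈ Finset.range (r + r - 1),
      if (s ∈ S ∧ s + 1 ∉ S) ∧ (t ∉ sg s S ∧ t + 1 ∈ sg s S) then ww r (t + 1) * f (sg t (sg s S)) else 0 := by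
    rw [XB_apply]
    apply Finset.sum_congr rfl
    intro s _
    rw [YB_apply]
    by_cases h : s ∈ S ∧ s + 1 ∉ S
    · simp only [h, true_and, if_true, not_false_eq_true, and_self]
    · simp only [h, false_and, if_false, Finset.sum_const_zero]
  have e2 : YB r (XB r f) S = ∑ s ∈ Finset.range (r + r - 1), ∑ t ∈ Finset.range (r + r - 1),
      if (t ∉ S ∧ t + 1 ∈ S) ∧ (s ∈ sg t S ∧ s + 1 ∉ sg t S) then ww r (t + 1) * f (sg s (sg t S)) else 0 := by
    rw [YB_apply, Finset.sum_comm]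
    apply Finset.sum_congr rfl
    intro s _
    rw [XB_apply]
    by_cases h : s ∉ S ∧ s + 1 ∈ S
    · simp only [h, true_and, if_true, not_false_eq_true, and_self, Finset.mul_sum, mul_ite, mul_zero]
    · simp only [h, false_and, if_false, Finset.sum_const_zero]
  have e3 : ∀ s ∈ Finset.range (r + r - 1), ∀ t ∈ Finset.range (r + r - 1),
      (if (s ∈ S ∧ s + 1 ∉ S) ∧ (t ∉ sg s S ∧ t + 1 ∈ sg s S) then ww r (t + 1) * f (sg t (sg s S)) else 0) =
      (if (t ∉ S ∧ t + 1 ∈ S) ∧ (s ∈ sg t S ∧ s + 1 ∉ sg t S) then ww r (t + 1) * f (sg s (sg t S)) else 0) +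
      (if s = t then ((if s ∈ S ∧ s + 1 ∉ S then ww r (s + 1) else 0) -
      (if s ∉ S ∧ s + 1 ∈ S then ww r (s + 1) else 0)) * f S else 0) := by
    intro s _ t _
    by_cases h1 : s = t
    · subst h1
      simp only [sg_left, sg_right, sg_sg, if_true]
      by_cases b1 : s ∈ S <;> by_cases b2 : s + 1 ∈ S <;> simp [b1, b2]
    rw [if_neg h1, add_zero]
    by_cases h2 : t = s + 1
    · subst h2
      rw [if_neg, if_neg]
      · rw [sg_left]; tauto
      · rw [sg_right]; tauto
    by_cases h3 : s = t + 1
    · subst h3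
      rw [if_neg, if_neg]
      · rw [sg_right]; tauto
      · rw [sg_left]; tauto
    apply if_congr _ (by rw [sg_comm s t S h1 h3 h2]) rfl
    rw [sg_other s t _ (by omega) (by omega), sg_other s (t + 1) _ (by omega) (by omega),
      sg_other t s _ (by omega) (by omega), sg_other t (s + 1) _ (by omega) (by omega)]
    tauto
  rw [Pi.add_apply, e1, e2, Finset.sum_congr rfl (fun s hs => Finset.sum_congr rfl (e3 s hs))]
  simp only [Finset.sum_add_distrib]
  congr 1
  simp only [Finset.sum_ite_eq]
  rw [Finset.sum_congr rfl (fun s hs => if_pos hs), ← Finset.sum_mul]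
  by_cases hS : S ∈ Om r k
  · rw [diag_sum r k S hS]; rfl
  · simp [hf S hS]

end KQ

namespace KQ

/-- complement followed by reflection -/
def tau (r : ℕ) (S : Finset ℕ) : Finset ℕ := (Finset.range (r + r)).filter (fun j => r + r - 1 - j ∉ S)

lemma mem_tau (r j : ℕ) (S : Finset ℕ) (hj : j < r + r) : j ∈ tau r S ↔ r + r - 1 - j ∉ S := by
  simp [tau, hj]

lemma tau_tau (r : ℕ) (S : Finset ℕ) (hS : ∀ j ∈ S, j < r + r) : tau r (tau r S) = S := by
  ext j
  by_cases hj : j < r + r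
  · rw [mem_tau _ _ _ hj, mem_tau _ _ _ (by omega), not_not]
    rw [show r + r - 1 - (r + r - 1 - j) = j by omega]
  · constructor
    · intro h; simp [tau] at h; omega
    · intro h; exact absurd (hS j h) hj

lemma tau_eq_sdiff_image (r : ℕ) (S : Finset ℕ) :
    ∑ _j ∈ tau r S, (1 : ℤ) = ∑ j ∈ Finset.range (r + r), (if j ∈ S then (0 : ℤ) else 1) ∧
    ∑ j ∈ tau r S, (j : ℤ) = ∑ j ∈ Finset.range (r + r), (if j ∈ S then (0 : ℤ) else (r + r - 1 - j : ℤ)) := by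
  constructor
  · rw [tau, Finset.sum_filter, ← Finset.sum_range_reflect]
    apply Finset.sum_congr rfl
    intro j hj
    have := Finset.mem_range.1 hj
    rw [show r + r - 1 - (r + r - 1 - j) = j by omega]
    by_cases h : j ∈ S <;> simp [h]
  · rw [tau, Finset.sum_filter, ← Finset.sum_range_reflect]
    apply Finset.sum_congr rfl
    intro j hj
    have := Finset.mem_range.1 hj
    rw [show r + r - 1 - (r + r - 1 - j) = j by omega]
    by_cases h : j ∈ S
    · simp [h]
    · simp only [h, not_false_eq_true, if_true, if_false]; omega

lemma tau_mem (r k : ℕ) (S : Finset ℕ) (hS : S ∈ Om r k) : tau r S ∈ Om r k := by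
  obtain ⟨⟨h1, h2⟩, h3⟩ := (mem_Om _ _ _).1 hS
  obtain ⟨e1, e2⟩ := tau_eq_sdiff_image r S
  have a4 : (Finset.range (r + r)).filter (fun s => s ∈ S) = S := by
    ext j; simp only [Finset.mem_filter, Finset.mem_range]
    exact ⟨fun h => h.2, fun h => ⟨h1 j h, h⟩⟩
  have b1 : ∀ g : ℕ → ℤ, ∑ j ∈ Finset.range (r + r), (if j ∈ S then (0 : ℤ) else g j) =
      ∑ j ∈ Finset.range (r + r), g j - ∑ j ∈ S, g j := by
    intro g
    conv_rhs => rw [← a4]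
    rw [Finset.sum_filter, ← Finset.sum_sub_distrib]
    apply Finset.sum_congr rfl
    intro j _
    split_ifs <;> simp
  rw [b1 (fun _ => 1)] at e1
  rw [b1 (fun j => (r + r - 1 - j : ℤ))] at e2
  rw [mem_Om]
  refine ⟨⟨?_, ?_⟩, ?_⟩
  · intro j hj; simp [tau] at hj; exact hj.1
  · simp at e1; omega
  · simp only [Finset.sum_sub_distrib] at e2
    have a6 := Finset.sum_range_id_mul_two (r + r)
    have a7 : (∑ i ∈ Finset.range (r + r), (i : ℤ)) * 2 = (r + r) * (r + r - 1) := by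
      rcases Nat.eq_zero_or_pos r with hr | hr
      · subst hr; simp
      have : ((r + r - 1 : ℕ) : ℤ) = r + r - 1 := by omega
      have a6' := congrArg (Nat.cast : ℕ → ℤ) a6
      push_cast [this] at a6'
      exact a6'
    simp only [Finset.sum_const, Finset.card_range, h2] at e2
    have : (∑ j ∈ tau r S, (j : ℤ)) = ∑ j ∈ S, (j : ℤ) := by
      rw [e2]; simp only [nsmul_eq_mul]; push_cast; nlinarith
    rw [← h3]
    apply Nat.cast_injective (R := ℤ)
    push_cast
    exact this

lemma range_le_sum (S : Finset ℕ) : ∑ i ∈ Finset.range S.card, i ≤ ∑ i ∈ S, i := by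
  induction S using Finset.induction_on_max with
  | empty => simp
  | insert a s h ih =>
    have ha : a ∉ s := fun h' => lt_irrefl _ (h a h')
    rw [Finset.card_insert_of_notMem ha, Finset.sum_insert ha, Finset.sum_range_succ]
    have : s.card ≤ a := by
      have := Finset.card_le_card (fun x hx => Finset.mem_range.2 (h x hx) : s ⊆ Finset.range a)
      simpa using this
    omega

lemma tau_sg (r s : ℕ) (S : Finset ℕ) (hs : s < r + r - 1) :
    sg (r + r - 1 - 1 - s) (tau r S) = tau r (sg s S) := by
  ext j
  by_cases a1 : j = r + r - 1 - 1 - s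
  · subst a1
    rw [sg_left, mem_tau _ _ _ (by omega), mem_tau _ _ _ (by omega)]
    rw [show r + r - 1 - (r + r - 1 - 1 - s + 1) = s by omega,
      show r + r - 1 - (r + r - 1 - 1 - s) = s + 1 by omega, sg_right]
  by_cases a2 : j = r + r - 1 - 1 - s + 1
  · subst a2
    rw [sg_right, mem_tau _ _ _ (by omega), mem_tau _ _ _ (by omega)]
    rw [show r + r - 1 - (r + r - 1 - 1 - s + 1) = s by omega,
      show r + r - 1 - (r + r - 1 - 1 - s) = s + 1 by omega, sg_left]
  rw [sg_other _ _ _ a1 a2]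
  by_cases hj : j < r + r
  · rw [mem_tau _ _ _ hj, mem_tau _ _ _ hj, sg_other _ _ _ (by omega) (by omega)]
  · simp [tau, hj]

def QB (r k : ℕ) : Submodule ℚ (Finset ℕ → ℚ) where
  carrier := {f | (∀ S, S ∉ Om r k → f S = 0) ∧ ∀ S ∈ Om r k, f (tau r S) = - f S}
  add_mem' := by
    rintro f g ⟨h1, h2⟩ ⟨h3, h4⟩
    refine ⟨fun S hS => ?_, fun S hS => ?_⟩
    · simp [h1 S hS, h3 S hS]
    · simp [h2 S hS, h4 S hS, add_comm]
  zero_mem' := by simp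
  smul_mem' := by
    rintro c f ⟨h1, h2⟩
    refine ⟨fun S hS => ?_, fun S hS => ?_⟩
    · simp [h1 S hS]
    · simp [h2 S hS]

lemma mem_QB (r k : ℕ) (f : Finset ℕ → ℚ) : f ∈ QB r k ↔
    (∀ S, S ∉ Om r k → f S = 0) ∧ ∀ S ∈ Om r k, f (tau r S) = - f S := Iff.rfl

lemma XB_mem (r k : ℕ) (f : Finset ℕ → ℚ) (hf : f ∈ QB r (k + 1)) : XB r f ∈ QB r k := by
  obtain ⟨h1, h2⟩ := (mem_QB _ _ _).1 hf
  refine (mem_QB _ _ _).2 ⟨fun S hS => ?_, fun S hS => ?_⟩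
  · rw [XB_apply]
    apply Finset.sum_eq_zero
    intro s hs
    split_ifs with h
    · exact h1 _ (fun h' => hS ((sg_mem_Om r k s S (Finset.mem_range.1 hs) h.1 h.2).1 h'))
    · rfl
  · rw [XB_apply, XB_apply, ← Finset.sum_range_reflect, ← Finset.sum_neg_distrib]
    apply Finset.sum_congr rfl
    intro s hs
    have hs' := Finset.mem_range.1 hs
    rw [tau_sg r s S hs']
    have : (r + r - 1 - 1 - s ∈ tau r S ∧ r + r - 1 - 1 - s + 1 ∉ tau r S) ↔ (s ∈ S ∧ s + 1 ∉ S) := by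
      rw [mem_tau _ _ _ (by omega), mem_tau _ _ _ (by omega)]
      rw [show r + r - 1 - (r + r - 1 - 1 - s + 1) = s by omega,
        show r + r - 1 - (r + r - 1 - 1 - s) = s + 1 by omega]
      tauto
    simp only [this]
    split_ifs with h
    · exact h2 _ ((sg_mem_Om r k s S hs' h.1 h.2).2 hS)
    · simp

lemma YB_mem (r k : ℕ) (f : Finset ℕ → ℚ) (hf : f ∈ QB r k) : YB r f ∈ QB r (k + 1) := by
  obtain ⟨h1, h2⟩ := (mem_QB _ _ _).1 hf
  refine (mem_QB _ _ _).2 ⟨fun S hS => ?_, fun S hS => ?_⟩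
  · rw [YB_apply]
    apply Finset.sum_eq_zero
    intro s hs
    split_ifs with h
    · rw [h1 _ (fun h' => hS ((sg_mem_Om' r k s S (Finset.mem_range.1 hs) h.1 h.2).1 h')), mul_zero]
    · rfl
  · rw [YB_apply, YB_apply, ← Finset.sum_range_reflect, ← Finset.sum_neg_distrib]
    apply Finset.sum_congr rfl
    intro s hs
    have hs' := Finset.mem_range.1 hs
    rw [tau_sg r s S hs']
    have : (r + r - 1 - 1 - s ∉ tau r S ∧ r + r - 1 - 1 - s + 1 ∈ tau r S) ↔ (s ∉ S ∧ s + 1 ∈ S) := by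
      rw [mem_tau _ _ _ (by omega), mem_tau _ _ _ (by omega)]
      rw [show r + r - 1 - (r + r - 1 - 1 - s + 1) = s by omega,
        show r + r - 1 - (r + r - 1 - 1 - s) = s + 1 by omega]
      tauto
    simp only [this]
    split_ifs with h
    · rw [h2 _ ((sg_mem_Om' r k s S hs' h.1 h.2).2 hS)]
      have : ww r (r + r - 1 - 1 - s + 1) = ww r (s + 1) := by
        have h5 : ((r + r - 1 - 1 - s + 1 : ℕ) : ℚ) = r + r - (s + 1) := by
          rw [show r + r - 1 - 1 - s + 1 = r + r - (s + 1) by omega, Nat.cast_sub (by omega)]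
          push_cast; ring
        simp only [ww]
        rw [h5]; push_cast; ring
      rw [this]; ring
    · simp

lemma XB_zero (r : ℕ) (f : Finset ℕ → ℚ) (hf : f ∈ QB r 0) : XB r f = 0 := by
  obtain ⟨h1, h2⟩ := (mem_QB _ _ _).1 hf
  ext S
  rw [XB_apply]
  apply Finset.sum_eq_zero
  intro s hs
  split_ifs with h
  · apply h1
    intro h'
    obtain ⟨⟨a1, a2⟩, a3⟩ := (mem_Om _ _ _).1 h'
    rw [sum_sg s S h.1 h.2] at a3
    rw [card_sg] at a2
    have : ∑ i ∈ Finset.range r, i ≤ ∑ i ∈ S, i := by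
      rw [← a2]; exact range_le_sum _
    omega
  · rfl

lemma XB_surj (r j : ℕ) (hj : 2 * j < r * r) (v : Finset ℕ → ℚ) (hv : v ∈ QB r j) :
    ∃ u ∈ QB r (j + 1), XB r u = v :=
  sl2_surj (XB r) (YB r) (QB r) (r * r) (XB_zero r) (XB_mem r) (YB_mem r)
    (fun k f hf => comm_B r k f hf.1) j hj v hv

/-- dimension of the space of antisymmetric functions -/
lemma finrank_QB (r k : ℕ) : Module.Finite ℚ (QB r k) ∧ 2 * Module.finrank ℚ (QB r k) +
    ((Om r k).filter (fun S => tau r S = S)).card = (Om r k).card := by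
  let e : Finset ℕ → ℕ := Encodable.encode
  have he : Function.Injective e := Encodable.encode_injective
  have htt : ∀ S ∈ Om r k, tau r (tau r S) = S := fun S hS => tau_tau r S ((mem_Om _ _ _).1 hS).1.1
  let W := (Om r k).filter (fun S => e S < e (tau r S))
  let φ : QB r k →ₗ[ℚ] (W → ℚ) :=
    { toFun := fun f S => f.1 S.1
      map_add' := fun f g => rfl
      map_smul' := fun c f => rfl }
  have hinj : Function.Injective φ := by
    rw [injective_iff_map_eq_zero]
    rintro ⟨f, hf⟩ h
    obtain ⟨h1, h2⟩ := (mem_QB _ _ _).1 hf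
    have hW : ∀ S ∈ W, f S = 0 := fun S hS => congrFun h ⟨S, hS⟩
    apply Subtype.ext
    funext S
    change f S = 0
    by_cases hS : S ∈ Om r k
    · rcases lt_trichotomy (e S) (e (tau r S)) with h3 | h3 | h3
      · exact hW S (Finset.mem_filter.2 ⟨hS, h3⟩)
      · have h4 := h2 S hS
        rw [← he h3] at h4
        linarith
      · have h4 := h2 S hS
        rw [hW (tau r S) (Finset.mem_filter.2 ⟨tau_mem r k S hS, by rw [htt S hS]; exact h3⟩)] at h4
        linarith
    · exact h1 S hS
  have hsurj : Function.Surjective φ := by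
    intro g
    let f : Finset ℕ → ℚ := fun S => if h : S ∈ W then g ⟨S, h⟩ else
      if h : tau r S ∈ W ∧ S ∈ Om r k then - g ⟨tau r S, h.1⟩ else 0
    have hf : f ∈ QB r k := by
      refine (mem_QB _ _ _).2 ⟨fun S hS => ?_, fun S hS => ?_⟩
      · have : S ∉ W := fun h => hS (Finset.mem_filter.1 h).1
        simp [f, this, hS]
      · have hτ := tau_mem r k S hS
        rcases lt_trichotomy (e S) (e (tau r S)) with h3 | h3 | h3
        · have a1 : S ∈ W := Finset.mem_filter.2 ⟨hS, h3⟩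
          have a2 : tau r S ∉ W := by
            intro h
            have := (Finset.mem_filter.1 h).2
            rw [htt S hS] at this
            omega
          simp only [f, a1, a2, htt S hS, hτ, dif_pos, dif_neg, not_false_eq_true, and_self]
        · have a1 : S ∉ W := by
            intro h
            have := (Finset.mem_filter.1 h).2
            omega
          rw [← he h3]
          simp [f, a1, ← he h3]
        · have a1 : S ∉ W := by
            intro h
            have := (Finset.mem_filter.1 h).2
            omega
          have a2 : tau r S ∈ W := Finset.mem_filter.2 ⟨hτ, by rw [htt S hS]; exact h3⟩
          simp only [f, a1, a2, hS, dif_pos, dif_neg, not_false_eq_true, and_self, neg_neg]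
    refine ⟨⟨f, hf⟩, ?_⟩
    funext S
    change f S.1 = g S
    simp [f, S.2]
  let E := LinearEquiv.ofBijective φ ⟨hinj, hsurj⟩
  refine ⟨Module.Finite.equiv E.symm, ?_⟩
  rw [LinearEquiv.finrank_eq E, Module.finrank_fintype_fun_eq_card, Fintype.card_coe]
  have hW' : W.card = ((Om r k).filter (fun S => e (tau r S) < e S)).card := by
    apply Finset.card_nbij' (tau r) (tau r)
    · intro S hS
      have := Finset.mem_filter.1 (Finset.mem_coe.1 hS)
      apply Finset.mem_coe.2
      exact Finset.mem_filter.2 ⟨tau_mem r k S this.1, by rw [htt S this.1]; exact this.2⟩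
    · intro S hS
      have := Finset.mem_filter.1 (Finset.mem_coe.1 hS)
      apply Finset.mem_coe.2
      exact Finset.mem_filter.2 ⟨tau_mem r k S this.1, by rw [htt S this.1]; exact this.2⟩
    · intro S hS
      exact htt S (Finset.mem_filter.1 (Finset.mem_coe.1 hS)).1
    · intro S hS
      exact htt S (Finset.mem_filter.1 (Finset.mem_coe.1 hS)).1
  have h5 : 2 * W.card = W.card + ((Om r k).filter (fun S => e (tau r S) < e S)).card := by omega
  rw [h5]
  simp only [W, Finset.card_filter, ← Finset.sum_add_distrib]
  rw [Finset.card_eq_sum_ones]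
  apply Finset.sum_congr rfl
  intro S _
  rcases lt_trichotomy (e S) (e (tau r S)) with h3 | h3 | h3
  · have : tau r S ≠ S := fun h => by rw [h] at h3; omega
    have h4 : ¬ e (tau r S) < e S := by omega
    simp [h3, this, h4]
  · have : tau r S = S := (he h3).symm
    simp [this]
  · have : tau r S ≠ S := fun h => by rw [h] at h3; omega
    have h4 : ¬ e S < e (tau r S) := by omega
    simp [h3, this, h4]

def bb (r k : ℕ) : ℕ := ((Om r k).filter (fun S => tau r S = S)).card

lemma bb_le_D (r k : ℕ) (h : 2 * (k + 1) ≤ r * r) : bb r (k + 1) ≤ D r r (k + 1) + bb r k := by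
  have h1 := D_succ r r k h
  have h2 : (Om r k).card = (G r r).coeff k := card_SS r r k
  have h3 : (Om r (k + 1)).card = (G r r).coeff (k + 1) := card_SS r r (k + 1)
  obtain ⟨f1, h4⟩ := finrank_QB r k
  obtain ⟨f2, h5⟩ := finrank_QB r (k + 1)
  let f : QB r (k + 1) →ₗ[ℚ] QB r k := (XB r).restrict (XB_mem r k)
  have hf : Function.Surjective f := by
    rintro ⟨v, hv⟩
    obtain ⟨u, hu, huv⟩ := XB_surj r k (by omega) v hv
    exact ⟨⟨u, hu⟩, Subtype.ext huv⟩
  have h6 : Module.finrank ℚ (QB r k) ≤ Module.finrank ℚ (QB r (k + 1)) :=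
    LinearMap.finrank_le_finrank_of_surjective hf
  unfold bb
  omega

end KQ

namespace KQ
open Polynomial

noncomputable def bP (r : ℕ) : ℕ[X] := ∏ i ∈ Finset.range r, (1 + X ^ (2 * i + 1))

lemma coeff_bP (r k : ℕ) : (bP r).coeff k =
    ((Finset.range r).powerset.filter (fun T => ∑ i ∈ T, (2 * i + 1) = k)).card := by
  rw [bP, Finset.prod_one_add, finsetSum_coeff, Finset.card_filter]
  apply Finset.sum_congr rfl
  intro T _
  rw [Finset.prod_pow_eq_pow_sum, coeff_X_pow]
  simp only [eq_comm]

lemma sum_split (r : ℕ) (S : Finset ℕ) (hS : ∀ j ∈ S, j < r + r) (g : ℕ → ℤ) :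
    ∑ j ∈ S, g j = ∑ i ∈ Finset.range r, ((if r + i ∈ S then g (r + i) else 0) +
      (if r - 1 - i ∈ S then g (r - 1 - i) else 0)) := by
  have a4 : (Finset.range (r + r)).filter (fun s => s ∈ S) = S := by
    ext j; simp only [Finset.mem_filter, Finset.mem_range]
    exact ⟨fun h => h.2, fun h => ⟨hS j h, h⟩⟩
  conv_lhs => rw [← a4]
  rw [Finset.sum_filter, Finset.sum_range_add, Finset.sum_add_distrib, add_comm]
  congr 1
  rw [← Finset.sum_range_reflect]

lemma fixed_sum (r : ℕ) (S : Finset ℕ) (hS : ∀ j ∈ S, j < r + r) (hf : tau r S = S) :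
    S.card = r ∧ ∑ j ∈ S, j = ∑ i ∈ (Finset.range r).filter (fun i => r + i ∈ S), (2 * i + 1) + ∑ i ∈ Finset.range r, i := by
  have hfix : ∀ i < r, (r - 1 - i ∈ S ↔ r + i ∉ S) := by
    intro i hi
    conv_lhs => rw [← hf]
    rw [mem_tau _ _ _ (by omega), show r + r - 1 - (r - 1 - i) = r + i by omega]
  constructor
  · have := sum_split r S hS (fun _ => 1)
    have this0 : ∑ j ∈ S, (1 : ℤ) = S.card := by simp
    rw [this.trans (Finset.sum_congr rfl (g := fun _ => 1) ?_ )] at this0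
    · simp at this0; exact_mod_cast this0.symm
    · intro i hi
      have := hfix i (Finset.mem_range.1 hi)
      by_cases h : r + i ∈ S
      · have h' : r - 1 - i ∉ S := fun h' => (this.1 h') h
        simp [h, h']
      · have h' : r - 1 - i ∈ S := this.2 h
        simp [h, h']
  · apply Nat.cast_injective (R := ℤ)
    have := sum_split r S hS (fun j => (j : ℤ))
    push_cast
    rw [this, Finset.sum_filter]
    rw [← Finset.sum_range_reflect (fun i => (i : ℤ)), ← Finset.sum_add_distrib]
    apply Finset.sum_congr rfl
    intro i hi
    have hi' := Finset.mem_range.1 hi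
    have := hfix i hi'
    by_cases h : r + i ∈ S
    · have h' : r - 1 - i ∉ S := fun h' => (this.1 h') h
      simp only [h, h', if_true, if_false]; omega
    · have h' : r - 1 - i ∈ S := this.2 h
      simp [h, h']

lemma bb_eq (r k : ℕ) : bb r k = (bP r).coeff k := by
  rw [coeff_bP, bb]
  apply Finset.card_nbij' (fun S => (Finset.range r).filter (fun i => r + i ∈ S))
    (fun T => (Finset.range (r + r)).filter (fun j => if r ≤ j then j - r ∈ T else r - 1 - j ∉ T))
  · intro S hS
    obtain ⟨h1, h2⟩ := Finset.mem_filter.1 (Finset.mem_coe.1 hS)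
    obtain ⟨⟨h3, h4⟩, h5⟩ := (mem_Om _ _ _).1 h1
    obtain ⟨-, h6⟩ := fixed_sum r S h3 h2
    apply Finset.mem_coe.2
    refine Finset.mem_filter.2 ⟨Finset.mem_powerset.2 (Finset.filter_subset _ _), ?_⟩
    change ∑ i ∈ (Finset.range r).filter (fun i => r + i ∈ S), (2 * i + 1) = k
    omega
  · intro T hT
    obtain ⟨h1, h2⟩ := Finset.mem_filter.1 (Finset.mem_coe.1 hT)
    have h1 := Finset.mem_powerset.1 h1
    apply Finset.mem_coe.2
    set S := (Finset.range (r + r)).filter (fun j => if r ≤ j then j - r ∈ T else r - 1 - j ∉ T) with hS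
    have hS1 : ∀ j ∈ S, j < r + r := by
      intro j hj; exact Finset.mem_range.1 (Finset.mem_filter.1 hj).1
    have hS2 : tau r S = S := by
      ext j
      by_cases hj : j < r + r
      · rw [mem_tau _ _ _ hj]
        simp only [hS, Finset.mem_filter, Finset.mem_range, hj, true_and, show r + r - 1 - j < r + r by omega]
        by_cases h : r ≤ j
        · have h' : ¬ r ≤ r + r - 1 - j := by omega
          simp only [h, h', if_true, if_false, not_not]
          rw [show r - 1 - (r + r - 1 - j) = j - r by omega]
        · have h' : r ≤ r + r - 1 - j := by omega
          simp only [h, h', if_true, if_false]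
          rw [show r + r - 1 - j - r = r - 1 - j by omega]
      · constructor
        · intro h; simp [tau, hj] at h
        · intro h; exact absurd (hS1 j h) hj
    obtain ⟨h3, h4⟩ := fixed_sum r S hS1 hS2
    have h5 : (Finset.range r).filter (fun i => r + i ∈ S) = T := by
      ext i
      by_cases hi : i < r
      · simp [hS, hi]
      · simp only [Finset.mem_filter, Finset.mem_range, hi, false_and, false_iff]
        intro h; exact hi (Finset.mem_range.1 (h1 h))
    rw [h5] at h4
    exact Finset.mem_filter.2 ⟨(mem_Om _ _ _).2 ⟨⟨hS1, h3⟩, by change ∑ j ∈ S, j = _; omega⟩, hS2⟩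
  · intro S hS
    obtain ⟨h1, h2⟩ := Finset.mem_filter.1 (Finset.mem_coe.1 hS)
    obtain ⟨⟨h3, h4⟩, h5⟩ := (mem_Om _ _ _).1 h1
    ext j
    by_cases hj : j < r + r
    · by_cases h : r ≤ j
      · simp only [Finset.mem_filter, Finset.mem_range, hj, h, true_and, if_true, show j - r < r by omega]
        rw [show r + (j - r) = j by omega]
      · simp only [Finset.mem_filter, Finset.mem_range, hj, h, true_and, if_false, show r - 1 - j < r by omega]
        conv_rhs => rw [← h2]
        rw [mem_tau _ _ _ hj, show r + (r - 1 - j) = r + r - 1 - j by omega]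
    · simp only [Finset.mem_filter, Finset.mem_range, hj, false_and, false_iff]
      intro h; exact hj (h3 j h)
  · intro T hT
    obtain ⟨h1, h2⟩ := Finset.mem_filter.1 (Finset.mem_coe.1 hT)
    have h1 := Finset.mem_powerset.1 h1
    ext i
    by_cases hi : i < r
    · simp [hi]
    · simp only [Finset.mem_filter, Finset.mem_range, hi, false_and, false_iff]
      intro h; exact hi (Finset.mem_range.1 (h1 h))

lemma bP_le_D (r k : ℕ) (h : 2 * (k + 1) ≤ r * r) :
    (bP r).coeff (k + 1) ≤ D r r (k + 1) + (bP r).coeff k := by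
  rw [← bb_eq, ← bb_eq]; exact bb_le_D r k h

end KQ

namespace KQ
open Polynomial

lemma eval_divX (p : ℕ[X]) (x : ℕ) : p.eval x = p.divX.eval x * x + p.coeff 0 := by
  conv_lhs => rw [← divX_mul_X_add p]
  simp

lemma eval_mod (p : ℕ[X]) (x : ℕ) (h : ∀ i, p.coeff i < x) : p.eval x % x = p.coeff 0 := by
  rw [eval_divX, Nat.add_mod, Nat.mul_mod_left, zero_add, Nat.mod_mod, Nat.mod_eq_of_lt (h 0)]

lemma eval_div (p : ℕ[X]) (x : ℕ) (h : ∀ i, p.coeff i < x) : p.eval x / x = p.divX.eval x := by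
  have := h 0
  rw [eval_divX, mul_comm, Nat.mul_add_div (by omega), Nat.div_eq_of_lt this, add_zero]

lemma digit (x k : ℕ) : ∀ (p : ℕ[X]) (_ : ∀ i, p.coeff i < x), p.eval x / x ^ k % x = p.coeff k := by
  induction k with
  | zero => intro p h; rw [pow_zero, Nat.div_one, eval_mod p x h]
  | succ k ih =>
    intro p h
    rw [pow_succ', ← Nat.div_div_eq_div_mul, eval_div p x h, ih p.divX (fun i => by rw [coeff_divX]; exact h _),
      coeff_divX]

lemma coeff_le_eval_one (p : ℕ[X]) (k : ℕ) : p.coeff k ≤ p.eval 1 := by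
  rw [eval_eq_sum_range]
  by_cases h : k ≤ p.natDegree
  · have := Finset.single_le_sum (f := fun i => p.coeff i * 1 ^ i) (fun i _ => Nat.zero_le _)
      (Finset.mem_range.2 (Nat.lt_succ_of_le h))
    simpa using this
  · rw [coeff_eq_zero_of_natDegree_lt (by omega)]; exact Nat.zero_le _

lemma G_eval_one (n : ℕ) : ∀ l m, l + m = n → (G l m).eval 1 ≤ 2 ^ n := by
  induction n with
  | zero => intro l m h; obtain rfl : l = 0 := by omega
            simp [G_zero_left]
  | succ n ih =>
    intro l m h
    rcases l with _ | l
    · simp [G_zero_left]; exact Nat.one_le_two_pow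
    rcases m with _ | m
    · simp [G_zero_right]; exact Nat.one_le_two_pow
    rw [G_succ]
    have h1 := ih (l + 1) m (by omega)
    have h2 := ih l (m + 1) (by omega)
    simp only [eval_add, eval_mul, eval_pow, eval_X, one_pow, one_mul, pow_succ]
    omega

lemma bP_eval_one (r : ℕ) : (bP r).eval 1 = 2 ^ r := by
  simp [bP, eval_prod]

/-- scan: from row `l` produce row `l+1` -/
def scan (x : ℕ) : ℕ → ℕ → List ℕ → List ℕ
  | _, _, [] => []
  | pw, acc, g :: t => (acc + pw * g) :: scan x (pw * x) (acc + pw * g) t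

def rows (x M : ℕ) : ℕ → List ℕ
  | 0 => List.replicate M 1
  | l + 1 => 1 :: scan x x 1 (rows x M l).tail

def RowOK (x l : ℕ) : ℕ → List ℕ → Prop
  | _, [] => True
  | j, g :: t => g = (G l j).eval x ∧ RowOK x l (j + 1) t

lemma scan_ok (x l : ℕ) : ∀ (L : List ℕ) (j acc : ℕ), acc = (G (l + 1) j).eval x → RowOK x l (j + 1) L →
    RowOK x (l + 1) (j + 1) (scan x (x ^ (j + 1)) acc L) := by
  intro L
  induction L with
  | nil => intro j acc _ _; simp [scan, RowOK]
  | cons g t ih =>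
    intro j acc h1 h2
    obtain ⟨h3, h4⟩ := h2
    have h5 : acc + x ^ (j + 1) * g = (G (l + 1) (j + 1)).eval x := by
      rw [G_succ, h1, h3]; simp
    refine ⟨h5, ?_⟩
    rw [← pow_succ]
    exact ih (j + 1) _ h5 h4

lemma rows_ok (x M l : ℕ) : RowOK x l 0 (rows x M l) := by
  induction l with
  | zero =>
    have : ∀ M j, RowOK x 0 j (List.replicate M 1) := by
      intro M
      induction M with
      | zero => intro j; simp [RowOK]
      | succ M ih => intro j; rw [List.replicate_succ]; exact ⟨by simp [G_zero_left], ih _⟩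
    exact this M 0
  | succ l ih =>
    rw [rows]
    refine ⟨by simp [G_zero_right], ?_⟩
    have h1 : RowOK x l 1 (rows x M l).tail := by
      rcases h : rows x M l with _ | ⟨g, t⟩
      · simp [RowOK]
      · rw [h] at ih; exact ih.2
    have := scan_ok x l (rows x M l).tail 0 1 (by simp [G_zero_right]) h1
    simpa using this

/-- strictly increasing digits -/
def chk (x : ℕ) : ℕ → ℕ → ℕ → Bool
  | 0, _, _ => true
  | f + 1, prev, n => Nat.blt prev (n % x) && chk x f (n % x) (n / x)

lemma chk_ok (x : ℕ) : ∀ (f : ℕ) (p : ℕ[X]) (prev : ℕ) (_ : ∀ i, p.coeff i < x), chk x f prev (p.eval x) = true →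
    ∀ j < f, (if j = 0 then prev else p.coeff (j - 1)) < p.coeff j := by
  intro f
  induction f with
  | zero => intro p prev _ _ j hj; omega
  | succ f ih =>
    intro p prev hp h j hj
    rw [chk, Bool.and_eq_true, eval_mod p x hp, eval_div p x hp] at h
    obtain ⟨h1, h2⟩ := h
    rcases j with _ | j
    · simpa [Nat.blt_eq] using h1
    · have := ih p.divX (p.coeff 0) (fun i => by rw [coeff_divX]; exact hp _) h2 j (by omega)
      rw [coeff_divX] at this
      rcases j with _ | j
      · simpa using this
      · simpa [coeff_divX] using this

/-- check entries `lo ≤ j` of row `l` -/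
def chkRow (x l lo : ℕ) : ℕ → List ℕ → Bool
  | _, [] => true
  | j, g :: t => (Nat.blt j lo || chk x (l * j / 2 - 1) (g / x % x) (g / x / x)) && chkRow x l lo (j + 1) t

lemma chkRow_ok (x l lo N : ℕ) (hx : 2 ^ N < x) : ∀ (L : List ℕ) (j : ℕ), RowOK x l j L → chkRow x l lo j L = true →
    ∀ i, j ≤ i → i < j + L.length → lo ≤ i → l + i ≤ N → ∀ k, 2 ≤ k → 2 * k ≤ l * i →
      (G l i).coeff (k - 1) < (G l i).coeff k := by
  intro L
  induction L with
  | nil => intro j _ _ i h1 h2; simp at h2; omega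
  | cons g t ih =>
    intro j h1 h2 i h3 h4 h5 h6 k hk hk'
    obtain ⟨h7, h8⟩ := h1
    rw [chkRow, Bool.and_eq_true, Bool.or_eq_true] at h2
    obtain ⟨h9, h10⟩ := h2
    rcases Nat.eq_or_lt_of_le h3 with h | h
    · subst h
      rcases h9 with h9 | h9
      · simp [Nat.blt_eq] at h9; omega
      have hc : ∀ i, (G l j).coeff i < x := fun i => lt_of_le_of_lt
        ((coeff_le_eval_one _ _).trans ((G_eval_one _ l j rfl).trans (Nat.pow_le_pow_right (by norm_num) h6))) hx
      have hc1 : ∀ i, (G l j).divX.coeff i < x := fun i => by rw [coeff_divX]; exact hc _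
      have hc2 : ∀ i, (G l j).divX.divX.coeff i < x := fun i => by rw [coeff_divX]; exact hc1 _
      rw [h7, eval_div _ _ hc, eval_div _ _ hc1, eval_mod _ _ hc1] at h9
      obtain ⟨k, rfl⟩ : ∃ k', k = k' + 2 := ⟨k - 2, by omega⟩
      have := chk_ok x _ _ _ hc2 h9 k (by omega)
      rcases k with _ | k
      · simpa [coeff_divX] using this
      · simpa [coeff_divX] using this
    · exact ih (j + 1) h8 h10 i h (by simp at h4; omega) h5 h6 k hk hk'

def chkAll : Bool :=
  chkRow (2 ^ 48) 5 15 0 (rows (2 ^ 48) 31 5) && chkRow (2 ^ 48) 6 15 0 (rows (2 ^ 48) 31 6) &&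
  chkRow (2 ^ 48) 7 15 0 (rows (2 ^ 48) 31 7) && chkRow (2 ^ 48) 8 8 0 (rows (2 ^ 48) 31 8) &&
  chkRow (2 ^ 48) 9 8 0 (rows (2 ^ 48) 31 9) && chkRow (2 ^ 48) 10 8 0 (rows (2 ^ 48) 31 10) &&
  chkRow (2 ^ 48) 11 8 0 (rows (2 ^ 48) 15 11) && chkRow (2 ^ 48) 12 8 0 (rows (2 ^ 48) 15 12) &&
  chkRow (2 ^ 48) 13 8 0 (rows (2 ^ 48) 15 13) && chkRow (2 ^ 48) 14 8 0 (rows (2 ^ 48) 15 14)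

set_option maxRecDepth 100000 in
lemma chkAll_true : chkAll = true := by decide +kernel

lemma rows_length (x M l : ℕ) (hM : 1 ≤ M) : (rows x M l).length = M := by
  have hs : ∀ (L : List ℕ) (a b : ℕ), (scan x a b L).length = L.length := by
    intro L
    induction L with
    | nil => intro a b; rfl
    | cons g t ih => intro a b; simp [scan, ih]
  induction l with
  | zero => simp [rows]
  | succ l ih => simp [rows, hs, ih]; omega

lemma base_strict (l m k : ℕ) (h : (5 ≤ l ∧ l ≤ 10 ∧ 15 ≤ m ∧ m ≤ 30) ∨ (8 ≤ l ∧ l ≤ 14 ∧ 8 ≤ m ∧ m ≤ 14))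
    (hk : 2 ≤ k) (hk' : 2 * k ≤ l * m) : (G l m).coeff (k - 1) < (G l m).coeff k := by
  have hc := chkAll_true
  simp only [chkAll, Bool.and_eq_true] at hc
  obtain ⟨⟨⟨⟨⟨⟨⟨⟨⟨c5, c6⟩, c7⟩, c8⟩, c9⟩, c10⟩, c11⟩, c12⟩, c13⟩, c14⟩ := hc
  have key : ∀ lo M, 1 ≤ M → chkRow (2 ^ 48) l lo 0 (rows (2 ^ 48) M l) = true → lo ≤ m → m < M → l + m ≤ 47 →
      (G l m).coeff (k - 1) < (G l m).coeff k := by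
    intro lo M hM hc h1 h2 h3
    exact chkRow_ok (2 ^ 48) l lo 47 (by norm_num) _ 0 (rows_ok _ M l) hc m (Nat.zero_le _)
      (by rw [rows_length _ _ _ hM]; omega) h1 h3 k hk hk'
  have hl : 5 ≤ l := by omega
  have hl' : l ≤ 14 := by omega
  interval_cases l
  · exact key 15 31 (by norm_num) c5 (by omega) (by omega) (by omega)
  · exact key 15 31 (by norm_num) c6 (by omega) (by omega) (by omega)
  · exact key 15 31 (by norm_num) c7 (by omega) (by omega) (by omega)
  · exact key 8 31 (by norm_num) c8 (by omega) (by omega) (by omega)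
  · exact key 8 31 (by norm_num) c9 (by omega) (by omega) (by omega)
  · exact key 8 31 (by norm_num) c10 (by omega) (by omega) (by omega)
  · exact key 8 15 (by norm_num) c11 (by omega) (by omega) (by omega)
  · exact key 8 15 (by norm_num) c12 (by omega) (by omega) (by omega)
  · exact key 8 15 (by norm_num) c13 (by omega) (by omega) (by omega)
  · exact key 8 15 (by norm_num) c14 (by omega) (by omega) (by omega)

/-- test of the two central digits -/
def testB (x r v : ℕ) : Bool :=
  Nat.ble (v % x + 1) (v / x) && Nat.ble (4 ^ r) (9 * (v / x - v % x) ^ 2 * r ^ 9)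

def chkB (B : ℕ) : ℕ → ℕ → ℕ → Bool
  | 0, _, _ => true
  | f + 1, r, N => (Nat.blt r 32 || Nat.beq (r % 2) 1 ||
        testB (2 ^ B) r (Nat.land N (2 ^ (B * (r * r / 2 + 1)) - 1) / 2 ^ (B * (r * r / 2 - 1)))) &&
      chkB B f (r + 1) (N + Nat.shiftLeft N (B * (2 * r + 1)))

lemma bP_succ (r : ℕ) : bP (r + 1) = bP r * (1 + X ^ (2 * r + 1)) := by
  rw [bP, Finset.prod_range_succ]; rfl

lemma chkB_ok (B x M : ℕ) (hB : x = 2 ^ B) (hx : 2 ^ M < x) : ∀ (f r N : ℕ), N = (bP r).eval x → chkB B f r N = true →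
    ∀ i, r ≤ i → i < r + f → i ≤ M → 32 ≤ i → i % 2 = 0 →
      (bP i).coeff (i * i / 2 - 1) < (bP i).coeff (i * i / 2) ∧
      4 ^ i ≤ 9 * ((bP i).coeff (i * i / 2) - (bP i).coeff (i * i / 2 - 1)) ^ 2 * i ^ 9 := by
  intro f
  induction f with
  | zero => intro r N _ _ i h1 h2; omega
  | succ f ih =>
    intro r N hN hc i h1 h2 h3 h4 h5
    have s1 : ∀ a b, Nat.land a (2 ^ (B * b) - 1) = a % x ^ b := by
      intro a b
      rw [hB, ← pow_mul]; exact Nat.and_two_pow_sub_one_eq_mod _ _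
    have s2 : ∀ a b, Nat.shiftLeft a (B * b) = a * x ^ b := by
      intro a b
      rw [hB, ← pow_mul]; exact Nat.shiftLeft_eq _ _
    rw [chkB, Bool.and_eq_true, Bool.or_eq_true, Bool.or_eq_true, s1, s2, pow_mul, ← hB] at hc
    obtain ⟨c1, c2⟩ := hc
    rcases Nat.eq_or_lt_of_le h1 with h | h
    · subst h
      have hcf : ∀ i, (bP r).coeff i < x := fun i => lt_of_le_of_lt
        ((coeff_le_eval_one _ _).trans ((bP_eval_one r).le.trans (Nat.pow_le_pow_right (by norm_num) h3))) hx
      rcases c1 with (c1 | c1) | c1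
      · simp [Nat.blt_eq] at c1; omega
      · simp at c1; omega
      obtain ⟨j, hj⟩ : ∃ j, r * r / 2 = j + 1 := ⟨r * r / 2 - 1, by
        have : 32 * 32 ≤ r * r := Nat.mul_le_mul h4 h4
        omega⟩
      rw [hj] at c1 ⊢
      simp only [Nat.add_sub_cancel] at c1 ⊢
      have d1 := digit x j (bP r) hcf
      have d2 := digit x (j + 1) (bP r) hcf
      have e0 : N % x ^ (j + 1 + 1) / x ^ j = N / x ^ j % (x * x) := by
        rw [show x ^ (j + 1 + 1) = x ^ j * (x * x) by ring, Nat.mod_mul_right_div_self]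
      rw [e0] at c1
      have e1 : N / x ^ j % (x * x) % x = (bP r).coeff j := by
        rw [Nat.mod_mul_right_mod, hN, d1]
      have e2 : N / x ^ j % (x * x) / x = (bP r).coeff (j + 1) := by
        rw [Nat.mod_mul_right_div_self, hN, Nat.div_div_eq_div_mul, ← pow_succ, d2]
      rw [testB, e1, e2, Bool.and_eq_true, Nat.ble_eq, Nat.ble_eq] at c1
      exact c1
    · exact ih (r + 1) _ (by rw [bP_succ, hN]; simp [mul_add]) c2 i h (by omega) h3 h4 h5

set_option maxRecDepth 100000 in
lemma chkB_true : chkB 257 257 0 1 = true := by decide +kernel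

lemma bP_small (r : ℕ) (h1 : 32 ≤ r) (h2 : r ≤ 256) (h3 : r % 2 = 0) :
    (bP r).coeff (r * r / 2 - 1) < (bP r).coeff (r * r / 2) ∧
      4 ^ r ≤ 9 * ((bP r).coeff (r * r / 2) - (bP r).coeff (r * r / 2 - 1)) ^ 2 * r ^ 9 :=
  chkB_ok 257 (2 ^ 257) 256 rfl (Nat.pow_lt_pow_right (by norm_num) (by norm_num)) 257 0 1 (by simp [bP]) chkB_true r (Nat.zero_le _) (by omega) h2 h1 h3

def evB (x : ℕ) : ℕ → ℕ
  | 0 => 1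
  | r + 1 => evB x r * (1 + x ^ (2 * r + 1))

lemma evB_eq (x r : ℕ) : evB x r = (bP r).eval x := by
  induction r with
  | zero => simp [evB, bP]
  | succ r ih => rw [evB, ih, bP_succ]; simp

lemma evB_24 : evB (2 ^ 25) 24 / (2 ^ 25) ^ 288 % 2 ^ 25 = evB (2 ^ 25) 24 / (2 ^ 25) ^ 287 % 2 ^ 25 + 50 := by
  decide +kernel

lemma bP_24 : (bP 24).coeff 288 = (bP 24).coeff 287 + 50 := by
  have hcf : ∀ i, (bP 24).coeff i < 2 ^ 25 := fun i => lt_of_le_of_lt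
        ((coeff_le_eval_one _ _).trans (bP_eval_one 24).le) (by norm_num)
  have d1 := digit (2 ^ 25) 288 (bP 24) hcf
  have d2 := digit (2 ^ 25) 287 (bP 24) hcf
  rw [← evB_eq] at d1 d2
  rw [← d1, ← d2]
  exact evB_24

end KQ

namespace KQ
open Polynomial

lemma G_coeff_zero (n : ℕ) : ∀ l m, l + m = n → (G l m).coeff 0 = 1 := by
  induction n with
  | zero => intro l m h; obtain rfl : l = 0 := by omega
            simp [G_zero_left]
  | succ n ih =>
    intro l m h
    rcases l with _ | l
    · simp [G_zero_left]
    rcases m with _ | m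
    · simp [G_zero_right]
    rw [G_succ, coeff_add, ih (l + 1) m (by omega)]
    simp

def Pos (a b : ℕ) : Prop := ∀ k, k ≠ 1 → 2 * k ≤ a * b → 1 ≤ D a b k

lemma D_zero_pos (a b : ℕ) : 1 ≤ D a b 0 := by rw [D_zero, G_coeff_zero _ a b rfl]

lemma Pos.symm {a b : ℕ} (h : Pos a b) : Pos b a := by
  intro k hk hk'
  rw [D_symm _ _ _ hk']
  exact h k hk (by rwa [mul_comm a b])

lemma Pos_base (l m : ℕ) (h : (5 ≤ l ∧ l ≤ 10 ∧ 15 ≤ m ∧ m ≤ 30) ∨ (8 ≤ l ∧ l ≤ 14 ∧ 8 ≤ m ∧ m ≤ 14)) :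
    Pos l m := by
  intro k hk hk'
  rcases k with _ | k
  · exact D_zero_pos l m
  have h1 := base_strict l m (k + 1) h (by omega) hk'
  have h2 := D_succ l m k hk'
  simp only [Nat.add_sub_cancel] at h1
  omega

lemma split_K (M1 M2 K : ℕ) (h1 : 3 ≤ M1) (h2 : 2 ≤ M2) (hK : K ≠ 1) (hK' : K ≤ M1 + M2) :
    ∃ k1 k2, k1 + k2 = K ∧ k1 ≠ 1 ∧ k2 ≠ 1 ∧ k1 ≤ M1 ∧ k2 ≤ M2 := by
  by_cases h : K ≤ M1
  · exact ⟨K, 0, by omega, by omega, by omega, by omega, by omega⟩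
  by_cases h' : K = M1 + 1
  · exact ⟨M1 - 1, 2, by omega, by omega, by omega, by omega, by omega⟩
  · exact ⟨M1, K - M1, by omega, by omega, by omega, by omega, by omega⟩

lemma Pos_add (a₁ a₂ b : ℕ) (h1 : Pos a₁ b) (h2 : Pos a₂ b) (he : a₂ % 2 = 0) (h3 : 6 ≤ a₁ * b) (h4 : 4 ≤ a₂ * b) :
    Pos (a₁ + a₂) b := by
  intro k hk hk'
  have he' : (a₂ * b) % 2 = 0 := by rw [Nat.mul_mod, he]; simp
  rw [add_mul] at hk'
  obtain ⟨k1, k2, e, n1, n2, l1, l2⟩ := split_K (a₁ * b / 2) (a₂ * b / 2) k (by omega) (by omega) hk (by omega)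
  rw [← e]
  exact (h1 k1 n1 (by omega)).trans (D_mul a₁ a₂ b k1 k2 (h2 k2 n2 (by omega)))

lemma Pos_1 (a : ℕ) (ha : 5 ≤ a) (ha' : a ≤ 10) (b : ℕ) : 15 ≤ b → Pos a b := by
  induction b using Nat.strong_induction_on with
  | _ b ih =>
    intro hb
    by_cases h : b ≤ 30
    · exact Pos_base a b (by omega)
    · have h1 := (ih (b - 16) (by omega) (by omega)).symm
      have h2 := (Pos_base a 16 (by omega)).symm
      have := Pos_add (b - 16) 16 a h1 h2 (by norm_num) (by nlinarith [Nat.sub_add_cancel (show 16 ≤ b by omega)]) (by omega)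
      rw [Nat.sub_add_cancel (by omega)] at this
      exact this.symm

lemma Pos_2 (b : ℕ) (hb : 15 ≤ b) (a : ℕ) : 5 ≤ a → Pos a b := by
  induction a using Nat.strong_induction_on with
  | _ a ih =>
    intro ha
    by_cases h : a ≤ 10
    · exact Pos_1 a ha h b hb
    · have h1 := ih (a - 6) (by omega) (by omega)
      have h2 := Pos_1 6 (by omega) (by omega) b hb
      have := Pos_add (a - 6) 6 b h1 h2 (by norm_num) (by nlinarith [Nat.sub_add_cancel (show 6 ≤ a by omega)]) (by omega)
      rwa [Nat.sub_add_cancel (by omega)] at this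

lemma Pos_3 (a b : ℕ) (ha : 8 ≤ a) (hb : 8 ≤ b) : Pos a b := by
  by_cases h : 15 ≤ b
  · exact Pos_2 b h a (by omega)
  by_cases h' : 15 ≤ a
  · exact (Pos_2 a h' b (by omega)).symm
  exact Pos_base a b (by omega)

lemma D_big (r l m k : ℕ) (hr : 15 ≤ r) (he : r % 2 = 0) (hl : r + 5 ≤ l) (hm : l ≤ m)
    (hk : r * r / 2 + 2 ≤ k) (hk' : 2 * k ≤ l * m) : D r r (r * r / 2) ≤ D l m k := by
  obtain ⟨u, rfl⟩ : ∃ u, l = r + u := ⟨l - r, by omega⟩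
  obtain ⟨v, rfl⟩ : ∃ v, m = r + v := ⟨m - r, by omega⟩
  have e1 : (r * r) % 2 = 0 := by rw [Nat.mul_mod, he]
  have e2 : (v * r) % 2 = 0 := by rw [Nat.mul_mod, he]; simp
  have e3 : (r + u) * (r + v) = r * r + v * r + u * (r + v) := by ring
  have b1 : 5 * 15 ≤ v * r := Nat.mul_le_mul (by omega) hr
  have b2 : 5 * 15 ≤ u * (r + v) := Nat.mul_le_mul (by omega) (by omega)
  rw [e3] at hk'
  obtain ⟨k1, k2, e, n1, n2, l1, l2⟩ := split_K (v * r / 2) (u * (r + v) / 2) (k - r * r / 2) (by omega) (by omega)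
    (by omega) (by omega)
  have c1 := D_mul r v r (r * r / 2) k1 ((Pos_2 r hr v (by omega)).symm.symm k1 n1 (by omega))
  rw [D_symm (r + v) r (r * r / 2 + k1) (by rw [add_mul]; omega)] at c1
  have c2 := D_mul r u (r + v) (r * r / 2 + k1) k2 (Pos_2 (r + v) (by omega) u (by omega) k2 n2 (by omega))
  rw [show r * r / 2 + k1 + k2 = k by omega] at c2
  exact c1.trans c2

/-- central difference -/
noncomputable def cc (r : ℕ) : ℤ := ((bP r).coeff (r * r / 2) : ℤ) - (bP r).coeff (r * r / 2 - 1)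

lemma cc_le_D (r : ℕ) (hr : 2 ≤ r) : cc r ≤ D r r (r * r / 2) := by
  have : 2 * 2 ≤ r * r := Nat.mul_le_mul hr hr
  obtain ⟨j, hj⟩ : ∃ j, r * r / 2 = j + 1 := ⟨r * r / 2 - 1, by omega⟩
  have := bP_le_D r j (by omega)
  rw [cc, hj, Nat.add_sub_cancel]
  omega

lemma rect_D (l m k : ℕ) (hk : 2 ≤ k) (h : 2 * k ≤ l * m) :
    (rectPartitions k l m : ℝ) - (rectPartitions (k - 1) l m : ℝ) = D l m k := by
  obtain ⟨k, rfl⟩ : ∃ k', k = k' + 1 := ⟨k - 1, by omega⟩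
  rw [rect_eq, rect_eq, Nat.add_sub_cancel, ← D_succ l m k h]
  push_cast; ring

end KQ

namespace KQ
open Polynomial

noncomputable def Ph (r : ℕ) (θ : ℝ) : ℝ := ∏ j ∈ Finset.range r, Real.cos ((2 * j + 1) * θ / 2)

lemma Ph_cont (r : ℕ) : Continuous (Ph r) := by
  unfold Ph
  fun_prop

noncomputable def bZ (r : ℕ) (z : ℤ) : ℤ := if 0 ≤ z then ((bP r).coeff z.toNat : ℤ) else 0

lemma bZ_succ (r : ℕ) (z : ℤ) : bZ (r + 1) z = bZ r z + bZ r (z - (2 * r + 1)) := by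
  unfold bZ
  by_cases h : 0 ≤ z
  · obtain ⟨n, rfl⟩ := Int.eq_ofNat_of_zero_le h
    rw [if_pos h, if_pos h, bP_succ, mul_add, mul_one, coeff_add, coeff_mul_X_pow', Int.toNat_natCast]
    by_cases h' : 2 * r + 1 ≤ n
    · rw [if_pos h', if_pos (by omega)]
      have : ((n : ℤ) - (2 * r + 1)).toNat = n - (2 * r + 1) := by omega
      rw [this]; simp
    · rw [if_neg h', if_neg (by omega)]; simp
  · rw [if_neg h, if_neg h, if_neg (by omega)]; simp

lemma int_cos (z : ℤ) : ∫ θ in (0 : ℝ)..Real.pi, Real.cos ((z : ℝ) * θ) = if z = 0 then Real.pi else 0 := by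
  by_cases h : z = 0
  · subst h; simp
  · rw [if_neg h]
    have h' : (z : ℝ) ≠ 0 := by exact_mod_cast h
    rw [intervalIntegral.integral_comp_mul_left _ h', integral_cos, Real.sin_int_mul_pi]
    simp

lemma fourier (r : ℕ) : ∀ z : ℤ, ∫ θ in (0 : ℝ)..Real.pi, 2 ^ r * Ph r θ * Real.cos (((z : ℝ) - (r : ℝ) ^ 2 / 2) * θ)
    = Real.pi * bZ r z := by
  induction r with
  | zero =>
    intro z
    simp only [Ph, Finset.range_zero, Finset.prod_empty, pow_zero, one_mul, Nat.cast_zero]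
    have := int_cos z
    simp only [ne_eq, OfNat.ofNat_ne_zero, not_false_eq_true, zero_pow, zero_div, sub_zero]
    rw [this]
    unfold bZ bP
    by_cases h : z = 0
    · subst h; simp
    · by_cases h' : 0 ≤ z
      · have h2 : z.toNat ≠ 0 := by omega
        simp [h, h', coeff_one, h2]
      · simp [h, h']
  | succ r ih =>
    intro z
    rw [bZ_succ]
    have e : ∀ θ : ℝ, 2 ^ (r + 1) * Ph (r + 1) θ * Real.cos (((z : ℝ) - ((r + 1 : ℕ) : ℝ) ^ 2 / 2) * θ) =
        2 ^ r * Ph r θ * Real.cos (((z : ℝ) - (r : ℝ) ^ 2 / 2) * θ) +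
        2 ^ r * Ph r θ * Real.cos ((((z - (2 * r + 1) : ℤ) : ℝ) - (r : ℝ) ^ 2 / 2) * θ) := by
      intro θ
      have hP : Ph (r + 1) θ = Ph r θ * Real.cos ((2 * r + 1) * θ / 2) := by
        rw [Ph, Finset.prod_range_succ]; rfl
      have h1 : ((z : ℝ) - (r : ℝ) ^ 2 / 2) * θ = ((z : ℝ) - ((r + 1 : ℕ) : ℝ) ^ 2 / 2) * θ + (2 * r + 1) * θ / 2 := by
        push_cast; ring
      have h2 : (((z - (2 * r + 1) : ℤ) : ℝ) - (r : ℝ) ^ 2 / 2) * θ =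
          ((z : ℝ) - ((r + 1 : ℕ) : ℝ) ^ 2 / 2) * θ - (2 * r + 1) * θ / 2 := by
        push_cast; ring
      rw [h1, h2, Real.cos_add, Real.cos_sub, hP, pow_succ]
      ring
    have hc := Ph_cont r
    simp only [e]
    rw [intervalIntegral.integral_add, ih, ih]
    · push_cast; ring
    · apply Continuous.intervalIntegrable; fun_prop
    · apply Continuous.intervalIntegrable; fun_prop

lemma cc_int (r : ℕ) (hr : 2 ≤ r) (he : r % 2 = 0) :
    Real.pi * cc r = 2 ^ r * ∫ θ in (0 : ℝ)..Real.pi, Ph r θ * (1 - Real.cos θ) := by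
  have e1 : (r * r) % 2 = 0 := by rw [Nat.mul_mod, he]
  have h4 : 2 * 2 ≤ r * r := Nat.mul_le_mul hr hr
  have hh : (r : ℝ) ^ 2 / 2 = ((r * r / 2 : ℕ) : ℝ) := by
    have : 2 * (r * r / 2) = r * r := by omega
    have : 2 * ((r * r / 2 : ℕ) : ℝ) = (r : ℝ) * r := by exact_mod_cast this
    rw [pow_two]; linarith
  have f1 := fourier r ((r * r / 2 : ℕ) : ℤ)
  have f2 := fourier r ((r * r / 2 - 1 : ℕ) : ℤ)
  have b1 : bZ r ((r * r / 2 : ℕ) : ℤ) = (bP r).coeff (r * r / 2) := by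
    rw [bZ, if_pos (Int.natCast_nonneg _), Int.toNat_natCast]
  have b2 : bZ r ((r * r / 2 - 1 : ℕ) : ℤ) = (bP r).coeff (r * r / 2 - 1) := by
    rw [bZ, if_pos (by omega), Int.toNat_natCast]
  have c2 : (((r * r / 2 - 1 : ℕ) : ℤ) : ℝ) - (r : ℝ) ^ 2 / 2 = -1 := by
    rw [hh, Int.cast_natCast, Nat.cast_sub (by omega)]; push_cast; ring
  have c1 : (((r * r / 2 : ℕ) : ℤ) : ℝ) - (r : ℝ) ^ 2 / 2 = 0 := by
    rw [hh, Int.cast_natCast]; ring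
  rw [b1, c1] at f1
  rw [b2, c2] at f2
  have hc := Ph_cont r
  have : Real.pi * cc r = Real.pi * (((bP r).coeff (r * r / 2) : ℤ) : ℝ) - Real.pi * (((bP r).coeff (r * r / 2 - 1) : ℤ) : ℝ) := by
    rw [cc]; push_cast; ring
  rw [this, ← f1, ← f2, ← intervalIntegral.integral_sub, ← intervalIntegral.integral_const_mul]
  · congr 1
    funext θ
    simp
    ring
  · apply Continuous.intervalIntegrable; fun_prop
  · apply Continuous.intervalIntegrable; fun_prop

lemma sum_sin (r : ℕ) (θ : ℝ) : 4 * Real.sin θ * ∑ j ∈ Finset.range r, Real.sin ((2 * j + 1) * θ / 2) ^ 2 =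
    2 * r * Real.sin θ - Real.sin (2 * r * θ) := by
  induction r with
  | zero => simp
  | succ r ih =>
    rw [Finset.sum_range_succ, mul_add, ih]
    have h1 : Real.sin ((2 * r + 1) * θ / 2) ^ 2 = 1 / 2 - Real.cos (2 * ((2 * r + 1) * θ / 2)) / 2 := by
      rw [Real.cos_two_mul, Real.cos_sq']; ring
    have h2 : 2 * ((2 * (r : ℝ) + 1) * θ / 2) = 2 * r * θ + θ := by ring
    have h3 : Real.sin (2 * ((r + 1 : ℕ) : ℝ) * θ) = Real.sin (2 * r * θ + θ + θ) := by
      congr 1; push_cast; ring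
    have h4 : Real.sin (2 * r * θ) = Real.sin (2 * r * θ + θ - θ) := by congr 1; ring
    rw [h1, h2, h3, h4, Real.sin_add (2 * r * θ + θ), Real.sin_sub (2 * r * θ + θ)]
    push_cast; ring

lemma Ph_tail (r : ℕ) (hr : 1 ≤ r) (θ : ℝ) (h1 : Real.pi / (2 * r) ≤ θ) (h2 : θ ≤ Real.pi) :
    |Ph r θ| ≤ Real.exp (-(r : ℝ) / 8) := by
  have hr' : (1 : ℝ) ≤ r := by exact_mod_cast hr
  have hpi := Real.pi_pos
  have hT : 0 < Real.pi / (2 * r) := by positivity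
  rcases eq_or_lt_of_le h2 with h2 | h2
  · have : Ph r θ = 0 := by
      rw [Ph]
      apply Finset.prod_eq_zero (Finset.mem_range.2 hr)
      rw [h2]; simp
    rw [this, abs_zero]; positivity
  have hs : 0 < Real.sin θ := Real.sin_pos_of_pos_of_lt_pi (by linarith) h2
  have hrT : 2 * r * (Real.pi / (2 * r)) = Real.pi := by field_simp
  have key : Real.sin (2 * r * θ) ≤ r * Real.sin θ := by
    by_cases h3 : θ ≤ Real.pi - Real.pi / (2 * r)
    · have h4 : 1 / r ≤ Real.sin θ := by
        have e : 2 / Real.pi * (Real.pi / (2 * r)) = 1 / r := by field_simp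
        by_cases h5 : θ ≤ Real.pi / 2
        · have := Real.mul_le_sin (by linarith : 0 ≤ θ) h5
          rw [← e]
          exact (mul_le_mul_of_nonneg_left h1 (by positivity)).trans this
        · have := Real.mul_le_sin (by linarith : 0 ≤ Real.pi - θ) (by linarith)
          rw [Real.sin_pi_sub] at this
          rw [← e]
          exact (mul_le_mul_of_nonneg_left (by linarith) (by positivity)).trans this
      have h6 : 1 ≤ r * Real.sin θ := by
        rw [div_le_iff₀ (by linarith)] at h4; linarith
      exact (Real.sin_le_one _).trans h6
    · have e : Real.sin (2 * r * θ) = - Real.sin (2 * r * (Real.pi - θ)) := by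
        have : 2 * r * θ = -(2 * r * (Real.pi - θ)) + (r : ℕ) * (2 * Real.pi) := by ring
        rw [this, Real.sin_add_nat_mul_two_pi, Real.sin_neg]
      have : 0 ≤ Real.sin (2 * r * (Real.pi - θ)) := by
        apply Real.sin_nonneg_of_nonneg_of_le_pi
        · have : 0 ≤ Real.pi - θ := by linarith
          positivity
        · rw [← hrT]
          apply mul_le_mul_of_nonneg_left _ (by positivity)
          linarith
      rw [e]
      have : 0 ≤ r * Real.sin θ := by positivity
      linarith
  have hS : (r : ℝ) / 4 ≤ ∑ j ∈ Finset.range r, Real.sin ((2 * j + 1) * θ / 2) ^ 2 := by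
    have := sum_sin r θ
    by_contra hcon
    push Not at hcon
    have : 4 * Real.sin θ * ∑ j ∈ Finset.range r, Real.sin ((2 * j + 1) * θ / 2) ^ 2 < 4 * Real.sin θ * (r / 4) :=
      mul_lt_mul_of_pos_left hcon (by positivity)
    linarith
  have hsq : Ph r θ ^ 2 ≤ Real.exp (-(r : ℝ) / 8) ^ 2 := by
    rw [Ph, ← Finset.prod_pow, ← Real.exp_nat_mul]
    calc ∏ j ∈ Finset.range r, Real.cos ((2 * j + 1) * θ / 2) ^ 2
        ≤ ∏ j ∈ Finset.range r, Real.exp (- Real.sin ((2 * j + 1) * θ / 2) ^ 2) := by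
          apply Finset.prod_le_prod
          · intro j _; positivity
          · intro j _
            rw [Real.cos_sq']
            have := Real.add_one_le_exp (- Real.sin ((2 * j + 1) * θ / 2) ^ 2)
            linarith
      _ = Real.exp (- ∑ j ∈ Finset.range r, Real.sin ((2 * j + 1) * θ / 2) ^ 2) := by
          rw [← Real.exp_sum, Finset.sum_neg_distrib]
      _ ≤ _ := by
          apply Real.exp_le_exp.2
          push_cast
          linarith
  exact abs_le_of_sq_le_sq hsq (Real.exp_pos _).le

end KQ

namespace KQ

lemma Ph_nonneg (r : ℕ) (hr : 1 ≤ r) (θ : ℝ) (h0 : 0 ≤ θ) (h1 : θ ≤ Real.pi / (2 * r)) : 0 ≤ Ph r θ := by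
  unfold Ph
  apply Finset.prod_nonneg
  intro j hj
  have hj' : (j : ℝ) + 1 ≤ r := by exact_mod_cast Finset.mem_range.1 hj
  have hr' : (1 : ℝ) ≤ r := by exact_mod_cast hr
  have h2 : θ * (2 * r) ≤ Real.pi := by rwa [le_div_iff₀ (by positivity)] at h1
  have h3 : 0 ≤ θ * (r - (j + 1)) := mul_nonneg h0 (by linarith)
  have h4 : 0 ≤ (2 * (j : ℝ) + 1) * θ / 2 := by positivity
  apply Real.cos_nonneg_of_neg_pi_div_two_le_of_le
  · linarith [Real.pi_pos]
  · linarith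

lemma integrand_ge (r : ℕ) (hr : 1 ≤ r) (θ : ℝ) (h0 : 0 ≤ θ) (h1 : θ ≤ Real.pi) :
    -2 * Real.exp (-(r : ℝ) / 8) ≤ Ph r θ * (1 - Real.cos θ) := by
  have hc1 := Real.cos_le_one θ
  have hc2 := Real.neg_one_le_cos θ
  have he := Real.exp_pos (-(r : ℝ) / 8)
  by_cases h : θ ≤ Real.pi / (2 * r)
  · have := mul_nonneg (Ph_nonneg r hr θ h0 h) (by linarith : 0 ≤ 1 - Real.cos θ)
    linarith
  · have := (abs_le.1 (Ph_tail r hr θ (by linarith) h1)).1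
    nlinarith

lemma prod_one_sub (n : ℕ) (u : ℕ → ℝ) (h0 : ∀ j < n, 0 ≤ u j) (h1 : ∀ j < n, u j ≤ 1) :
    1 - ∑ j ∈ Finset.range n, u j ≤ ∏ j ∈ Finset.range n, (1 - u j) ∧
    ∏ j ∈ Finset.range n, (1 - u j) ≤ 1 := by
  induction n with
  | zero => simp
  | succ n ih =>
    obtain ⟨i1, i2⟩ := ih (fun j hj => h0 j (by omega)) (fun j hj => h1 j (by omega))
    have a := h0 n (by omega)
    have b := h1 n (by omega)
    rw [Finset.sum_range_succ, Finset.prod_range_succ]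
    have c : 0 ≤ ∏ j ∈ Finset.range n, (1 - u j) := by
      apply Finset.prod_nonneg
      intro j hj
      have := h1 j (by have := Finset.mem_range.1 hj; omega)
      linarith
    constructor <;> nlinarith

lemma sum_sq (r : ℕ) : ∑ j ∈ Finset.range r, ((2 * (j : ℝ) + 1) / 2) ^ 2 = (r : ℝ) * (4 * r ^ 2 - 1) / 12 := by
  induction r with
  | zero => simp
  | succ r ih => rw [Finset.sum_range_succ, ih]; push_cast; ring

lemma Ph_main (r : ℕ) (hr : 256 ≤ r) (θ : ℝ) (h0 : 0 ≤ θ) (h1 : (r : ℝ) ^ 3 * θ ^ 2 ≤ 11.9025) :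
    (1 - (r : ℝ) ^ 3 * θ ^ 2 / 11.9025) ^ 2 ≤ Ph r θ := by
  have hr' : (256 : ℝ) ≤ r := by exact_mod_cast hr
  have hA : (r : ℝ) ^ 2 * θ ^ 2 ≤ 0.0465 := by
    have : 0 ≤ ((r : ℝ) - 256) * (r ^ 2 * θ ^ 2) := mul_nonneg (by linarith) (by positivity)
    nlinarith
  let u : ℕ → ℝ := fun j => 0.252 * ((2 * (j : ℝ) + 1) * θ / 2) ^ 2
  have ht : ∀ j < r, ((2 * (j : ℝ) + 1) * θ / 2) ^ 2 ≤ 0.0465 := by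
    intro j hj
    have hj' : (j : ℝ) + 1 ≤ r := by exact_mod_cast hj
    have : ((2 * (j : ℝ) + 1) * θ / 2) ^ 2 ≤ (r * θ) ^ 2 := by
      apply pow_le_pow_left₀ (by positivity)
      nlinarith
    rw [mul_pow] at this
    linarith
  have hp := (prod_one_sub r u (fun j _ => by simp only [u]; positivity)
    (fun j hj => by simp only [u]; have := ht j hj; linarith)).1
  have hs : ∑ j ∈ Finset.range r, u j ≤ (r : ℝ) ^ 3 * θ ^ 2 / 11.9025 := by
    have e : ∑ j ∈ Finset.range r, u j = 0.252 * θ ^ 2 * ((r : ℝ) * (4 * r ^ 2 - 1) / 12) := by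
      rw [← sum_sq, Finset.mul_sum]
      apply Finset.sum_congr rfl
      intro j _
      simp only [u]; ring
    rw [e]
    have : 0 ≤ (r : ℝ) ^ 3 * θ ^ 2 := by positivity
    have : 0 ≤ (r : ℝ) * θ ^ 2 := by positivity
    have e2 : 0.252 * θ ^ 2 * ((r : ℝ) * (4 * r ^ 2 - 1) / 12) = 0.084 * ((r : ℝ) ^ 3 * θ ^ 2) - 0.021 * (r * θ ^ 2) := by
      ring
    rw [e2, le_div_iff₀ (by norm_num)]
    linarith
  have h2 : 0 ≤ 1 - (r : ℝ) ^ 3 * θ ^ 2 / 11.9025 := by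
    rw [sub_nonneg, div_le_one (by norm_num)]; exact h1
  calc (1 - (r : ℝ) ^ 3 * θ ^ 2 / 11.9025) ^ 2 ≤ (∏ j ∈ Finset.range r, (1 - u j)) ^ 2 := by
        apply pow_le_pow_left₀ h2; linarith
    _ = ∏ j ∈ Finset.range r, (1 - u j) ^ 2 := by rw [Finset.prod_pow]
    _ ≤ _ := by
      unfold Ph
      apply Finset.prod_le_prod
      · intro j _; positivity
      · intro j hj
        refine le_trans ?_ Real.one_sub_sq_div_two_le_cos
        have := ht j (Finset.mem_range.1 hj)
        simp only [u]
        have h3 : 0 ≤ ((2 * (j : ℝ) + 1) * θ / 2) ^ 2 := by positivity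
        set y := ((2 * (j : ℝ) + 1) * θ / 2) ^ 2
        nlinarith

lemma one_sub_cos (θ : ℝ) (h0 : 0 ≤ θ) (h1 : θ ^ 2 ≤ 0.19) : 0.49 * θ ^ 2 ≤ 1 - Real.cos θ := by
  have h2 : |θ| ≤ 1 := by rw [abs_of_nonneg h0]; nlinarith
  have := (abs_le.1 (Real.cos_bound h2)).2
  rw [abs_of_nonneg h0] at this
  nlinarith [sq_nonneg θ]

lemma int_poly (T : ℝ) (hT : 0 < T) :
    ∫ θ in (0 : ℝ)..T, (1 - θ ^ 2 / T ^ 2) ^ 2 * (0.49 * θ ^ 2) = 0.49 * (8 / 105) * T ^ 3 := by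
  have e : ∀ θ : ℝ, (1 - θ ^ 2 / T ^ 2) ^ 2 * (0.49 * θ ^ 2) =
      0.49 * θ ^ 2 + (-(0.98 / T ^ 2)) * θ ^ 4 + 0.49 / T ^ 4 * θ ^ 6 := by
    intro θ; field_simp; ring
  simp only [e]
  rw [intervalIntegral.integral_add, intervalIntegral.integral_add]
  · simp only [intervalIntegral.integral_const_mul, integral_pow]
    push_cast
    field_simp
    ring
  all_goals apply Continuous.intervalIntegrable; fun_prop

lemma exp_small (s : ℝ) (hs : 16 ≤ s) : Real.exp (-(s ^ 2) / 8) * s ^ 9 ≤ 0.07 := by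
  have h := Real.pow_div_factorial_le_exp (s ^ 2 / 8) (by positivity) 24
  have e : Real.exp (-(s ^ 2) / 8) = (Real.exp (s ^ 2 / 8))⁻¹ := by rw [← Real.exp_neg]; ring_nf
  have hE := Real.exp_pos (s ^ 2 / 8)
  rw [e, inv_mul_le_iff₀ hE]
  have h3 : (16 : ℝ) ^ 39 ≤ s ^ 39 := pow_le_pow_left₀ (by norm_num) hs 39
  have hf : ((Nat.factorial 24 : ℕ) : ℝ) = 620448401733239439360000 := by norm_num [Nat.factorial]
  rw [hf] at h
  have h4 : s ^ 9 * (620448401733239439360000 * 8 ^ 24) ≤ 0.07 * s ^ 48 := by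
    have : s ^ 48 = s ^ 9 * s ^ 39 := by ring
    rw [this]
    have h9 : 0 ≤ s ^ 9 := by positivity
    have : (620448401733239439360000 * 8 ^ 24 : ℝ) ≤ 0.07 * s ^ 39 := by
      refine le_trans ?_ (mul_le_mul_of_nonneg_left h3 (by norm_num))
      norm_num
    nlinarith
  have h5 : (s ^ 2 / 8) ^ 24 / 620448401733239439360000 = s ^ 48 / (620448401733239439360000 * 8 ^ 24) := by
    ring
  rw [h5, div_le_iff₀ (by norm_num)] at h
  have : s ^ 9 * (620448401733239439360000 * 8 ^ 24) ≤ (Real.exp (s ^ 2 / 8) * 0.07) * (620448401733239439360000 * 8 ^ 24) := by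
    linarith
  exact le_of_mul_le_mul_right this (by norm_num)

lemma cc_large (r : ℕ) (hr : 256 ≤ r) (he : r % 2 = 0) :
    (2 : ℝ) ^ r ≤ 3 * cc r * (Real.sqrt r) ^ 9 := by
  have hr' : (256 : ℝ) ≤ r := by exact_mod_cast hr
  set s := Real.sqrt r with hs
  have hs2 : s ^ 2 = r := Real.sq_sqrt (by linarith)
  have hs16 : 16 ≤ s := by
    rw [hs]; apply Real.le_sqrt_of_sq_le; norm_num; linarith
  have hs0 : 0 < s := by linarith
  set T := 3.45 / s ^ 3 with hT
  have hT0 : 0 < T := by positivity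
  have hTs : T * s ^ 3 = 3.45 := by rw [hT]; field_simp
  have hT2 : (r : ℝ) ^ 3 * T ^ 2 = 11.9025 := by
    rw [← hs2]
    have : (s ^ 2) ^ 3 * T ^ 2 = (T * s ^ 3) ^ 2 := by ring
    rw [this, hTs]; norm_num
  have hTsmall : T ≤ 0.001 := by
    rw [hT, div_le_iff₀ (by positivity)]
    have : (16 : ℝ) ^ 3 ≤ s ^ 3 := pow_le_pow_left₀ (by norm_num) hs16 3
    linarith
  have hTpi : T ≤ Real.pi := by linarith [Real.pi_gt_three]
  have hc := Ph_cont r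
  have hInteg : ∀ a b : ℝ, IntervalIntegrable (fun θ => Ph r θ * (1 - Real.cos θ)) MeasureTheory.volume a b := by
    intro a b; apply Continuous.intervalIntegrable; fun_prop
  have hI := cc_int r (by omega) he
  rw [← intervalIntegral.integral_add_adjacent_intervals (hInteg 0 T) (hInteg T Real.pi)] at hI
  have hI1 : 0.49 * (8 / 105) * T ^ 3 ≤ ∫ θ in (0 : ℝ)..T, Ph r θ * (1 - Real.cos θ) := by
    rw [← int_poly T hT0]
    apply intervalIntegral.integral_mono_on hT0.le _ (hInteg 0 T)
    · intro θ hθ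
      have hθ2 : θ ^ 2 ≤ T ^ 2 := pow_le_pow_left₀ hθ.1 hθ.2 2
      have a1 : (r : ℝ) ^ 3 * θ ^ 2 ≤ 11.9025 := by
        rw [← hT2]; exact mul_le_mul_of_nonneg_left hθ2 (by positivity)
      have a2 := Ph_main r hr θ hθ.1 a1
      have a3 : (r : ℝ) ^ 3 * θ ^ 2 / 11.9025 = θ ^ 2 / T ^ 2 := by
        rw [← hT2]; field_simp
      rw [a3] at a2
      have a4 := one_sub_cos θ hθ.1 (by nlinarith)
      exact mul_le_mul a2 a4 (by positivity) (le_trans (by positivity) a2)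
    · apply Continuous.intervalIntegrable; fun_prop
  have hI2 : -(2 * Real.pi) * Real.exp (-(r : ℝ) / 8) ≤ ∫ θ in T..Real.pi, Ph r θ * (1 - Real.cos θ) := by
    have : ∫ θ in T..Real.pi, (-2 * Real.exp (-(r : ℝ) / 8)) ≤ ∫ θ in T..Real.pi, Ph r θ * (1 - Real.cos θ) := by
      apply intervalIntegral.integral_mono_on hTpi (by simp) (hInteg _ _)
      intro θ hθ
      exact integrand_ge r (by omega) θ (by linarith [hθ.1]) hθ.2
    refine le_trans ?_ this
    rw [intervalIntegral.integral_const, smul_eq_mul]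
    have := Real.exp_pos (-(r : ℝ) / 8)
    nlinarith [mul_pos hT0 this]
  have hE := exp_small s hs16
  rw [hs2] at hE
  have hT3 : T ^ 3 * s ^ 9 = 41.063625 := by
    have : T ^ 3 * s ^ 9 = (T * s ^ 3) ^ 3 := by ring
    rw [this, hTs]; norm_num
  have h9 : 0 < s ^ 9 := by positivity
  set I1 := ∫ θ in (0 : ℝ)..T, Ph r θ * (1 - Real.cos θ)
  set I2 := ∫ θ in T..Real.pi, Ph r θ * (1 - Real.cos θ)
  have hsum : Real.pi / 3 ≤ (I1 + I2) * s ^ 9 := by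
    have b1 := mul_le_mul_of_nonneg_right hI1 h9.le
    have b2 := mul_le_mul_of_nonneg_right hI2 h9.le
    have b3 : -(2 * Real.pi) * Real.exp (-(r : ℝ) / 8) * s ^ 9 ≥ -(2 * Real.pi) * 0.07 := by
      nlinarith [Real.pi_pos]
    have := Real.pi_lt_d2
    have b4 : 0.49 * (8 / 105) * T ^ 3 * s ^ 9 = 0.49 * (8 / 105) * 41.063625 := by rw [mul_assoc, hT3]
    nlinarith
  have h2r : (0 : ℝ) < 2 ^ r := by positivity
  have fin : Real.pi * (2 : ℝ) ^ r ≤ Real.pi * (3 * cc r * s ^ 9) := by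
    have : Real.pi * (3 * cc r * s ^ 9) = 3 * (2 ^ r * ((I1 + I2) * s ^ 9)) := by
      rw [← mul_assoc (2 ^ r : ℝ), ← hI]; ring
    rw [this]
    nlinarith
  exact le_of_mul_le_mul_left fin Real.pi_pos

lemma cc_all (r : ℕ) (hr : 32 ≤ r) (he : r % 2 = 0) :
    (2 : ℝ) ^ r ≤ 3 * cc r * (Real.sqrt r) ^ 9 := by
  by_cases h : r ≤ 256
  · obtain ⟨h1, h2⟩ := bP_small r hr h he
    set c := (bP r).coeff (r * r / 2) - (bP r).coeff (r * r / 2 - 1) with hcdef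
    have hcc : cc r = (c : ℤ) := by rw [cc, hcdef]; omega
    have h3 : (4 : ℝ) ^ r ≤ 9 * (c : ℝ) ^ 2 * r ^ 9 := by exact_mod_cast h2
    have hs2 : (Real.sqrt r) ^ 2 = r := Real.sq_sqrt (by positivity)
    rw [hcc, Int.cast_natCast]
    apply le_of_sq_le_sq _ (by positivity)
    have : (3 * (c : ℝ) * (Real.sqrt r) ^ 9) ^ 2 = 9 * (c : ℝ) ^ 2 * ((Real.sqrt r) ^ 2) ^ 9 := by ring
    rw [this, hs2, ← pow_mul, mul_comm r 2, pow_mul]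
    norm_num
    exact h3
  · exact cc_large r (by omega) he

end KQ

namespace KQ

lemma A_bound : (2 : ℝ) ^ (-(9 : ℝ) / Real.sqrt 2) * (3 * Real.sqrt 3 / (Real.sqrt 2 * Real.pi ^ 2)) ≤ 0.0049 := by
  have h2 : Real.sqrt 2 ≤ 1.42 := by
    rw [Real.sqrt_le_left (by norm_num)]; norm_num
  have h2' : 1.414 ≤ Real.sqrt 2 := by
    apply Real.le_sqrt_of_sq_le; norm_num
  have h3 : Real.sqrt 3 ≤ 1.7321 := by
    rw [Real.sqrt_le_left (by norm_num)]; norm_num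
  have hs0 : 0 < Real.sqrt 2 := by linarith
  have a1 : (2 : ℝ) ^ (-(9 : ℝ) / Real.sqrt 2) ≤ 0.0128 := by
    have b1 : (2 : ℝ) ^ (-(9 : ℝ) / Real.sqrt 2) ≤ (2 : ℝ) ^ (-(63 : ℝ) / 10) := by
      apply Real.rpow_le_rpow_of_exponent_le (by norm_num)
      rw [div_le_iff₀ hs0]; linarith
    refine b1.trans ?_
    apply le_of_pow_le_pow_left₀ (by norm_num : 10 ≠ 0) (by norm_num)
    rw [← Real.rpow_natCast, ← Real.rpow_mul (by norm_num)]
    have : (-(63 : ℝ) / 10) * ((10 : ℕ) : ℝ) = ((-63 : ℤ) : ℝ) := by norm_num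
    rw [this, Real.rpow_intCast]
    norm_num
  have hpi : 9.869 ≤ Real.pi ^ 2 := by nlinarith [Real.pi_gt_d4]
  have a2 : 3 * Real.sqrt 3 / (Real.sqrt 2 * Real.pi ^ 2) ≤ 0.373 := by
    rw [div_le_iff₀ (by positivity)]
    have : 1.414 * 9.869 ≤ Real.sqrt 2 * Real.pi ^ 2 := mul_le_mul h2' hpi (by norm_num) hs0.le
    linarith
  calc _ ≤ (0.0128 : ℝ) * 0.373 := mul_le_mul a1 a2 (by positivity) (by norm_num)
    _ ≤ _ := by norm_num

lemma rhs_lt (s b : ℕ) (c V : ℝ) (hc : 0 < c) (h1 : s ≤ b ^ 2) (h2 : c ^ 4 ≤ s) (h3 : 0.0049 * 2 ^ b < V * c ^ 9) :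
    ((2 : ℝ) ^ (-(9 : ℝ) / Real.sqrt 2) * (3 * Real.sqrt 3 / (Real.sqrt 2 * Real.pi ^ 2))) *
      (2 : ℝ) ^ Real.sqrt (s : ℝ) / (s : ℝ) ^ ((9 : ℝ) / 4) < V := by
  have hs : (0 : ℝ) < s := lt_of_lt_of_le (by positivity) h2
  have d1 : c ^ 9 ≤ (s : ℝ) ^ ((9 : ℝ) / 4) := by
    have : c ^ 9 = (c ^ 4) ^ ((9 : ℝ) / 4) := by
      rw [← Real.rpow_natCast, ← Real.rpow_natCast, ← Real.rpow_mul hc.le]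
      norm_num
    rw [this]
    exact Real.rpow_le_rpow (by positivity) h2 (by norm_num)
  have d2 : (2 : ℝ) ^ Real.sqrt (s : ℝ) ≤ 2 ^ b := by
    rw [← Real.rpow_natCast]
    apply Real.rpow_le_rpow_of_exponent_le (by norm_num)
    rw [Real.sqrt_le_left (by positivity)]
    exact_mod_cast h1
  have hc9 : 0 < c ^ 9 := by positivity
  have hV : 0 < V := by
    have : 0 < V * c ^ 9 := lt_of_le_of_lt (by positivity) h3
    exact pos_of_mul_pos_left this hc9.le
  rw [div_lt_iff₀ (by positivity)]
  calc _ ≤ 0.0049 * (2 : ℝ) ^ b := mul_le_mul A_bound d2 (by positivity) (by norm_num)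
    _ < V * c ^ 9 := h3
    _ ≤ _ := mul_le_mul_of_nonneg_left d1 hV.le

lemma cc_24 : cc 24 = 50 := by
  have : 24 * 24 / 2 = 288 := by norm_num
  rw [cc, this]
  rw [show 288 - 1 = 287 from rfl, bP_24]
  push_cast; ring

lemma choose_r (l k : ℕ) (h1 : 37 ≤ l) (h2 : 1297 ≤ 2 * k) : ∃ r, 32 ≤ r ∧ r % 2 = 0 ∧ r + 5 ≤ l ∧
    r * r / 2 + 2 ≤ k ∧ min (2 * k) (l ^ 2) ≤ (r + 6) ^ 2 ∧ r ^ 2 ≤ min (2 * k) (l ^ 2) := by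
  set t := Nat.sqrt (2 * k - 4) with ht
  have t1 : t * t ≤ 2 * k - 4 := Nat.sqrt_le _
  have t2 : 2 * k - 4 < (t + 1) * (t + 1) := Nat.lt_succ_sqrt _
  have t3 : 32 ≤ t := by
    rw [ht, Nat.le_sqrt]; omega
  obtain ⟨q, hq⟩ : ∃ q, q = min (l - 5) t := ⟨_, rfl⟩
  obtain ⟨r, hr⟩ : ∃ r, r = q - q % 2 := ⟨_, rfl⟩
  have r1 : 32 ≤ r := by omega
  have r2 : r % 2 = 0 := by omega
  have r3 : r ≤ t := by omega
  have r4 : r + 5 ≤ l := by omega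
  have r5 : r * r ≤ t * t := Nat.mul_le_mul r3 r3
  refine ⟨r, r1, r2, r4, by omega, ?_, ?_⟩
  · by_cases h : l - 5 ≤ t
    · refine (min_le_right _ _).trans (Nat.pow_le_pow_left (by omega) 2)
    · refine (min_le_left _ _).trans ?_
      have : t + 5 ≤ r + 6 := by omega
      have := Nat.pow_le_pow_left this 2
      have e : (t + 5) ^ 2 = (t + 1) * (t + 1) + 8 * t + 24 := by ring
      omega
  · refine le_min ?_ (Nat.pow_le_pow_left (by omega) 2)
    rw [pow_two]; omega

lemma final (l m k : ℕ) (hl : 8 ≤ l) (hlm : l ≤ m) (hk : 2 ≤ k) (hkm : 2 * k ≤ l * m) :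
    ((2 : ℝ) ^ (-(9 : ℝ) / Real.sqrt 2) * (3 * Real.sqrt 3 / (Real.sqrt 2 * Real.pi ^ 2))) *
      (2 : ℝ) ^ Real.sqrt ((min (2 * k) (l ^ 2) : ℕ) : ℝ) / ((min (2 * k) (l ^ 2) : ℕ) : ℝ) ^ ((9 : ℝ) / 4) <
      (D l m k : ℝ) := by
  obtain ⟨s, hs⟩ : ∃ s, s = min (2 * k) (l ^ 2) := ⟨_, rfl⟩
  have hs4 : 4 ≤ s := by
    rw [hs]; refine le_min (by omega) ?_
    have := Nat.pow_le_pow_left hl 2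
    omega
  by_cases c1 : s ≤ 784
  · have hD : (1 : ℝ) ≤ D l m k := by
      exact_mod_cast Pos_3 l m hl (by omega) k (by omega) hkm
    rw [← hs]
    refine lt_of_lt_of_le ?_ hD
    by_cases e1 : s ≤ 64
    · apply rhs_lt s 8 1.4 1 (by norm_num) (by omega) _ (by norm_num)
      have : (4 : ℝ) ≤ s := by exact_mod_cast hs4
      norm_num; linarith
    by_cases e2 : s ≤ 256
    · apply rhs_lt s 16 2.8 1 (by norm_num) (by omega) _ (by norm_num)
      have : (64 : ℝ) ≤ s := by exact_mod_cast (by omega : 64 ≤ s)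
      norm_num; linarith
    by_cases e3 : s ≤ 625
    · apply rhs_lt s 25 4 1 (by norm_num) (by omega) _ (by norm_num)
      have : (256 : ℝ) ≤ s := by exact_mod_cast (by omega : 256 ≤ s)
      norm_num; linarith
    · apply rhs_lt s 28 5 1 (by norm_num) (by omega) _ (by norm_num)
      have : (625 : ℝ) ≤ s := by exact_mod_cast (by omega : 625 ≤ s)
      norm_num; linarith
  have hs1 : s ≤ 2 * k := hs ▸ min_le_left _ _
  have hs2 : s ≤ l ^ 2 := hs ▸ min_le_right _ _
  by_cases c2 : s ≤ 1296
  · have hl29 : 29 ≤ l := by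
      by_contra hcon
      have := Nat.pow_le_pow_left (by omega : l ≤ 28) 2
      omega
    have hD : (50 : ℝ) ≤ D l m k := by
      have a1 := D_big 24 l m k (by omega) (by omega) (by omega) hlm (by omega) hkm
      have a2 := cc_le_D 24 (by omega)
      rw [cc_24] at a2
      have : (50 : ℤ) ≤ D l m k := a2.trans (by exact_mod_cast a1)
      exact_mod_cast this
    rw [← hs]
    refine lt_of_lt_of_le ?_ hD
    by_cases e1 : s ≤ 1156
    · apply rhs_lt s 34 5 50 (by norm_num) (by omega) _ (by norm_num)
      have : (625 : ℝ) ≤ s := by exact_mod_cast (by omega : 625 ≤ s)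
      norm_num; linarith
    · apply rhs_lt s 36 5.8 50 (by norm_num) (by omega) _ (by norm_num)
      have : (1156 : ℝ) ≤ s := by exact_mod_cast (by omega : 1156 ≤ s)
      norm_num; linarith
  have hl37 : 37 ≤ l := by
    by_contra hcon
    have := Nat.pow_le_pow_left (by omega : l ≤ 36) 2
    omega
  obtain ⟨r, r1, r2, r3, r4, r5, r6⟩ := choose_r l k hl37 (by omega)
  have hD : (cc r : ℝ) ≤ D l m k := by
    have a1 := D_big r l m k (by omega) r2 r3 hlm r4 hkm
    have a2 := cc_le_D r (by omega)
    have : cc r ≤ D l m k := a2.trans (by exact_mod_cast a1)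
    exact_mod_cast this
  rw [← hs] at r5 r6 ⊢
  refine lt_of_lt_of_le ?_ hD
  have hr0 : (0 : ℝ) < r := by exact_mod_cast (by omega : 0 < r)
  apply rhs_lt s (r + 6) (Real.sqrt r) (cc r) (Real.sqrt_pos.2 hr0) r5
  · have : (Real.sqrt r) ^ 4 = (r : ℝ) ^ 2 := by
      rw [show (Real.sqrt r) ^ 4 = ((Real.sqrt r) ^ 2) ^ 2 by ring, Real.sq_sqrt hr0.le]
    rw [this]
    exact_mod_cast r6
  · have := cc_all r r1 r2
    have h2 : (0 : ℝ) < 2 ^ r := by positivity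
    rw [pow_add]
    nlinarith

end KQ

/-- With the explicit constant `A = 2^{−9/√2} · 3√3/(√2·π²)`, for all `m ≥ ℓ ≥ 8` and
all `2 ≤ k ≤ ℓm/2`, one has `p_k(ℓ,m) − p_{k−1}(ℓ,m) > A · 2^{√s} / s^{9/4}` where
`s = min {2k, ℓ²}`. -/
theorem kronecker_qbinomial_lower_bound_explicit :
    ∀ ℓ m k : ℕ, 8 ≤ ℓ → ℓ ≤ m → 2 ≤ k → 2 * k ≤ ℓ * m →
      ((rectPartitions k ℓ m : ℝ) - (rectPartitions (k - 1) ℓ m : ℝ)) >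
        ((2 : ℝ) ^ (-(9 : ℝ) / Real.sqrt 2) *
            (3 * Real.sqrt 3 / (Real.sqrt 2 * Real.pi ^ 2))) *
          (2 : ℝ) ^ Real.sqrt ((min (2 * k) (ℓ ^ 2) : ℕ) : ℝ) /
            ((min (2 * k) (ℓ ^ 2) : ℕ) : ℝ) ^ ((9 : ℝ) / 4) := by
  intro l m k hl hlm hk hkm
  rw [KQ.rect_D l m k hk hkm]
  exact KQ.final l m k hl hlm hk hkm
end
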